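/- arXiv:math/0701030 — 2 statements merged into one kernel-verified Lean document; each statement's English description precedes it below -/
import Mathlib

section
/- Let X be a set of regular infinite cardinality. The precomplete clones on X that contain all permutations but not all unary operations are exactly the clones Pol(G) for G ∈ {A, B, E, F} ∪ {G_λ : λ a cardinal, 1 ≤ λ ≤ |X|}, where A = {f ∈ O^(1) : |f⁻¹[{y}]| < |X| for all but fewer than |X| many y ∈ X}, B = {f ∈ O^(1) : |f⁻¹[{y}]| < |X| for all y ∈ X}, E = {f ∈ O^(1) : |X ∖ f[X]| < |X|}, F = {f ∈ O^(1) : |X ∖ f[X]| < |X| or f is constant}, and G_λ = {f ∈ O^(1) : |X ∖ f[X ∖ A]| ≥ λ for all A ⊆ X with |A| = λ}. -/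
universe u v

open Cardinal

/-- The set of all finitary operations on `X`: an `n`-th component element is an
operation of arity `n + 1` (so all arities are `≥ 1`). -/
abbrev Ops (X : Type u) : Type u := Σ n : ℕ, ((Fin (n + 1) → X) → X)

/-- A clone: contains all projections and is closed under composition. -/
def IsClone {X : Type u} (C : Set (Ops X)) : Prop :=
  (∀ (n : ℕ) (k : Fin (n + 1)), (⟨n, fun x => x k⟩ : Ops X) ∈ C) ∧
  ∀ (n m : ℕ) (f : (Fin (n + 1) → X) → X), (⟨n, f⟩ : Ops X) ∈ C →
    ∀ g : Fin (n + 1) → ((Fin (m + 1) → X) → X), (∀ i, (⟨m, g i⟩ : Ops X) ∈ C) →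
      (⟨m, fun x => f fun i => g i x⟩ : Ops X) ∈ C

/-- The clone generated by a set of operations. -/
def cloneGen {X : Type u} (F : Set (Ops X)) : Set (Ops X) :=
  ⋂₀ {C : Set (Ops X) | IsClone C ∧ F ⊆ C}

/-- A precomplete (maximal) clone. -/
def IsPrecompleteClone {X : Type u} (C : Set (Ops X)) : Prop :=
  IsClone C ∧ C ≠ Set.univ ∧ ∀ f : Ops X, f ∉ C → cloneGen (insert f C) = Set.univ

/-- A unary function, viewed as a unary operation in `Ops X`. -/
def unaryOp {X : Type u} (F : X → X) : Ops X := ⟨0, fun x => F (x 0)⟩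

/-- The polymorphism clone of a set of binary operations. -/
def Pol2 {X : Type u} (H : Set (X → X → X)) : Set (Ops X) :=
  {f : Ops X | ∀ g : Fin (f.1 + 1) → (X → X → X), (∀ i, g i ∈ H) →
    (fun x y => f.2 fun i => g i x y) ∈ H}

/-- Polymorphisms of a set of unary functions. -/
def Pol1 {X : Type u} (G : Set (X → X)) : Set (Ops X) :=
  {f : Ops X | ∀ g : Fin (f.1 + 1) → (X → X), (∀ i, g i ∈ G) →
    (fun x => f.2 fun i => g i x) ∈ G}

def monA (X : Type u) : Set (X → X) :=
  {f | #{y : X | ¬ #(f ⁻¹' {y}) < #X} < #X}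

def monB (X : Type u) : Set (X → X) :=
  {f | ∀ y : X, #(f ⁻¹' {y}) < #X}

def monE (X : Type u) : Set (X → X) :=
  {f | #((Set.range f)ᶜ : Set X) < #X}

def monF (X : Type u) : Set (X → X) :=
  {f | #((Set.range f)ᶜ : Set X) < #X ∨ ∃ c : X, ∀ x, f x = c}

def monG (X : Type u) (lam : Cardinal.{u}) : Set (X → X) :=
  {f | ∀ A : Set X, #A = lam → lam ≤ #((f '' Aᶜ)ᶜ : Set X)}

namespace PC
open Set Function

section infra
variable {X α β ι : Type u}

abbrev Sm (X : Type u) {α : Type u} (s : Set α) : Prop := #s < #X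
abbrev Lg (X : Type u) {α : Type u} (s : Set α) : Prop := #X ≤ #s

theorem Sm.mono {s t : Set α} (h : Sm X t) (hs : s ⊆ t) : Sm X s :=
  lt_of_le_of_lt (mk_le_mk_of_subset hs) h

theorem Lg.mono {s t : Set α} (h : Lg X s) (hs : s ⊆ t) : Lg X t :=
  le_trans h (mk_le_mk_of_subset hs)

theorem not_sm {s : Set α} : ¬ Sm X s ↔ Lg X s := not_lt
theorem not_lg {s : Set α} : ¬ Lg X s ↔ Sm X s := not_le

theorem Sm.image {s : Set α} (h : Sm X s) (f : α → β) : Sm X (f '' s) :=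
  lt_of_le_of_lt mk_image_le h

theorem lg_univ (h : #α = #X) : Lg X (univ : Set α) := by
  simp [Lg, h]

theorem lg_of_inj (hι : #X ≤ #ι) {s : Set α} (φ : ι → α) (hφ : Injective φ) (h : ∀ x, φ x ∈ s) :
    Lg X s := by
  refine hι.trans ?_
  refine Cardinal.mk_le_of_injective (f := fun x => (⟨φ x, h x⟩ : s)) ?_
  intro a b hab
  exact hφ (by simpa using hab)

theorem exists_equiv {s : Set α} (hα : #α = #X) (h : Lg X s) : Nonempty (X ≃ s) := by
  have : #X = #s := le_antisymm h (by rw [← hα]; exact mk_set_le s)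
  exact Cardinal.eq.1 this

theorem eq_card {s : Set α} (hα : #α = #X) (h : Lg X s) : #s = #X :=
  le_antisymm (by rw [← hα]; exact mk_set_le s) h

variable (hreg : (#X).IsRegular)
include hreg

theorem inf : Infinite X := by
  rw [Cardinal.infinite_iff]; exact hreg.aleph0_le

theorem Sm.union {s t : Set α} (h : Sm X s) (h' : Sm X t) : Sm X (s ∪ t) :=
  lt_of_le_of_lt (mk_union_le s t) (add_lt_of_lt hreg.aleph0_le h h')

theorem sm_finite {s : Set α} (h : s.Finite) : Sm X s :=
  lt_of_lt_of_le (lt_aleph0_iff_set_finite.2 h) hreg.aleph0_le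

theorem sm_iUnion_fin {n : ℕ} {s : Fin n → Set α} (h : ∀ i, Sm X (s i)) : Sm X (⋃ i, s i) := by
  have : ∀ F : Finset (Fin n), Sm X (⋃ i ∈ F, s i) := by
    intro F
    induction F using Finset.induction_on with
    | empty => simpa using sm_finite hreg (finite_empty (α := α))
    | insert a F ha ih =>
      rw [Finset.set_biUnion_insert]
      exact Sm.union hreg (h a) ih
  simpa using this Finset.univ

theorem sm_biUnion {s : Set α} {t : α → Set β} (hs : Sm X s) (ht : ∀ a ∈ s, Sm X (t a)) :
    Sm X (⋃ a ∈ s, t a) :=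
  (card_biUnion_lt_iff_forall_of_isRegular hreg hs).2 ht

theorem Lg.diff {s t : Set α} (h : Lg X s) (h' : Sm X t) : Lg X (s \ t) := by
  by_contra hc
  rw [not_lg] at hc
  exact absurd ((Sm.union hreg hc h').mono (by intro x hx; by_cases x ∈ t <;> simp_all)) (not_sm.2 h)

theorem Lg.union {s t : Set α} (h : Lg X (s ∪ t)) : Lg X s ∨ Lg X t := by
  by_contra! hc
  exact absurd (Sm.union hreg hc.1 hc.2) (not_sm.2 h)

theorem Lg.nonempty {s : Set α} (h : Lg X s) : s.Nonempty := by
  by_contra hc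
  rw [not_nonempty_iff_eq_empty] at hc
  subst hc
  exact not_sm.2 h (sm_finite hreg finite_empty)

theorem lg_compl (hα : #α = #X) {s : Set α} (h : Sm X s) : Lg X sᶜ := by
  have := Lg.diff hreg (lg_univ hα) h
  rwa [← compl_eq_univ_sdiff] at this

theorem card_prod_self : #(X × X) = #X := by
  rw [mk_prod]; simpa using mul_eq_self hreg.aleph0_le

theorem card_sum (h : #α = #X) (h' : #β = #X) : #(α ⊕ β) = #X := by
  rw [mk_sum]; simp [h, h', add_eq_self hreg.aleph0_le]

theorem card_prod (h : #α = #X) (h' : #β ≤ #X) [Nonempty β] : #(α × β) = #X := by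
  rw [mk_prod]; simp only [lift_id, h]
  exact mul_eq_left hreg.aleph0_le h' (by simp)

theorem card_prod_bool (h : #α = #X) : #(α × Bool) = #X := by
  rw [mk_prod]; simp only [h, lift_id, lift_uzero]
  exact mul_eq_left hreg.aleph0_le ((lift_lt_aleph0.2 (lt_aleph0_of_finite _)).le.trans hreg.aleph0_le) (by simp)

theorem card_fin_prod {n : ℕ} (h : #α = #X) : #(Fin (n+1) × α) = #X := by
  rw [mk_prod]; simp only [h, lift_id, lift_uzero]
  exact mul_eq_right hreg.aleph0_le ((lift_lt_aleph0.2 (lt_aleph0_of_finite _)).le.trans hreg.aleph0_le) (by simp)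

theorem card_pow (n : ℕ) : #(Fin (n+1) → X) = #X := by
  have := inf hreg
  simp only [mk_pi, prod_const, lift_uzero, mk_fin, lift_natCast, lift_id]
  exact_mod_cast power_nat_eq hreg.aleph0_le (by omega)

theorem split_lg {s : Set α} (hα : #α = #X) (h : Lg X s) :
    ∃ p q, p ⊆ s ∧ q ⊆ s ∧ Disjoint p q ∧ Lg X p ∧ Lg X q := by
  obtain ⟨e⟩ := exists_equiv hα h
  obtain ⟨e2⟩ := Cardinal.eq.1 (card_sum hreg (rfl : #X = #X) rfl)
  refine ⟨range (fun x => (e (e2 (.inl x)) : α)), range (fun x => (e (e2 (.inr x)) : α)), ?_, ?_, ?_, ?_, ?_⟩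
  · rintro _ ⟨x, rfl⟩; exact (e _).2
  · rintro _ ⟨x, rfl⟩; exact (e _).2
  · rw [disjoint_left]
    rintro _ ⟨x, rfl⟩ ⟨y, h⟩
    have := e2.injective (e.injective (Subtype.ext h)); simp at this
  · refine lg_of_inj le_rfl (fun x => (e (e2 (.inl x)) : α)) ?_ (fun x => ⟨x, rfl⟩)
    intro x y h
    have := e2.injective (e.injective (Subtype.ext h)); simpa using this
  · refine lg_of_inj le_rfl (fun x => (e (e2 (.inr x)) : α)) ?_ (fun x => ⟨x, rfl⟩)
    intro x y h
    have := e2.injective (e.injective (Subtype.ext h)); simpa using this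

/-- subset of prescribed size, with large complement -/
theorem exists_sub {s : Set X} {l : Cardinal.{u}} (hl : l ≤ #X) (h : l ≤ #s) :
    ∃ z, z ⊆ s ∧ #z = l ∧ Lg X zᶜ := by
  rcases hl.lt_or_eq with hl | rfl
  · obtain ⟨z, hz, hzl⟩ := le_mk_iff_exists_subset.1 h
    exact ⟨z, hz, hzl, lg_compl hreg rfl (hzl.trans_lt hl)⟩
  · obtain ⟨p, q, hp, hq, hd, hlp, hlq⟩ := split_lg hreg rfl h
    exact ⟨p, hp, eq_card rfl hlp, hlq.mono (by rw [disjoint_left] at hd; intro x hx hx'; exact hd hx' hx)⟩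

theorem select0 (hι : #ι ≤ #X) {n : ℕ} (J : Set (Fin (n+1))) (T : ι → Set α)
    (g : Fin (n+1) → α → X)
    (h : ∀ ξ, ∀ S : Set X, Sm X S → ∃ t ∈ T ξ, ∀ j ∈ J, g j t ∉ S) :
    ∃ τ : ι → α, (∀ ξ, τ ξ ∈ T ξ) ∧ ∀ j ∈ J, Injective (g j ∘ τ) := by
  classical
  obtain ⟨r, wo, hr⟩ := Cardinal.exists_ord_eq ι
  have hseg : ∀ ξ, Sm X {η | r η ξ} := by
    intro ξ
    refine lt_of_lt_of_le ?_ hι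
    have := Cardinal.card_typein_lt ξ hr
    exact this
  have hS : ∀ ξ (τ : ∀ η, r η ξ → α), ∃ t ∈ T ξ, ∀ j ∈ J, ∀ i η hη, g j t ≠ g i (τ η hη) := by
    intro ξ τ
    obtain ⟨t, ht, htj⟩ := h ξ (⋃ i, ⋃ η ∈ {η | r η ξ}, {x | ∃ hη, x = g i (τ η hη)}) (by
      refine sm_iUnion_fin hreg fun i => sm_biUnion hreg (hseg ξ) fun η hη => sm_finite hreg ?_
      refine (finite_singleton (g i (τ η hη))).subset ?_
      rintro x ⟨_, rfl⟩; rfl)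
    refine ⟨t, ht, fun j hj i η hη he => htj j hj ?_⟩
    simp only [mem_iUnion]
    exact ⟨i, η, hη, hη, he⟩
  choose F hF1 hF2 using hS
  have wf : WellFounded r := wo.wf
  let τ : ι → α := wf.fix F
  have hτ : ∀ ξ, τ ξ = F ξ (fun η _ => τ η) := fun ξ => wf.fix_eq F ξ
  refine ⟨τ, fun ξ => by rw [hτ]; exact hF1 _ _, fun j hj ξ η he => ?_⟩
  by_contra hne
  simp only [comp_apply] at he
  rcases trichotomous_of r ξ η with h1 | h1 | h1
  · rw [hτ η] at he
    exact hF2 η (fun η _ => τ η) j hj j ξ h1 he.symm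
  · exact hne h1
  · rw [hτ ξ] at he
    exact hF2 ξ (fun η _ => τ η) j hj j η h1 he

theorem select (hι : #ι = #X) {n : ℕ} (J : Set (Fin (n+1))) (T : ι → Set α)
    (g : Fin (n+1) → α → X)
    (h : ∀ ξ, ∀ S : Set X, Sm X S → ∃ t ∈ T ξ, ∀ j ∈ J, g j t ∉ S) :
    ∃ τ : ι → α, (∀ ξ, τ ξ ∈ T ξ) ∧ ∀ j ∈ J, Injective (g j ∘ τ) ∧ Lg X (range (g j ∘ τ))ᶜ := by
  obtain ⟨τ, h1, h2⟩ := select0 hreg (card_prod_bool hreg hι).le J (fun p => T p.1) g (fun p => h p.1)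
  refine ⟨fun ξ => τ (ξ, true), fun ξ => h1 (ξ, true), fun j hj => ⟨fun a b hab => ?_, ?_⟩⟩
  · have := h2 j hj hab; simpa using this
  · refine lg_of_inj hι.ge (fun ξ => g j (τ (ξ, false))) (fun a b hab => ?_) ?_
    · have := h2 j hj hab; simpa using this
    · rintro ξ ⟨η, hη⟩
      have := h2 j hj hη; simp at this

end infra
end PC

namespace PC
open Set Function

section ext
variable {X α β ι : Type u}

theorem ext_perm (a b : ι → X) (ha : Injective a) (hb : Injective b)
    (h : #((range a)ᶜ : Set X) = #((range b)ᶜ : Set X)) : ∃ γ : Equiv.Perm X, ∀ x, γ (a x) = b x := by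
  classical
  obtain ⟨e⟩ := Cardinal.eq.1 h
  let e1 : range a ≃ range b := (Equiv.ofInjective a ha).symm.trans (Equiv.ofInjective b hb)
  let γ : Equiv.Perm X := (Equiv.Set.sumCompl (range a)).symm.trans
    ((Equiv.sumCongr e1 e).trans (Equiv.Set.sumCompl (range b)))
  refine ⟨γ, fun x => ?_⟩
  have h1 : (Equiv.Set.sumCompl (range a)).symm (a x) = Sum.inl ⟨a x, mem_range_self x⟩ :=
    Equiv.Set.sumCompl_symm_apply_of_mem (mem_range_self x)
  have h2 : (Equiv.ofInjective a ha).symm ⟨a x, mem_range_self x⟩ = x :=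
    Equiv.ofInjective_symm_apply ha x
  simp only [γ, Equiv.trans_apply, h1]
  simp [e1, h2]

theorem ext_perm_lg (a b : ι → X) (ha : Injective a) (hb : Injective b)
    (h : Lg X (range a)ᶜ) (h' : Lg X (range b)ᶜ) : ∃ γ : Equiv.Perm X, ∀ x, γ (a x) = b x :=
  ext_perm a b ha hb ((eq_card rfl h).trans (eq_card rfl h').symm)

theorem ext_set {R R' : Set X} (h : #R = #R') (h' : #(Rᶜ : Set X) = #(R'ᶜ : Set X)) :
    ∃ γ : Equiv.Perm X, γ '' R = R' := by
  obtain ⟨e⟩ := Cardinal.eq.1 h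
  obtain ⟨γ, hγ⟩ := ext_perm (fun x : R => (x : X)) (fun x => (e x : X)) Subtype.val_injective
    (Subtype.val_injective.comp e.injective) (by
      have : range (fun x => (e x : X)) = R' := by
        ext y; constructor
        · rintro ⟨x, rfl⟩; exact (e x).2
        · intro hy; exact ⟨e.symm ⟨y, hy⟩, by simp⟩
      rw [this]; simpa using h')
  refine ⟨γ, ?_⟩
  ext y; constructor
  · rintro ⟨x, hx, rfl⟩; rw [hγ ⟨x, hx⟩]; exact (e _).2
  · intro hy; exact ⟨e.symm ⟨y, hy⟩, (e.symm ⟨y, hy⟩).2, by rw [hγ]; simp⟩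

/-- large-fibered -/
def LF (X : Type u) {α β : Type u} (t : α → β) : Prop := ∀ x, Lg X (t ⁻¹' {t x})

theorem LF.comp {t : α → β} (h : LF X t) {γ : Type u} (f : β → γ) : LF X (f ∘ t) := by
  intro x
  exact (h x).mono (by intro y hy; simp_all)

theorem LF.comp_equiv {t : α → β} (h : LF X t) (e : ι ≃ α) : LF X (t ∘ e) := by
  intro x
  refine (h (e x)).trans ?_
  refine Cardinal.mk_le_of_injective (f := fun y => ⟨e.symm y.1, by have := y.2; simp only [mem_preimage, mem_singleton_iff] at this; simp [this]⟩) ?_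
  intro a b hab
  simpa [Subtype.ext_iff] using hab

theorem LF.snd [Nonempty β] (p : β → ι) : LF X (fun q : X × β => p q.2) := by
  rintro ⟨x, b⟩
  refine lg_of_inj le_rfl (fun x => (x, b)) ?_ ?_
  · intro a b h; simpa using h
  · intro y; simp

theorem fib_equiv {t : α → X} {t' : β → X} (hα : #α = #X) (hβ : #β = #X) (h : LF X t) (h' : LF X t')
    (hr : range t = range t') : ∃ e : β ≃ α, t' = t ∘ e := by
  have : ∀ y, Nonempty ({b // t' b = y} ≃ {a // t a = y}) := by
    intro y
    rw [← Cardinal.eq]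
    by_cases hy : y ∈ range t
    · have hy' := hy
      rw [hr] at hy'
      obtain ⟨x, rfl⟩ := hy
      obtain ⟨x', hx'⟩ := hy'
      have h1 := eq_card hα (h x)
      have h2 := eq_card hβ (h' x')
      rw [hx'] at h2
      exact h2.trans h1.symm
    · have hy' := hy
      rw [hr] at hy'
      have i1 : IsEmpty {b // t' b = y} := ⟨fun b => hy' ⟨b.1, b.2⟩⟩
      have i2 : IsEmpty {b // t b = y} := ⟨fun b => hy ⟨b.1, b.2⟩⟩
      simp
  have e := fun y => (this y).some
  refine ⟨(Equiv.sigmaFiberEquiv t').symm.trans ((Equiv.sigmaCongrRight e).trans (Equiv.sigmaFiberEquiv t)), ?_⟩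
  funext b
  exact (e (t' b) ⟨b, rfl⟩).2.symm

/-- lifting along a large-fibered map -/
theorem LF.lift (hreg : (#X).IsRegular) {t : X → X} (h : LF X t) (ψ : X → X) (hψ : ∀ x, ψ x ∈ range t) :
    ∃ φ : X → X, Injective φ ∧ Lg X (range φ)ᶜ ∧ ∀ x, t (φ x) = ψ x := by
  obtain ⟨φ, h1, h2⟩ := select hreg (ι := X) rfl (n := 0) univ (fun x => t ⁻¹' {ψ x}) (fun _ => id) (by
    intro ξ S hS
    obtain ⟨w, hw⟩ := hψ ξ
    have := Lg.nonempty hreg (Lg.diff hreg (h w) hS)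
    obtain ⟨y, hy, hy'⟩ := this
    exact ⟨y, by rwa [hw] at hy, fun _ _ => hy'⟩)
  exact ⟨φ, (h2 0 trivial).1, (h2 0 trivial).2, h1⟩

theorem exists_inj (hreg : (#X).IsRegular) : ∃ j : X → X, Injective j ∧ Lg X (range j)ᶜ := by
  obtain ⟨e⟩ := Cardinal.eq.1 (card_sum hreg (rfl : #X = #X) rfl)
  refine ⟨fun x => e (.inl x), fun a b h => by simpa using h, ?_⟩
  refine lg_of_inj le_rfl (fun x => e (.inr x)) (fun a b h => by simpa using h) ?_
  rintro x ⟨y, hy⟩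
  simp at hy

theorem exists_LF (hreg : (#X).IsRegular) (R : Set X) (hR : R.Nonempty) :
    ∃ t : X → X, LF X t ∧ range t = R := by
  have := hR.to_subtype
  obtain ⟨e⟩ := Cardinal.eq.1 (card_prod hreg (rfl : #X = #X) (mk_set_le R)).symm
  refine ⟨(fun q : X × R => (q.2 : X)) ∘ e, (LF.snd (X := X) (fun r : R => (r : X))).comp_equiv e, ?_⟩
  rw [e.surjective.range_comp]
  ext y; constructor
  · rintro ⟨q, rfl⟩; exact q.2.2
  · intro hy; exact ⟨(y, ⟨y, hy⟩), rfl⟩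

end ext

section clone
variable {X α β : Type u} {C : Set (Ops X)}

structure CS (C : Set (Ops X)) : Prop where
  cl : IsClone C
  perm : ∀ γ : Equiv.Perm X, unaryOp ⇑γ ∈ C

def InU (C : Set (Ops X)) (t : α → X) : Prop := ∀ e : X ≃ α, unaryOp (t ∘ e) ∈ C

theorem u_comp (hC : CS C) {n : ℕ} {f : (Fin (n+1) → X) → X} (hf : (⟨n, f⟩ : Ops X) ∈ C)
    (h : X → Fin (n+1) → X) (hh : ∀ i, unaryOp (fun x => h x i) ∈ C) : unaryOp (fun x => f (h x)) ∈ C :=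
  hC.cl.2 n 0 f hf (fun i x => h (x 0) i) hh

theorem u_comp1 (hC : CS C) {f g : X → X} (hf : unaryOp f ∈ C) (hg : unaryOp g ∈ C) :
    unaryOp (fun x => f (g x)) ∈ C :=
  hC.cl.2 0 0 _ hf (fun _ x => g (x 0)) (fun _ => hg)

theorem InU.comp (hC : CS C) {n : ℕ} {f : (Fin (n+1) → X) → X} (hf : (⟨n, f⟩ : Ops X) ∈ C)
    (h : α → Fin (n+1) → X) (hh : ∀ i, InU C (fun x => h x i)) : InU C (fun x => f (h x)) :=
  fun e => u_comp hC hf (fun x => h (e x)) (fun i => hh i e)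

theorem InU.comp1 (hC : CS C) {f : X → X} (hf : unaryOp f ∈ C)
    {h : α → X} (hh : InU C h) : InU C (fun x => f (h x)) :=
  fun e => u_comp1 hC (g := h ∘ e) hf (hh e)

theorem InU.of (hC : CS C) {t : α → X} (e : X ≃ α) (h : unaryOp (t ∘ e) ∈ C) : InU C t := by
  intro e'
  have := u_comp1 hC h (hC.perm (e'.trans e.symm))
  simpa [Function.comp_def] using this

theorem inU_iff (hC : CS C) {t : X → X} : InU C t ↔ unaryOp t ∈ C :=
  ⟨fun h => h (Equiv.refl X), fun h => InU.of hC (Equiv.refl X) h⟩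

theorem InU.perm (hC : CS C) (e : α ≃ X) : InU C e := fun e' => hC.perm (e'.trans e)

theorem InU.comp_equiv {t : α → X} (h : InU C t) (e : β ≃ α) : InU C (t ∘ e) :=
  fun e' => h (e'.trans e)

/-- sets `R` that are ranges of large-fibered functions in `C` -/
def InR (C : Set (Ops X)) (R : Set X) : Prop := ∃ t : X → X, unaryOp t ∈ C ∧ LF X t ∧ range t = R

theorem InR.inU (hC : CS C) {R : Set X} (h : InR C R) (hα : #α = #X) {t : α → X} (ht : LF X t) (hr : range t = R) :
    InU C t := by
  obtain ⟨t0, h0, h1, h2⟩ := h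
  obtain ⟨e, rfl⟩ := fib_equiv rfl hα h1 ht (h2.trans hr.symm)
  exact ((inU_iff hC).2 h0).comp_equiv e

theorem InU.inR (hα : #α = #X) {t : α → X} (ht : LF X t) (h : InU C t) : InR C (range t) := by
  obtain ⟨e⟩ := Cardinal.eq.1 hα.symm
  exact ⟨t ∘ e, h e, ht.comp_equiv e, by rw [e.surjective.range_comp]⟩

theorem InR.image (hC : CS C) {R : Set X} (h : InR C R) {f : X → X} (hf : unaryOp f ∈ C) : InR C (f '' R) := by
  obtain ⟨t, h1, h2, rfl⟩ := h
  exact ⟨fun x => f (t x), u_comp1 hC hf h1, h2.comp f, by rw [← range_comp]; rfl⟩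

theorem InR.of_card (hC : CS C) {R R' : Set X} (h : InR C R) (h1 : #R = #R')
    (h2 : #(Rᶜ : Set X) = #(R'ᶜ : Set X)) : InR C R' := by
  obtain ⟨γ, rfl⟩ := ext_set h1 h2
  exact h.image hC (hC.perm γ)

theorem InR.mapD (hreg : (#X).IsRegular) (hC : CS C) {n : ℕ} {f : (Fin (n+1) → X) → X} (hf : (⟨n, f⟩ : Ops X) ∈ C)
    (D : Set (Fin (n+1) → X)) (hD : D.Nonempty) (h : ∀ i, InR C ((fun v => v i) '' D)) : InR C (f '' D) := by
  have := hD.to_subtype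
  have hc : #(X × D) = #X := card_prod hreg rfl (by rw [← card_pow hreg n]; exact mk_set_le D)
  have key : ∀ p : (Fin (n+1) → X) → X, range (fun q : X × D => p q.2.1) = p '' D := by
    intro p
    ext y; constructor
    · rintro ⟨q, rfl⟩; exact ⟨_, q.2.2, rfl⟩
    · rintro ⟨d, hd, rfl⟩; exact ⟨(d 0, ⟨d, hd⟩), rfl⟩
  have := InU.inR (C := C) hc (t := fun q : X × D => f q.2.1) (LF.snd (X := X) (fun r : D => f r.1))
    (InU.comp hC hf (fun q : X × D => q.2.1) (fun i => (h i).inU hC hc (LF.snd (X := X) (fun r : D => r.1 i)) (key (fun v => v i))))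
  rwa [key] at this

end clone
end PC

namespace PC
open Set Function

section steps
variable {X : Type u} {C : Set (Ops X)}

theorem not_pol {G : Set (X → X)} (h : ¬ C ⊆ Pol1 G) : ∃ (n : ℕ) (f : (Fin (n+1) → X) → X)
    (g : Fin (n+1) → X → X), (⟨n, f⟩ : Ops X) ∈ C ∧ (∀ i, g i ∈ G) ∧ (fun x => f fun i => g i x) ∉ G := by
  rw [not_subset] at h
  obtain ⟨⟨n, f⟩, hf, h⟩ := h
  simp only [Pol1, mem_ofPred_eq, not_forall] at h
  obtain ⟨g, hg, h⟩ := h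
  exact ⟨n, f, g, hf, hg, h⟩

variable (hreg : (#X).IsRegular) (hC : CS C)
include hreg

theorem card_fun_lt {α : Type u} (h : #α < #X) (n : ℕ) : #(Fin n → α) < #X := by
  simp only [mk_pi, prod_const, lift_uzero, mk_fin, lift_natCast]
  have : (#α : Cardinal) ^ n < #X := by
    induction n with
    | zero => simpa using hreg.nat_lt 1
    | succ n ih => rw [pow_succ]; exact mul_lt_of_lt hreg.aleph0_le ih h
  simpa using this

theorem pigeon {α β σ : Type u} (hσ : #σ < #X) {W : Set α} (hW : Lg X W) (P : σ → Set α)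
    (hP : ∀ w ∈ W, ∃ s, w ∈ P s) : ∃ s, Lg X (W ∩ P s) := by
  by_contra! hc
  have := sm_biUnion hreg (s := (univ : Set σ)) (t := fun s => W ∩ P s) (by simpa [Sm] using hσ) (fun a _ => hc a)
  refine not_sm.2 hW (this.mono ?_)
  intro w hw
  obtain ⟨s, hs⟩ := hP w hw
  simp only [mem_iUnion]
  exact ⟨s, trivial, hw, hs⟩

include hC

theorem step1 (hB : ¬ C ⊆ Pol1 (monB X)) : ∃ u, unaryOp u ∈ C ∧ ∃ c, Lg X (u ⁻¹' {c}) := by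
  obtain ⟨n, f, g, hf, hg, h⟩ := not_pol hB
  simp only [monB, mem_ofPred_eq, not_forall, not_lt] at h hg
  obtain ⟨c, hc⟩ := h
  obtain ⟨τ, h1, h2⟩ := select hreg (ι := X) rfl univ (fun _ => (fun x => f fun i => g i x) ⁻¹' {c}) g (by
    intro ξ S hS
    have : Sm X (⋃ i, ⋃ s ∈ S, g i ⁻¹' {s}) :=
      sm_iUnion_fin hreg fun i => sm_biUnion hreg hS fun s _ => hg i s
    obtain ⟨x, hx, hx'⟩ := Lg.nonempty hreg (Lg.diff hreg hc this)
    refine ⟨x, hx, fun j _ hj => hx' ?_⟩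
    simp only [mem_iUnion]
    exact ⟨j, _, hj, rfl⟩)
  obtain ⟨j, hj, hj'⟩ := exists_inj hreg
  have := fun i => ext_perm_lg j (g i ∘ τ) hj (h2 i trivial).1 hj' (h2 i trivial).2
  choose γ hγ using this
  refine ⟨_, u_comp hC hf (fun x i => γ i x) (fun i => hC.perm (γ i)), c, ?_⟩
  refine lg_of_inj le_rfl j hj (fun x => ?_)
  simp only [mem_preimage, mem_singleton_iff, hγ]
  exact h1 x

theorem const_on {u : X → X} (hu : unaryOp u ∈ C) {c : X} (hc : Lg X (u ⁻¹' {c})) {ι : Type u} (hι : #ι = #X)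
    (a : ι → X) (ha : Injective a) (ha' : Lg X (range a)ᶜ) (d : X) :
    ∃ v, unaryOp v ∈ C ∧ ∀ ξ, v (a ξ) = d := by
  classical
  obtain ⟨p, q, hp, hq, hd, hlp, hlq⟩ := split_lg hreg rfl hc
  obtain ⟨e⟩ := exists_equiv rfl hlp
  obtain ⟨E⟩ := Cardinal.eq.1 hι
  obtain ⟨γ, hγ⟩ := ext_perm_lg a (fun ξ => (e (E ξ) : X)) ha
    (Subtype.val_injective.comp (e.injective.comp E.injective)) ha' (hlq.mono (by
      rw [disjoint_right] at hd
      rintro x hx ⟨ξ, rfl⟩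
      exact hd hx (e _).2))
  refine ⟨_, u_comp1 hC (hC.perm (Equiv.swap c d)) (u_comp1 hC hu (hC.perm γ)), fun ξ => ?_⟩
  rw [hγ]
  have : u (e (E ξ)) = c := hp (e (E ξ)).2
  rw [this]; simp

theorem step2 (hB : ¬ C ⊆ Pol1 (monB X)) (hA : ¬ C ⊆ Pol1 (monA X)) :
    ∃ t, unaryOp t ∈ C ∧ Lg X {y | Lg X (t ⁻¹' {y})} := by
  classical
  obtain ⟨u, hu, c0, hc0⟩ := step1 hreg hC hB
  obtain ⟨n, f, g, hf, hg, h⟩ := not_pol hA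
  simp only [monA, mem_ofPred_eq, not_lt] at h hg
  set H : X → X := fun x => f fun i => g i x with hH
  let Bad : Set X := ⋃ i, {c | #X ≤ #(g i ⁻¹' {c})}
  have hBad : Sm X Bad := sm_iUnion_fin hreg hg
  have hO : #(Option Bad) < #X := by
    rw [mk_option]; exact add_lt_of_lt hreg.aleph0_le hBad (by simpa using hreg.nat_lt 1)
  let σ : X → Fin (n+1) → Option Bad := fun x i => if h : g i x ∈ Bad then some ⟨g i x, h⟩ else none
  obtain ⟨s, hs⟩ := pigeon hreg (β := X) (card_fun_lt hreg hO (n+1)) h (fun s => {y | Lg X (H ⁻¹' {y} ∩ σ ⁻¹' {s})}) (by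
    intro y hy
    exact pigeon hreg (β := X) (card_fun_lt hreg hO (n+1)) hy (fun s => σ ⁻¹' {s}) (fun w _ => ⟨σ w, rfl⟩))
  replace hs : Lg X {y | Lg X (H ⁻¹' {y} ∩ σ ⁻¹' {s})} := hs.mono inter_subset_right
  set Y := {y | Lg X (H ⁻¹' {y} ∩ σ ⁻¹' {s})} with hY
  have hYn := (Lg.nonempty hreg hs).to_subtype
  have hXn : Nonempty X := ⟨c0⟩
  have hι : #(Y × X) = #X := card_prod hreg (eq_card rfl hs) le_rfl
  obtain ⟨τ, h1, h2⟩ := select hreg hι {i | s i = none} (fun p => H ⁻¹' {p.1.1} ∩ σ ⁻¹' {s}) g (by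
    rintro ⟨y, ξ⟩ S hS
    have : Sm X (⋃ i, ⋃ b ∈ S \ Bad, g i ⁻¹' {b}) :=
      sm_iUnion_fin hreg fun i => sm_biUnion hreg (hS.mono sdiff_subset) fun b hb => by
        by_contra hc
        exact hb.2 (mem_iUnion.2 ⟨i, not_lt.1 hc⟩)
    obtain ⟨x, hx, hx'⟩ := Lg.nonempty hreg (Lg.diff hreg (y.2 : Lg X _) this)
    refine ⟨x, hx, fun j hj hjS => hx' ?_⟩
    simp only [mem_iUnion]
    refine ⟨j, g j x, ⟨hjS, fun hb => ?_⟩, rfl⟩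
    have e1 : σ x j = s j := congrFun hx.2 j
    rw [hj] at e1
    simp [σ, hb] at e1)
  obtain ⟨j, hj, hj'⟩ := exists_inj hreg
  obtain ⟨E⟩ := Cardinal.eq.1 hι
  have ha : Injective (j ∘ E) := hj.comp E.injective
  have ha' : Lg X (range (j ∘ E))ᶜ := by rwa [E.surjective.range_comp]
  have hv : ∀ i, ∃ v, unaryOp v ∈ C ∧ ∀ ξ, v ((j ∘ E) ξ) = g i (τ ξ) := by
    intro i
    cases hsi : s i with
    | none =>
      obtain ⟨γ, hγ⟩ := ext_perm_lg (j ∘ E) (g i ∘ τ) ha (h2 i hsi).1 ha' (h2 i hsi).2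
      exact ⟨γ, hC.perm γ, hγ⟩
    | some c =>
      obtain ⟨v, hv, hv'⟩ := const_on hreg hC hu hc0 hι (j ∘ E) ha ha' c.1
      refine ⟨v, hv, fun ξ => ?_⟩
      rw [hv']
      have e1 : σ (τ ξ) i = s i := congrFun (h1 ξ).2 i
      rw [hsi] at e1
      by_cases hb : g i (τ ξ) ∈ Bad
      · simp only [σ, hb, dite_true, Option.some.injEq] at e1
        rw [← e1]
      · simp [σ, hb] at e1
  choose v hv hv' using hv
  refine ⟨_, u_comp hC hf (fun x i => v i x) hv, hs.mono ?_⟩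
  intro y hy
  refine lg_of_inj le_rfl (fun x => (j ∘ E) (⟨y, hy⟩, x)) (fun a b hab => by simpa using ha hab) (fun x => ?_)
  simp only [mem_preimage, mem_singleton_iff, hv']
  exact (h1 (⟨y, hy⟩, x)).1

theorem step3 {t : X → X} (ht : unaryOp t ∈ C) (hY : Lg X {y | Lg X (t ⁻¹' {y})}) :
    ∃ R, InR C R ∧ Lg X R := by
  classical
  have hXn : Nonempty X := (Lg.nonempty hreg hY).to_type
  set Y := {y | Lg X (t ⁻¹' {y})} with hYd
  have hYr : Y ⊆ range t := by
    intro y hy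
    obtain ⟨x, hx⟩ := Lg.nonempty hreg (hy : Lg X _)
    exact ⟨x, hx⟩
  have hinv : ∀ w, t (invFun t (t w)) = t w := fun w => invFun_eq ⟨w, rfl⟩
  set T := range (fun w => invFun t (t w)) with hT
  have hTl : Lg X T := by
    have : Lg X (t '' T) := hY.mono (by
      intro y hy
      obtain ⟨w, rfl⟩ := hYr hy
      exact ⟨_, ⟨w, rfl⟩, hinv w⟩)
    exact le_trans this mk_image_le
  have hTc : Lg X Tᶜ := by
    obtain ⟨y, hy⟩ := Lg.nonempty hreg hY
    refine (Lg.diff hreg (hy : Lg X (t ⁻¹' {y})) (sm_finite hreg (finite_singleton (invFun t y)))).mono ?_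
    rintro x ⟨hx, hx'⟩ ⟨w, rfl⟩
    apply hx'
    simp only [mem_preimage, mem_singleton_iff] at hx ⊢
    rw [hinv] at hx
    rw [hx]
  obtain ⟨Y1, hY1, hc1, hc1'⟩ := exists_sub hreg le_rfl hY
  obtain ⟨γ, hγ⟩ := ext_set (hc1.trans (eq_card rfl hTl).symm) ((eq_card rfl hc1').trans (eq_card rfl hTc).symm)
  have key : ∀ w, ∃ z ∈ Y, t (γ z) = t w := by
    intro w
    have : invFun t (t w) ∈ γ '' Y1 := by rw [hγ]; exact ⟨w, rfl⟩
    obtain ⟨z, hz, hz'⟩ := this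
    exact ⟨z, hY1 hz, by rw [hz', hinv]⟩
  refine ⟨_, ⟨fun x => t (γ (t x)), u_comp1 hC ht (u_comp1 hC (hC.perm γ) ht), ?_, rfl⟩, ?_⟩
  · intro x
    obtain ⟨z, hz, hz'⟩ := key (γ (t x))
    refine (hz : Lg X _).mono ?_
    intro x' hx'
    simp only [mem_preimage, mem_singleton_iff] at hx' ⊢
    rw [hx', hz']
  · refine hY.mono ?_
    intro y hy
    obtain ⟨w, rfl⟩ := hYr hy
    obtain ⟨z, hz, hz'⟩ := key w
    obtain ⟨x, rfl⟩ := hYr hz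
    exact ⟨x, hz'⟩

theorem step4 (hG : ∀ l : Cardinal.{u}, 1 ≤ l → l ≤ #X → ¬ C ⊆ Pol1 (monG X l)) {R : Set X} (hR : InR C R)
    (hl : Lg X R) : InR C univ := by
  have : ∀ l : Cardinal.{u}, ∀ R, InR C R → Lg X R → #(Rᶜ : Set X) = l → InR C univ := by
    intro l
    induction l using WellFoundedLT.induction with
    | ind l ih =>
    intro R hR hRl hc
    have hlX : l ≤ #X := hc ▸ mk_set_le _
    by_cases h0 : l = 0
    · rw [h0, mk_set_eq_zero_iff, compl_empty_iff] at hc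
      rwa [hc] at hR
    have h1 : 1 ≤ l := Cardinal.one_le_iff_ne_zero.2 h0
    obtain ⟨n, f, g, hf, hg, h⟩ := not_pol (hG l h1 hlX)
    simp only [monG, mem_ofPred_eq, not_forall, not_le] at h hg
    obtain ⟨A, hA, h⟩ := h
    choose Z hZ hZl hZc using fun i => exists_sub hreg hlX (hg i A hA)
    have hne : (univ.pi fun i => (Z i)ᶜ).Nonempty := univ_pi_nonempty_iff.2 fun i => Lg.nonempty hreg (hZc i)
    have hsub : (fun x => f fun i => g i x) '' Aᶜ ⊆ f '' (univ.pi fun i => (Z i)ᶜ) := by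
      rintro _ ⟨x, hx, rfl⟩
      refine ⟨_, fun i _ hi => ?_, rfl⟩
      exact hZ i hi ⟨x, hx, rfl⟩
    have hlt : #((f '' (univ.pi fun i => (Z i)ᶜ))ᶜ : Set X) < l :=
      lt_of_le_of_lt (mk_le_mk_of_subset (compl_subset_compl.2 hsub)) h
    refine ih _ hlt (f '' (univ.pi fun i => (Z i)ᶜ)) ?_ ?_ rfl
    · refine InR.mapD hreg hC hf _ hne fun i => ?_
      have := eval_image_univ_pi (i := i) hne
      rw [show (fun v : Fin (n+1) → X => v i) = eval i from rfl, this]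
      exact hR.of_card hC ((eq_card rfl hRl).trans (eq_card rfl (hZc i)).symm) (by rw [compl_compl, hc, hZl])
    · have := lg_compl hreg rfl (lt_of_lt_of_le hlt hlX)
      rwa [compl_compl] at this
  exact this _ R hR hl rfl

theorem fixup (hu : InR C univ) {n : ℕ} {f : (Fin (n+1) → X) → X} (hf : (⟨n, f⟩ : Ops X) ∈ C)
    (g : Fin (n+1) → X → X)
    (hg : ∀ i, Sm X (range (g i))ᶜ ∨ ∃ c, InR C {c} ∧ ∀ x, g i x = c) :
    ∃ R, InR C R ∧ range (fun x => f fun i => g i x) ⊆ R ∧ Sm X (R \ range (fun x => f fun i => g i x)) := by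
  classical
  have := inf hreg
  obtain ⟨x0⟩ : Nonempty X := inferInstance
  let M : Set X := ⋃ i, if Sm X (range (g i))ᶜ then (range (g i))ᶜ else ∅
  have hM : Sm X M := by
    refine sm_iUnion_fin hreg fun i => ?_
    split_ifs with h
    · exact h
    · exact sm_finite hreg finite_empty
  let ex : X → Fin (n+1) → X := fun m i => if Sm X (range (g i))ᶜ then m else g i x0
  let D : Set (Fin (n+1) → X) := range (fun x i => g i x) ∪ ex '' M
  refine ⟨f '' D, InR.mapD hreg hC hf D ⟨_, Or.inl ⟨x0, rfl⟩⟩ fun i => ?_, ?_, ?_⟩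
  · by_cases h : Sm X (range (g i))ᶜ
    · convert hu
      refine eq_univ_of_forall fun y => ?_
      by_cases hy : y ∈ range (g i)
      · obtain ⟨x, rfl⟩ := hy
        exact ⟨_, Or.inl ⟨x, rfl⟩, rfl⟩
      · refine ⟨ex y, Or.inr ⟨y, ?_, rfl⟩, by simp [ex, h]⟩
        refine mem_iUnion.2 ⟨i, ?_⟩
        rw [if_pos h]; exact hy
    · obtain ⟨c, hc, hc'⟩ := (hg i).resolve_left h
      convert hc
      ext y; constructor
      · rintro ⟨_, ⟨x, rfl⟩ | ⟨m, hm, rfl⟩, rfl⟩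
        · exact hc' x
        · simp only [ex, if_neg h]; exact hc' x0
      · rintro rfl
        exact ⟨_, Or.inl ⟨x0, rfl⟩, hc' x0⟩
  · rintro _ ⟨x, rfl⟩
    exact ⟨_, Or.inl ⟨x, rfl⟩, rfl⟩
  · refine ((hM.image ex).image f).mono ?_
    rintro _ ⟨⟨d, ⟨x, rfl⟩ | hd, rfl⟩, hy⟩
    · exact absurd ⟨x, rfl⟩ hy
    · exact ⟨d, hd, rfl⟩

theorem step6 (hu : InR C univ) (hE : ¬ C ⊆ Pol1 (monE X)) (hF : ¬ C ⊆ Pol1 (monF X)) :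
    ∃ R, InR C R ∧ Lg X Rᶜ ∧ R.Nontrivial := by
  have h1 : ∃ R, InR C R ∧ Lg X Rᶜ ∧ R.Nonempty := by
    obtain ⟨n, f, g, hf, hg, h⟩ := not_pol hE
    simp only [monE, mem_ofPred_eq, not_lt] at h hg
    obtain ⟨R, hR, hs, hd⟩ := fixup hreg hC hu hf g (fun i => Or.inl (hg i))
    refine ⟨R, hR, (Lg.diff hreg h hd).mono ?_, ?_⟩
    · intro x hx hxR; exact hx.2 ⟨hxR, hx.1⟩
    · have := inf hreg
      obtain ⟨x0⟩ : Nonempty X := inferInstance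
      exact ⟨_, hs ⟨x0, rfl⟩⟩
  obtain ⟨R, hR, hRc, hne⟩ := h1
  by_cases hnt : R.Nontrivial
  · exact ⟨R, hR, hRc, hnt⟩
  obtain ⟨c, rfl⟩ : ∃ c, R = {c} := by
    obtain ⟨c, hc⟩ := hne
    exact ⟨c, (not_nontrivial_iff.1 hnt).eq_singleton_of_mem hc⟩
  have hsing : ∀ d, InR C {d} := fun d => hR.of_card hC (by simp)
    ((eq_card rfl hRc).trans (eq_card rfl (lg_compl hreg rfl (sm_finite hreg (finite_singleton d)))).symm)
  obtain ⟨n, f, g, hf, hg, h⟩ := not_pol hF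
  simp only [monF, mem_ofPred_eq, not_or, not_lt, not_exists, not_forall] at h hg
  obtain ⟨R, hR, hs, hd⟩ := fixup hreg hC hu hf g (fun i => (hg i).imp id (fun ⟨c, hc⟩ => ⟨c, hsing c, hc⟩))
  refine ⟨R, hR, (Lg.diff hreg h.1 hd).mono ?_, ?_⟩
  · intro x hx hxR; exact hx.2 ⟨hxR, hx.1⟩
  · obtain ⟨x, hx⟩ := h.2 (f fun i => g i c)
    exact ⟨_, hs ⟨x, rfl⟩, _, hs ⟨c, rfl⟩, hx⟩

theorem step7 (hu : InR C univ) {R R' : Set X} (hR : InR C R) (hRc : Lg X Rᶜ) (hne : R'.Nonempty)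
    (hle : #R' ≤ #R) : InR C R' := by
  classical
  obtain ⟨t, ht, htl, htr⟩ := hu
  obtain ⟨ε⟩ := hle
  obtain ⟨r0, hr0⟩ := hne
  have : Nonempty R' := ⟨⟨r0, hr0⟩⟩
  let ψ : X → X := fun x => if h : x ∈ R then (invFun ε ⟨x, h⟩ : R') else r0
  obtain ⟨φ, h1, h2, h3⟩ := htl.lift hreg ψ (by simp [htr])
  obtain ⟨γ, hγ⟩ := ext_perm_lg (fun x : R => (x : X)) (fun x => φ x) Subtype.val_injective
    (h1.comp Subtype.val_injective) (by simpa using hRc) (h2.mono (compl_subset_compl.2 (by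
      rintro _ ⟨x, rfl⟩; exact ⟨_, rfl⟩)))
  convert hR.image hC (u_comp1 hC ht (hC.perm γ))
  ext y; constructor
  · intro hy
    refine ⟨ε ⟨y, hy⟩, (ε ⟨y, hy⟩).2, ?_⟩
    show t (γ _) = y
    rw [hγ, h3]
    simp only [ψ, Subtype.coe_prop, dite_true, Subtype.coe_eta]
    rw [leftInverse_invFun ε.injective]
  · rintro ⟨x, hx, rfl⟩
    have := hγ ⟨x, hx⟩
    simp only at this ⊢
    rw [this, h3]
    simp only [ψ, hx, dite_true]
    exact (invFun ε ⟨x, hx⟩).2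

end steps
end PC

namespace PC
open Set Function

section step8
variable {X α β : Type u} {C : Set (Ops X)}

theorem step8 (hreg : (#X).IsRegular) (hC : CS C) (hu : InR C univ) (hp : ∀ c d, InR C {c, d})
    {n : ℕ} {f : (Fin (n+1) → X) → X} (hf : (⟨n, f⟩ : Ops X) ∈ C)
    (hn : ∀ i, ∃ c, Lg X (f '' {v | v i = c})) : ∃ R, InR C R ∧ Lg X R ∧ Lg X Rᶜ := by
  classical
  by_contra! hcon
  have hproj : ∀ i j c, j ≠ i → (fun v : Fin (n+1) → X => v j) '' {v | v i = c} = (Set.univ : Set X) := by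
    intro i j c hj
    ext y
    simp only [mem_image, mem_ofPred_eq, mem_univ, iff_true]
    exact ⟨fun k => if k = j then y else c, by simp [hj.symm], by simp⟩
  have hpi : ∀ i c, (fun v : Fin (n+1) → X => v i) '' {v | v i = c} = {c} := by
    intro i c
    ext y
    simp only [mem_image, mem_ofPred_eq, mem_singleton_iff]
    exact ⟨fun ⟨v, h1, h2⟩ => h2 ▸ h1, fun h => ⟨fun _ => c, rfl, h.symm⟩⟩
  have h1 : ∀ i c, InR C (f '' {v | v i = c}) := by
    intro i c
    refine InR.mapD hreg hC hf _ ⟨fun _ => c, rfl⟩ (fun j => ?_)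
    by_cases hj : j = i
    · subst hj; rw [hpi]; simpa using hp c c
    · rw [hproj i j c hj]; exact hu
  have h2 : ∀ i c, Lg X (f '' {v | v i = c}) := by
    intro i c
    obtain ⟨ci, hci⟩ := hn i
    obtain ⟨p, q, hps, hqs, hd, hlp, hlq⟩ := split_lg hreg rfl hci
    obtain ⟨z, hz⟩ := Lg.nonempty hreg hlp
    obtain ⟨v0, hv0, hv0z⟩ := hps hz
    have hin : InR C (f '' ({v | v i = ci ∧ f v ∈ p} ∪ {v | v i = c})) := by
      refine InR.mapD hreg hC hf _ ⟨fun _ => c, Or.inr rfl⟩ (fun j => ?_)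
      rw [image_union]
      by_cases hj : j = i
      · subst hj
        rw [hpi]
        convert hp ci c using 1
        rw [insert_eq]
        congr 1
        ext y; constructor
        · rintro ⟨v, hv, rfl⟩; exact hv.1
        · rintro rfl; exact ⟨v0, ⟨hv0, by rwa [hv0z]⟩, hv0⟩
      · rw [hproj i j c hj, union_univ]; exact hu
    rw [image_union] at hin
    have hl : p ⊆ f '' {v | v i = ci ∧ f v ∈ p} := by
      intro y hy
      obtain ⟨v, hv, rfl⟩ := hps hy
      exact ⟨v, ⟨hv, hy⟩, rfl⟩
    have h3 := hcon _ hin (hlp.mono (hl.trans subset_union_left))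
    refine (Lg.diff hreg hlq h3).mono ?_
    rintro y ⟨hy, hy'⟩
    rw [notMem_compl_iff] at hy'
    rcases hy' with ⟨v, hv, rfl⟩ | h
    · exact absurd hy (disjoint_left.1 hd hv.2)
    · exact h
  obtain ⟨p, q, -, -, hd, hlp, hlq⟩ := split_lg hreg rfl (lg_univ (rfl : #X = #X))
  have key : ∀ i c, ∃ v : Fin (n+1) → X, v i = c ∧ f v ∉ p := by
    intro i c
    have := hcon _ (h1 i c) (h2 i c)
    obtain ⟨y, hy, hy'⟩ := Lg.nonempty hreg (Lg.diff hreg hlq this)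
    rw [notMem_compl_iff] at hy'
    obtain ⟨v, hv, rfl⟩ := hy'
    exact ⟨v, hv, disjoint_right.1 hd hy⟩
  obtain ⟨x0⟩ := (inf hreg).nonempty
  have hin : InR C (f '' {v | f v ∉ p}) := by
    refine InR.mapD hreg hC hf _ ((key 0 x0).imp fun v h => h.2) (fun j => ?_)
    convert hu
    ext c
    simp only [mem_univ, iff_true]
    obtain ⟨v, hv, hv'⟩ := key j c
    exact ⟨v, hv', hv⟩
  have h4 := hcon _ (h1 0 x0) (h2 0 x0)
  refine not_sm.2 ?_ (hcon _ hin ((Lg.diff hreg hlq h4).mono ?_))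
  · exact hlp.mono (by rintro y hy ⟨v, hv, rfl⟩; exact hv hy)
  · rintro y ⟨hy, hy'⟩
    rw [notMem_compl_iff] at hy'
    obtain ⟨v, hv, rfl⟩ := hy'
    exact ⟨v, disjoint_right.1 hd hy, rfl⟩

/-- all large-fibered functions belong to `C` -/
theorem step8' (hreg : (#X).IsRegular) (hC : CS C) (hu : InR C univ) {R : Set X} (hR : InR C R)
    (hRc : Lg X Rᶜ) (hnt : R.Nontrivial)
    {n : ℕ} {f : (Fin (n+1) → X) → X} (hf : (⟨n, f⟩ : Ops X) ∈ C)
    (hn : ∀ i, ∃ c, Lg X (f '' {v | v i = c})) {t : α → X} (hα : #α = #X) (ht : LF X t) : InU C t := by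
  have hp : ∀ c d, InR C {c, d} := by
    intro c d
    refine step7 hreg hC hu hR hRc ⟨c, by simp⟩ ?_
    obtain ⟨a, ha, b, hb, hab⟩ := hnt
    refine le_trans ?_ (mk_le_mk_of_subset (insert_subset ha (singleton_subset_iff.2 hb)))
    have : #({a, b} : Set X) = 2 := by
      rw [mk_insert (by simpa using hab)]; simp; norm_num
    rw [this]
    refine mk_insert_le.trans ?_
    simp; norm_num
  obtain ⟨R', h1, h2, h3⟩ := step8 hreg hC hu hp hf hn
  have hne : Nonempty α := by
    rw [← mk_ne_zero_iff, hα]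
    exact (lt_of_lt_of_le aleph0_pos hreg.aleph0_le).ne'
  refine (step7 hreg hC hu h1 h3 (range_nonempty t) ?_).inU hC hα ht rfl
  exact (mk_set_le _).trans h2

end step8
end PC

namespace PC
open Set Function

section step9
variable {X α β : Type u} {C : Set (Ops X)}

theorem inj_finish (hC : CS C) {n : ℕ} {f : (Fin (n+1) → X) → X} (hf : (⟨n, f⟩ : Ops X) ∈ C)
    {ι : Type u} (hι : #ι = #X) (τ : ι → Fin (n+1) → X) (h : ∀ i, InU C (fun x => τ x i))
    (hi : Injective (f ∘ τ)) (hl : Lg X (range (f ∘ τ))ᶜ) :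
    ∃ j : X → X, unaryOp j ∈ C ∧ Injective j ∧ Lg X (range j)ᶜ := by
  obtain ⟨e⟩ := Cardinal.eq.1 hι.symm
  refine ⟨(f ∘ τ) ∘ e, InU.comp hC hf τ h e, hi.comp e.injective, ?_⟩
  rwa [e.surjective.range_comp]

theorem sel1 (hreg : (#X).IsRegular) {ι : Type u} (hι : #ι = #X) (T : ι → Set α) (g : α → X)
    (h : ∀ ξ, Lg X (g '' T ξ)) :
    ∃ τ : ι → α, (∀ ξ, τ ξ ∈ T ξ) ∧ Injective (g ∘ τ) ∧ Lg X (range (g ∘ τ))ᶜ := by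
  obtain ⟨τ, h1, h2⟩ := select hreg hι (n := 0) univ T (fun _ => g) (by
    intro ξ S hS
    obtain ⟨y, ⟨t, ht, rfl⟩, hy⟩ := Lg.nonempty hreg (Lg.diff hreg (h ξ) hS)
    exact ⟨t, ht, fun _ _ => hy⟩)
  exact ⟨τ, h1, h2 0 trivial⟩

theorem step9a (hreg : (#X).IsRegular) (hC : CS C)
    (hLF : ∀ (α : Type u) (t : α → X), #α = #X → LF X t → InU C t)
    {n : ℕ} {f : (Fin (n+1) → X) → X} (hf : (⟨n, f⟩ : Ops X) ∈ C)
    {i : Fin (n+1)} {c ci : X} (hs : Sm X (f '' {v | v i = c})) (hl : Lg X (f '' {v | v i = ci}))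
    (s : X → X) (d : X) : InU C (Sum.elim s (fun _ => d) : X ⊕ (X × (Fin (n+1) → X)) → X) := by
  classical
  have hne : Nonempty X := ⟨d⟩
  set M := f '' {v | v i = c} with hM
  obtain ⟨τ, h1, h2, h3⟩ := sel1 hreg (ι := X) rfl (fun _ => {v | v i = ci ∧ f v ∉ M}) f (by
    intro ξ
    refine (Lg.diff hreg hl hs).mono ?_
    rintro _ ⟨⟨v, hv, rfl⟩, hy⟩
    exact ⟨v, ⟨hv, hy⟩, rfl⟩)
  have hV : #(X × (Fin (n+1) → X)) = #X := card_prod hreg rfl (card_pow hreg n).le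
  have hW := card_sum hreg (rfl : #X = #X) hV
  let h : X ⊕ (X × (Fin (n+1) → X)) → Fin (n+1) → X := Sum.elim τ (fun q => update q.2 i c)
  have hh : InU C (fun x => f (h x)) := by
    refine InU.comp hC hf h (fun j => hLF _ _ hW ?_)
    intro x
    by_cases hj : j = i
    · subst hj
      rcases x with ξ | ⟨ξ, v⟩
      · refine lg_of_inj le_rfl (fun η => Sum.inl η) Sum.inl_injective (fun η => ?_)
        simp [h, (h1 _).1]
      · refine lg_of_inj le_rfl (fun η => Sum.inr (η, v)) (fun a b hab => by simpa using hab) (fun η => ?_)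
        simp [h]
    · refine lg_of_inj le_rfl (fun η => Sum.inr (η, fun _ => h x j)) (fun a b hab => by simpa using hab) (fun η => ?_)
      simp [h, hj]
  let P := range (f ∘ τ)
  have hQ : Lg X (P ∪ M)ᶜ := (Lg.diff hreg h3 hs).mono (by
    intro y hy; simp only [P, mem_compl_iff, mem_union]; exact fun h => h.elim hy.1 hy.2)
  obtain ⟨e⟩ := exists_equiv rfl hQ
  obtain ⟨r, hr, hrr⟩ := exists_LF hreg (univ : Set X) univ_nonempty
  let t : X → X := fun y => if hy : y ∈ (P ∪ M)ᶜ then r (e.symm ⟨y, hy⟩) else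
    if y ∈ M then d else s (invFun (f ∘ τ) y)
  have ht : LF X t := by
    intro x
    obtain ⟨z, hz⟩ : t x ∈ range r := by rw [hrr]; trivial
    have := hr z
    refine le_trans this (Cardinal.mk_le_of_injective (f := fun w => ⟨e w.1, ?_⟩) ?_)
    · have h5 := w.2
      simp only [mem_preimage, mem_singleton_iff] at h5 ⊢
      have : (e w.1 : X) ∈ (P ∪ M)ᶜ := (e w.1).2
      simp only [t, this, dite_true, Subtype.coe_eta, Equiv.symm_apply_apply]
      exact h5.trans hz
    · intro a b hab
      have h6 := Subtype.ext_iff.1 hab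
      exact Subtype.ext (e.injective (Subtype.ext h6))
  have htC := (inU_iff hC).1 (hLF _ t rfl ht)
  convert InU.comp1 hC htC hh using 1
  funext x
  rcases x with ξ | ⟨ξ, v⟩
  · have a1 : f (τ ξ) ∈ P := ⟨ξ, rfl⟩
    have a2 : f (τ ξ) ∉ M := (h1 ξ).2
    have a3 : invFun (f ∘ τ) (f (τ ξ)) = ξ := leftInverse_invFun h2 ξ
    simp [t, h, a1, a2, a3]
  · have a2 : f (update v i c) ∈ M := ⟨_, by simp, rfl⟩
    simp [t, h, a2]

theorem step9b (hreg : (#X).IsRegular)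
    {n : ℕ} (H : ∀ (s : X → X) (d : X), InU C (Sum.elim s (fun _ => d) : X ⊕ (X × (Fin (n+1) → X)) → X))
    (hα : #α = #X) (g : α → X) (d : X) (hg : Lg X {x | g x = d}) : InU C g := by
  classical
  have hne : Nonempty X := ⟨d⟩
  obtain ⟨p, q, hp, hq, hd, hlp, hlq⟩ := split_lg hreg hα hg
  have hV : #(X × (Fin (n+1) → X)) = #X := card_prod hreg rfl (card_pow hreg n).le
  obtain ⟨e1⟩ := exists_equiv hα (hlq.mono (by intro x hx hx'; exact disjoint_left.1 hd hx' hx) : Lg X pᶜ)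
  obtain ⟨e2⟩ := Cardinal.eq.1 (hV.trans (eq_card hα hlp).symm)
  let e : X ⊕ (X × (Fin (n+1) → X)) ≃ α := (Equiv.sumCongr e1 e2).trans ((Equiv.sumComm _ _).trans (Equiv.Set.sumCompl p))
  have := (H (fun x => g (e1 x)) d).comp_equiv e.symm
  convert this using 1
  rw [Equiv.eq_comp_symm]
  funext x
  rcases x with x | x
  · simp [e]
  · simp only [comp_apply, Sum.elim_inr]
    exact hp (by simp [e])

theorem step9 (hreg : (#X).IsRegular) (hC : CS C)
    (hLF : ∀ (α : Type u) (t : α → X), #α = #X → LF X t → InU C t)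
    {n : ℕ} {f : (Fin (n+1) → X) → X} (hf : (⟨n, f⟩ : Ops X) ∈ C)
    (hn : ∀ i, ∃ c, Lg X (f '' {v | v i = c})) :
    ∃ j : X → X, unaryOp j ∈ C ∧ Injective j ∧ Lg X (range j)ᶜ := by
  have hne := (inf hreg).nonempty
  by_cases hall : ∀ i c, Lg X (f '' {v | v i = c})
  · have hι : #(Fin (n+1) × (X × X)) = #X := card_fin_prod hreg (card_prod_self hreg)
    obtain ⟨τ, h1, h2, h3⟩ := sel1 hreg hι (fun q => {v | v q.1 = q.2.1}) f (fun q => hall _ _)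
    refine inj_finish hC hf hι τ (fun i => hLF _ _ hι ?_) h2 h3
    intro x
    refine lg_of_inj le_rfl (fun ξ => (i, τ x i, ξ)) (fun a b hab => by simpa using hab) (fun ξ => ?_)
    exact h1 (i, τ x i, ξ)
  · simp only [not_forall, not_lg] at hall
    obtain ⟨i, c, hs⟩ := hall
    obtain ⟨ci, hl⟩ := hn i
    have H := step9a hreg hC hLF hf hs hl
    choose c' hc' using hn
    have hι : #(Fin (n+1) × X) = #X := card_fin_prod hreg rfl
    obtain ⟨τ, h1, h2, h3⟩ := sel1 hreg hι (fun q => {v | v q.1 = c' q.1}) f (fun q => hc' _)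
    refine inj_finish hC hf hι τ (fun i => step9b hreg H hι _ (c' i) ?_) h2 h3
    exact lg_of_inj le_rfl (fun ξ => (i, ξ)) (fun a b hab => by simpa using hab) (fun ξ => h1 (i, ξ))

theorem step10 (hreg : (#X).IsRegular) (hC : CS C)
    (hLF : ∀ (α : Type u) (t : α → X), #α = #X → LF X t → InU C t)
    {j : X → X} (hj : unaryOp j ∈ C) (hji : Injective j) (hjl : Lg X (range j)ᶜ) (g : X → X) :
    unaryOp g ∈ C := by
  have hne := (inf hreg).nonempty
  obtain ⟨t, ht, htr⟩ := exists_LF hreg (univ : Set X) univ_nonempty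
  obtain ⟨φ, h1, h2, h3⟩ := ht.lift hreg g (by simp [htr])
  obtain ⟨γ, hγ⟩ := ext_perm_lg j φ hji h1 hjl h2
  have := u_comp1 hC ((inU_iff hC).1 (hLF _ t rfl ht)) (u_comp1 hC (hC.perm γ) hj)
  convert this using 2
  funext x
  rw [hγ, h3]

/-- Main theorem -/
theorem mainT (hreg : (#X).IsRegular) (hC : CS C)
    {n : ℕ} {f : (Fin (n+1) → X) → X} (hf : (⟨n, f⟩ : Ops X) ∈ C)
    (hn : ∀ i, ∃ c, Lg X (f '' {v | v i = c}))
    (hA : ¬ C ⊆ Pol1 (monA X)) (hB : ¬ C ⊆ Pol1 (monB X)) (hE : ¬ C ⊆ Pol1 (monE X))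
    (hF : ¬ C ⊆ Pol1 (monF X)) (hG : ∀ l, 1 ≤ l → l ≤ #X → ¬ C ⊆ Pol1 (monG X l)) (g : X → X) :
    unaryOp g ∈ C := by
  obtain ⟨t, ht, hY⟩ := step2 hreg hC hB hA
  obtain ⟨R, hR, hl⟩ := step3 hreg hC ht hY
  have hu := step4 hreg hC hG hR hl
  obtain ⟨R', hR', hRc', hnt⟩ := step6 hreg hC hu hE hF
  have hLF : ∀ (α : Type u) (t : α → X), #α = #X → LF X t → InU C t :=
    fun α t hα ht => step8' hreg hC hu hR' hRc' hnt hf hn hα ht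
  obtain ⟨j, h1, h2, h3⟩ := step9 hreg hC hLF hf hn
  exact step10 hreg hC hLF h1 h2 h3 g

end step9
end PC

namespace PC
open Set Function

section fwd
variable {X α β : Type u} {C : Set (Ops X)}

theorem subset_gen (F : Set (Ops X)) : F ⊆ cloneGen F := fun _ hf _ hC => hC.2 hf

theorem isClone_gen (F : Set (Ops X)) : IsClone (cloneGen F) := by
  refine ⟨fun n k C hC => hC.1.1 n k, fun n m f hf g hg C hC => ?_⟩
  exact hC.1.2 n m f (hf C hC) g (fun i => hg i C hC)

theorem gen_subset {F : Set (Ops X)} (hC : IsClone C) (h : F ⊆ C) : cloneGen F ⊆ C :=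
  fun _ hf => hf C ⟨hC, h⟩

theorem isClone_pol (G : Set (X → X)) : IsClone (Pol1 G) := by
  refine ⟨fun n k g hg => hg k, fun n m f hf g hg h hh => ?_⟩
  exact hf (fun i x => g i (fun j => h j x)) (fun i => hg i h hh)

def AU (X : Type u) : Set (Ops X) := {f | ∃ i, ∀ c, Sm X (f.2 '' {v | v i = c})}

theorem isClone_AU (hreg : (#X).IsRegular) : IsClone (AU X) := by
  refine ⟨fun n k => ⟨k, fun c => ?_⟩, fun n m f hf g hg => ?_⟩
  · refine (sm_finite hreg (finite_singleton c)).mono ?_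
    rintro _ ⟨v, hv, rfl⟩
    exact hv
  · obtain ⟨i, hi⟩ := hf
    obtain ⟨j, hj⟩ := hg i
    refine ⟨j, fun c => ?_⟩
    refine (sm_biUnion hreg (hj c) (t := fun z => f '' {v | v i = z}) (fun z _ => hi z)).mono ?_
    rintro _ ⟨v, hv, rfl⟩
    simp only [mem_iUnion]
    exact ⟨_, ⟨v, hv, rfl⟩, _, rfl, rfl⟩

theorem unary_AU (hreg : (#X).IsRegular) (F : X → X) : unaryOp F ∈ AU X := by
  refine ⟨0, fun c => (sm_finite hreg (finite_singleton (F c))).mono ?_⟩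
  rintro _ ⟨v, hv, rfl⟩
  show F (v 0) = F c
  rw [← hv]

theorem not_AU {n : ℕ} {f : (Fin (n+1) → X) → X} :
    (⟨n, f⟩ : Ops X) ∉ AU X ↔ ∀ i, ∃ c, Lg X (f '' {v | v i = c}) := by
  simp only [AU, Set.mem_ofPred_eq, not_exists, not_forall, not_sm]

/-- binary operation as an element of `Ops` -/
def bin (p : X → X → X) : Ops X := ⟨1, fun v => p (v 0) (v 1)⟩

/-- injective on a large square -/
def ISq (p : X → X → X) : Prop := ∃ w : X → X, Injective (fun q : X × X => p (w q.1) (w q.2))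

theorem ISq.not_AU (hreg : (#X).IsRegular) {p : X → X → X} (h : ISq p) (i : Fin 2) :
    ∃ c, Lg X ((fun v : Fin 2 → X => p (v 0) (v 1)) '' {v | v i = c}) := by
  obtain ⟨w, hw⟩ := h
  obtain ⟨x0⟩ := (inf hreg).nonempty
  refine ⟨w x0, ?_⟩
  by_cases hi : i = 0
  · subst hi
    refine lg_of_inj le_rfl (fun x => p (w x0) (w x)) (fun a b hab => ?_) (fun x => ⟨![w x0, w x], rfl, rfl⟩)
    have := hw (a₁ := (x0, a)) (a₂ := (x0, b)) hab
    simpa using this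
  · have hi : i = 1 := by omega
    subst hi
    refine lg_of_inj le_rfl (fun x => p (w x) (w x0)) (fun a b hab => ?_) (fun x => ⟨![w x, w x0], rfl, rfl⟩)
    have := hw (a₁ := (a, x0)) (a₂ := (b, x0)) hab
    simpa using this

theorem exists_inj2 (hreg : (#X).IsRegular) : ∃ q : X → X → X, Injective (fun v : X × X => q v.1 v.2) ∧
    Lg X (range (fun v : X × X => q v.1 v.2))ᶜ := by
  obtain ⟨e⟩ := Cardinal.eq.1 (card_prod_self hreg)
  obtain ⟨j, h1, h2⟩ := exists_inj hreg
  refine ⟨fun x y => j (e (x, y)), h1.comp e.injective, h2.mono ?_⟩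
  exact compl_subset_compl.2 (by rintro _ ⟨x, rfl⟩; exact ⟨_, rfl⟩)

theorem AU_ne (hreg : (#X).IsRegular) : ∃ f, f ∉ AU X := by
  obtain ⟨q, hq, -⟩ := exists_inj2 hreg
  exact ⟨bin q, PC.not_AU.2 (ISq.not_AU hreg ⟨id, hq⟩)⟩

/-- generation -/
theorem gen_all (hreg : (#X).IsRegular) (hC : IsClone C) (hU : ∀ F : X → X, unaryOp F ∈ C) {p : X → X → X}
    (hp : bin p ∈ C) (hi : ISq p) : C = Set.univ := by
  have hne := (inf hreg).nonempty
  obtain ⟨w, hw⟩ := hi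
  have hp2 : ∀ (n : ℕ) (a b : (Fin (n+1) → X) → X), (⟨n, a⟩ : Ops X) ∈ C → (⟨n, b⟩ : Ops X) ∈ C →
      (⟨n, fun v => p (w (a v)) (w (b v))⟩ : Ops X) ∈ C := by
    intro n a b ha hb
    have := hC.2 1 n _ hp ![fun v => w (a v), fun v => w (b v)] (by
      intro i
      fin_cases i
      · exact hC.2 0 n _ (hU w) (fun _ => a) (fun _ => ha)
      · exact hC.2 0 n _ (hU w) (fun _ => b) (fun _ => hb))
    exact this
  have key : ∀ (n : ℕ) (l : List (Fin (n+1))), ∃ a : (Fin (n+1) → X) → X, (⟨n, a⟩ : Ops X) ∈ C ∧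
      ∀ v v', a v = a v' → ∀ k ∈ l, v k = v' k := by
    intro n l
    induction l with
    | nil => exact ⟨fun v => v 0, hC.1 n 0, by simp⟩
    | cons k l ih =>
      obtain ⟨a, h1, h2⟩ := ih
      refine ⟨_, hp2 n (fun v => v k) a (hC.1 n k) h1, ?_⟩
      intro v v' h
      have := hw (a₁ := (v k, a v)) (a₂ := (v' k, a v')) h
      simp only [Prod.mk.injEq] at this
      intro k' hk'
      rcases List.mem_cons.1 hk' with rfl | hk'
      · exact this.1
      · exact h2 v v' this.2 k' hk'
  rw [eq_univ_iff_forall]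
  rintro ⟨n, f⟩
  obtain ⟨a, h1, h2⟩ := key n (List.finRange _)
  have ha : Injective a := fun v v' h => funext fun k => h2 v v' h k (List.mem_finRange k)
  have := hC.2 0 n _ (hU (fun y => f (invFun a y))) (fun _ => a) (fun _ => h1)
  convert this using 3
  exact congrArg f (leftInverse_invFun ha _).symm

def Lst (X : Type u) (G : Set (X → X)) : Prop :=
  G = monA X ∨ G = monB X ∨ G = monE X ∨ G = monF X ∨
        ∃ lam : Cardinal.{u}, 1 ≤ lam ∧ lam ≤ #X ∧ G = monG X lam

theorem mainT' (hreg : (#X).IsRegular) (hC : CS C) {f : Ops X} (hf : f ∈ C) (hfA : f ∉ AU X)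
    (h : ∀ G, Lst X G → ¬ C ⊆ Pol1 G) (g : X → X) : unaryOp g ∈ C :=
  mainT hreg hC (n := f.1) (f := f.2) hf (PC.not_AU.1 hfA) (h _ (.inl rfl)) (h _ (.inr (.inl rfl)))
    (h _ (.inr (.inr (.inl rfl)))) (h _ (.inr (.inr (.inr (.inl rfl)))))
    (fun l h1 h2 => h _ (.inr (.inr (.inr (.inr ⟨l, h1, h2, rfl⟩))))) g

theorem pol_unary {G : Set (X → X)} (hid : id ∈ G) {h : X → X} (hh : unaryOp h ∈ Pol1 G) : h ∈ G :=
  hh (fun _ => id) (fun _ => hid)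

theorem unary_pol {G : Set (X → X)} (hcomp : ∀ f ∈ G, ∀ g ∈ G, f ∘ g ∈ G) {h : X → X} (hh : h ∈ G) :
    unaryOp h ∈ Pol1 G := fun g hg => hcomp _ hh _ (hg 0)

/-- properties of the monoids -/
structure Good (G : Set (X → X)) : Prop where
  perm : ∀ γ : Equiv.Perm X, ⇑γ ∈ G
  comp : ∀ f ∈ G, ∀ g ∈ G, f ∘ g ∈ G
  ne : ∃ f, f ∉ G
  sq : ∃ p : X → X → X, ISq p ∧ bin p ∈ Pol1 G

theorem Good.id {G : Set (X → X)} (h : Good G) : id ∈ G := h.perm (Equiv.refl X)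

theorem Good.ne_univ {G : Set (X → X)} (h : Good G) : ∃ F, unaryOp F ∉ Pol1 G :=
  h.ne.imp fun _ hf hf' => hf (pol_unary h.id hf')

theorem forward (hreg : (#X).IsRegular) (hgood : ∀ G, Lst X G → Good G) (hC : IsPrecompleteClone C)
    (hS : ∀ γ : Equiv.Perm X, unaryOp ⇑γ ∈ C) (hn : ¬ ∀ F : X → X, unaryOp F ∈ C) :
    ∃ G, Lst X G ∧ C = Pol1 G := by
  have hcs : CS C := ⟨hC.1, hS⟩
  obtain ⟨F, hF⟩ := not_forall.1 hn
  have hg := hC.2.2 _ hF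
  have : ∃ f ∈ C, f ∉ AU X := by
    by_contra! hcon
    obtain ⟨f, hf⟩ := AU_ne hreg
    have h1 : cloneGen (insert (unaryOp F) C) ⊆ AU X :=
      gen_subset (isClone_AU hreg) (insert_subset (unary_AU hreg F) hcon)
    rw [hg] at h1
    exact hf (h1 trivial)
  obtain ⟨f, hf, hfA⟩ := this
  by_contra! hcon
  refine hn (mainT' hreg hcs hf hfA (fun G hG hsub => hcon G hG (hsub.antisymm ?_)))
  intro g hg
  by_contra hgC
  have h1 : cloneGen (insert g C) ⊆ Pol1 G := gen_subset (isClone_pol G) (insert_subset hg hsub)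
  rw [hC.2.2 _ hgC] at h1
  obtain ⟨F, hF⟩ := (hgood G hG).ne_univ
  exact hF (h1 trivial)

theorem backward (hreg : (#X).IsRegular) (hgood : ∀ G, Lst X G → Good G)
    (hne : ∀ G G', Lst X G → Lst X G' → G ≠ G' → ¬ Pol1 G ⊆ Pol1 G') {G : Set (X → X)} (hG : Lst X G) :
    IsPrecompleteClone (Pol1 G) ∧ (∀ γ : Equiv.Perm X, unaryOp ⇑γ ∈ Pol1 G) ∧
      ¬ ∀ F : X → X, unaryOp F ∈ Pol1 G := by
  have hg := hgood G hG
  obtain ⟨F, hF⟩ := hg.ne_univ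
  have hperm : ∀ γ : Equiv.Perm X, unaryOp ⇑γ ∈ Pol1 G := fun γ => unary_pol hg.comp (hg.perm γ)
  refine ⟨⟨isClone_pol G, fun h => hF (h ▸ trivial), fun f hf => ?_⟩, hperm, fun h => hF (h F)⟩
  obtain ⟨p, hp, hpG⟩ := hg.sq
  have hsub : Pol1 G ⊆ cloneGen (insert f (Pol1 G)) := (subset_insert _ _).trans (subset_gen _)
  have hcs : CS (cloneGen (insert f (Pol1 G))) := ⟨isClone_gen _, fun γ => hsub (hperm γ)⟩
  refine gen_all hreg hcs.cl (fun F => ?_) (hsub hpG) hp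
  refine mainT' hreg hcs (hsub hpG) (PC.not_AU.2 (hp.not_AU hreg)) (fun G' hG' h => ?_) F
  by_cases hGG : G = G'
  · subst hGG
    exact hf (h (subset_gen _ (mem_insert _ _)))
  · exact hne G G' hG hG' hGG (hsub.trans h)

end fwd
end PC

namespace PC
open Set Function

section good
variable {X : Type u}

def bad (f : X → X) : Set X := {y | Lg X (f ⁻¹' {y})}

theorem mem_A {f : X → X} : f ∈ monA X ↔ Sm X (bad f) := by
  simp only [monA, Set.mem_ofPred_eq, not_lt]; rfl
theorem mem_B {f : X → X} : f ∈ monB X ↔ ∀ y, Sm X (f ⁻¹' {y}) := Iff.rfl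
theorem mem_E {f : X → X} : f ∈ monE X ↔ Sm X (range f)ᶜ := Iff.rfl
theorem mem_F {f : X → X} : f ∈ monF X ↔ Sm X (range f)ᶜ ∨ ∃ c, ∀ x, f x = c := Iff.rfl
theorem mem_G {f : X → X} {l} : f ∈ monG X l ↔ ∀ A : Set X, #A = l → l ≤ #((f '' Aᶜ)ᶜ : Set X) := Iff.rfl

variable (hreg : (#X).IsRegular)
include hreg

theorem B_sub_A {f : X → X} (h : f ∈ monB X) : f ∈ monA X := by
  rw [mem_A]
  refine (sm_finite hreg finite_empty).mono ?_
  intro y hy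
  exact absurd (h y) (not_sm.2 hy)

theorem inj_B {f : X → X} (h : Injective f) : f ∈ monB X := fun y =>
  sm_finite hreg ((finite_singleton y).preimage h.injOn)

theorem surj_E {f : X → X} (h : Surjective f) : f ∈ monE X := by
  rw [mem_E, h.range_eq, compl_univ]
  exact sm_finite hreg finite_empty

theorem LF_notA {t : X → X} (ht : LF X t) (h : Lg X (range t)) : t ∉ monA X := by
  rw [mem_A, not_sm]
  refine h.mono ?_
  rintro _ ⟨x, rfl⟩
  exact ht x

theorem col_notE {t : X → X} (h : Lg X (range t)ᶜ) : t ∉ monE X := by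
  rw [mem_E, not_sm]; exact h

theorem col_notF {t : X → X} (h : Lg X (range t)ᶜ) (h' : ∀ c, ∃ x, t x ≠ c) : t ∉ monF X := by
  rw [mem_F]; push Not; exact ⟨h, h'⟩

omit hreg in
theorem col_G {t : X → X} (h : Lg X (range t)ᶜ) {l} (hl : l ≤ #X) : t ∈ monG X l := fun A _ =>
  hl.trans (h.mono (compl_subset_compl.2 (image_subset_range _ _)))

theorem sec_notG {t φ : X → X} (h : ∀ x, t (φ x) = x) (hφ : Lg X (range φ)ᶜ) {l} (h1 : 1 ≤ l) (hl : l ≤ #X) :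
    t ∉ monG X l := by
  intro ht
  obtain ⟨z, hz, hzl, -⟩ := exists_sub hreg hl (hl.trans hφ)
  have := ht z hzl
  have h2 : (t '' zᶜ)ᶜ = ∅ := by
    rw [compl_empty_iff, eq_univ_iff_forall]
    exact fun x => ⟨φ x, fun hx => hz hx ⟨x, rfl⟩, h x⟩
  rw [h2] at this
  simp at this
  simp [this] at h1

theorem LF_notG {t : X → X} (ht : LF X t) (hr : range t = Set.univ) {l} (h1 : 1 ≤ l) (hl : l ≤ #X) :
    t ∉ monG X l := by
  obtain ⟨φ, -, h2, h3⟩ := ht.lift hreg id (by simp [hr])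
  exact sec_notG hreg h3 h2 h1 hl

theorem exists_LFs : ∃ t : X → X, LF X t ∧ range t = Set.univ := by
  have hne := (inf hreg).nonempty
  exact exists_LF hreg (univ : Set X) univ_nonempty

theorem good_A : Good (monA X) where
  perm γ := B_sub_A hreg (inj_B hreg γ.injective)
  comp f hf g hg := by
    rw [mem_A] at *
    refine (Sm.union hreg hf (hg.image f)).mono ?_
    intro y hy
    by_contra hcon
    simp only [mem_union, not_or] at hcon
    refine not_sm.2 hy ((sm_biUnion hreg (s := f ⁻¹' {y}) (t := fun z => g ⁻¹' {z}) (not_lg.1 hcon.1) (fun z hz => ?_)).mono ?_)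
    · rw [← not_lg]
      exact fun h => hcon.2 ⟨z, h, hz⟩
    · intro x hx
      simp only [mem_iUnion]
      exact ⟨g x, hx, rfl⟩
  ne := by
    obtain ⟨t, h1, h2⟩ := exists_LFs hreg
    exact ⟨t, LF_notA hreg h1 (by rw [h2]; exact lg_univ rfl)⟩
  sq := by
    obtain ⟨q, hq, -⟩ := exists_inj2 hreg
    refine ⟨q, ⟨id, hq⟩, fun g hg => ?_⟩
    have h0 := mem_A.1 (hg (0 : Fin 2))
    have h1 := mem_A.1 (hg (1 : Fin 2))
    rw [mem_A]
    have : Sm X (bad (g (0 : Fin 2)) ×ˢ bad (g (1 : Fin 2))) := by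
      rw [Sm, mk_setProd]; simpa using mul_lt_of_lt hreg.aleph0_le h0 h1
    refine (this.image (fun v => q v.1 v.2)).mono ?_
    intro y hy
    obtain ⟨x, hx⟩ := Lg.nonempty hreg hy
    have key : ∀ z, q (g (0 : Fin 2) z) (g (1 : Fin 2) z) = y → g (0 : Fin 2) z = g (0 : Fin 2) x ∧ g (1 : Fin 2) z = g (1 : Fin 2) x := by
      intro z hz
      have := hq (a₁ := (g (0 : Fin 2) z, g (1 : Fin 2) z)) (a₂ := (g (0 : Fin 2) x, g (1 : Fin 2) x)) (hz.trans (Eq.symm hx))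
      simpa using this
    refine ⟨(g (0 : Fin 2) x, g (1 : Fin 2) x), ⟨?_, ?_⟩, hx⟩
    · exact Lg.mono hy (fun z hz => (key z hz).1)
    · exact Lg.mono hy (fun z hz => (key z hz).2)

theorem good_B : Good (monB X) where
  perm γ := inj_B hreg γ.injective
  comp f hf g hg y := by
    refine (sm_biUnion hreg (s := f ⁻¹' {y}) (t := fun z => g ⁻¹' {z}) (hf y) (fun z _ => hg z)).mono ?_
    intro x hx
    simp only [mem_iUnion]
    exact ⟨g x, hx, rfl⟩
  ne := by
    obtain ⟨c⟩ := (inf hreg).nonempty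
    refine ⟨fun _ => c, fun h => not_sm.2 ?_ (h c)⟩
    exact (lg_univ (rfl : #X = #X)).mono (fun _ _ => rfl)
  sq := by
    obtain ⟨q, hq, -⟩ := exists_inj2 hreg
    refine ⟨q, ⟨id, hq⟩, fun g hg y => ?_⟩
    by_cases hy : ∃ x, q (g (0 : Fin 2) x) (g (1 : Fin 2) x) = y
    · obtain ⟨x, hx⟩ := hy
      refine Sm.mono (hg (0 : Fin 2) (g (0 : Fin 2) x)) ?_
      intro z hz
      have := hq (a₁ := (g (0 : Fin 2) z, g (1 : Fin 2) z)) (a₂ := (g (0 : Fin 2) x, g (1 : Fin 2) x)) (Eq.trans hz (Eq.symm hx))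
      simp only [Prod.mk.injEq] at this
      exact this.1
    · refine (sm_finite hreg finite_empty).mono ?_
      intro z hz
      exact hy ⟨z, hz⟩

theorem E_comp {f g : X → X} (hf : f ∈ monE X) (hg : g ∈ monE X) : f ∘ g ∈ monE X := by
  rw [mem_E] at *
  refine (Sm.union hreg hf (hg.image f)).mono ?_
  intro y hy
  by_contra hcon
  simp only [mem_union, not_or, notMem_compl_iff] at hcon
  obtain ⟨⟨x, rfl⟩, h2⟩ := hcon
  refine h2 ⟨x, ?_, rfl⟩
  rintro ⟨z, rfl⟩
  exact hy ⟨z, rfl⟩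

omit hreg in
theorem lg_const_col (hreg : (#X).IsRegular) (c : X) : Lg X (range (fun _ : X => c))ᶜ := by
  refine lg_compl hreg rfl (sm_finite hreg ((finite_singleton c).subset ?_))
  rintro _ ⟨_, rfl⟩; rfl

theorem half : ∃ U : Set X, Lg X U ∧ Lg X Uᶜ := by
  obtain ⟨j, h1, h2⟩ := exists_inj hreg
  exact ⟨range j, lg_of_inj le_rfl j h1 (fun x => ⟨x, rfl⟩), h2⟩

/-- the binary operation for `E`, `F` -/
theorem sqEF : ∃ p : X → X → X, ISq p ∧ ∃ U : Set X, ∃ s : X → X, (∀ y, ∃ x ∈ U, s x = y) ∧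
    (∀ x ∈ U, ∀ y, p x y = s x) ∧ (∀ x ∉ U, ∀ y ∈ U, p x y = s y) := by
  classical
  obtain ⟨U, hU, hV⟩ := half hreg
  obtain ⟨e⟩ := exists_equiv rfl hU
  obtain ⟨e'⟩ := exists_equiv rfl hV
  have hne := (inf hreg).nonempty
  obtain ⟨q, hq, -⟩ := exists_inj2 hreg
  let s : X → X := fun x => if h : x ∈ U then e.symm ⟨x, h⟩ else x
  refine ⟨fun x y => if x ∈ U then s x else if y ∈ U then s y else q x y, ⟨fun x => e' x, ?_⟩, U, s, ?_, ?_, ?_⟩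
  · intro a b hab
    have : ∀ x, (e' x : X) ∉ U := fun x => (e' x).2
    simp only [this, if_false] at hab
    have := hq (a₁ := (_, _)) (a₂ := (_, _)) hab
    simp only [Prod.mk.injEq, Subtype.coe_inj, e'.apply_eq_iff_eq] at this
    exact Prod.ext this.1 this.2
  · intro y
    exact ⟨e y, (e y).2, by simp [s]⟩
  · intro x hx y; simp [hx]
  · intro x hx y hy; simp [hx, hy]

omit hreg in
theorem E_of_half {U : Set X} {s g h : X → X} (hs : ∀ y, ∃ x ∈ U, s x = y) (hg : g ∈ monE X)
    (hh : ∀ z, g z ∈ U → h z = s (g z)) : h ∈ monE X := by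
  rw [mem_E] at *
  refine (hg.image s).mono ?_
  intro y hy
  obtain ⟨x, hx, rfl⟩ := hs y
  refine ⟨x, ?_, rfl⟩
  rintro ⟨z, rfl⟩
  exact hy ⟨z, hh z hx⟩

theorem good_E : Good (monE X) where
  perm γ := surj_E hreg γ.surjective
  comp f hf g hg := E_comp hreg hf hg
  ne := by
    obtain ⟨c⟩ := (inf hreg).nonempty
    exact ⟨fun _ => c, col_notE hreg (lg_const_col hreg c)⟩
  sq := by
    obtain ⟨p, hp, U, s, h1, h2, h3⟩ := sqEF hreg
    exact ⟨p, hp, fun g hg => E_of_half h1 (hg (0 : Fin 2)) (fun z hz => h2 _ hz _)⟩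

theorem two_notF : ∃ f : X → X, f ∉ monF X ∧ f ∈ monA X := by
  classical
  have := inf hreg
  obtain ⟨a, b, hab⟩ := exists_pair_ne X
  have hr : range (fun x => if x = a then a else b) ⊆ {a, b} := by
    rintro _ ⟨x, rfl⟩
    by_cases h : x = a <;> simp [h]
  refine ⟨fun x => if x = a then a else b, col_notF hreg ?_ ?_, ?_⟩
  · exact lg_compl hreg rfl ((sm_finite hreg (by simp : ({a, b} : Set X).Finite)).mono hr)
  · intro c
    by_cases hc : c = a
    · exact ⟨b, by simp [hc, hab.symm]⟩
    · exact ⟨a, by simpa using Ne.symm hc⟩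
  · rw [mem_A]
    refine (sm_finite hreg (by simp : ({a, b} : Set X).Finite)).mono (fun y hy => ?_)
    obtain ⟨x, hx⟩ := Lg.nonempty hreg hy
    exact hr ⟨x, hx⟩

theorem good_F : Good (monF X) where
  perm γ := .inl (surj_E hreg γ.surjective)
  comp f hf g hg := by
    rcases hf with hf | ⟨c, hc⟩
    · rcases hg with hg | ⟨d, hd⟩
      · exact .inl (E_comp hreg hf hg)
      · exact .inr ⟨f d, fun x => by simp [hd]⟩
    · exact .inr ⟨c, fun x => by simp [hc]⟩
  ne := (two_notF hreg).imp fun _ h => h.1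
  sq := by
    obtain ⟨p, hp, U, s, h1, h2, h3⟩ := sqEF hreg
    refine ⟨p, hp, fun g hg => ?_⟩
    rcases hg (0 : Fin 2) with h | ⟨c, hc⟩
    · exact .inl (E_of_half h1 h (fun z hz => h2 _ hz _))
    · by_cases hcU : c ∈ U
      · exact .inr ⟨s c, fun x => by simp [bin, hc, h2 c hcU]⟩
      · rcases hg (1 : Fin 2) with h | ⟨d, hd⟩
        · exact .inl (E_of_half h1 h (fun z hz => by simpa [bin, hc] using h3 c hcU _ hz))
        · exact .inr ⟨p c d, fun x => by simp [bin, hc, hd]⟩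

theorem good_G {l : Cardinal.{u}} (h1 : 1 ≤ l) (hl : l ≤ #X) : Good (monG X l) where
  perm γ A hA := by
    rw [image_compl_eq γ.bijective, compl_compl, mk_image_eq γ.injective, hA]
  comp f hf g hg A hA := by
    obtain ⟨z, hz, hzl, -⟩ := exists_sub hreg hl (hg A hA)
    refine (hf z hzl).trans (mk_le_mk_of_subset (compl_subset_compl.2 ?_))
    rw [image_comp]
    exact image_mono (subset_compl_comm.1 hz)
  ne := by
    obtain ⟨t, h2, h3⟩ := exists_LFs hreg
    exact ⟨t, LF_notG hreg h2 h3 h1 hl⟩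
  sq := by
    obtain ⟨q, hq, hq'⟩ := exists_inj2 hreg
    refine ⟨q, ⟨id, hq⟩, fun g hg => col_G (hq'.mono (compl_subset_compl.2 ?_)) hl⟩
    rintro _ ⟨x, rfl⟩
    exact ⟨(_, _), rfl⟩

theorem good_all (G : Set (X → X)) (h : Lst X G) : Good G := by
  rcases h with rfl | rfl | rfl | rfl | ⟨l, h1, h2, rfl⟩
  exacts [good_A hreg, good_B hreg, good_E hreg, good_F hreg, good_G hreg h1 h2]

end good
end PC

namespace PC
open Set Function

section sep
variable {X : Type u}

theorem pol_bin {G : Set (X → X)} {p : X → X → X} :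
    bin p ∈ Pol1 G ↔ ∀ g1 ∈ G, ∀ g2 ∈ G, (fun x => p (g1 x) (g2 x)) ∈ G := by
  constructor
  · intro h g1 h1 g2 h2
    have := h (![g1, g2] : Fin 2 → X → X) (by
      intro i
      show (![g1, g2] : Fin 2 → X → X) i ∈ G
      change Fin 2 at i
      fin_cases i
      · exact h1
      · exact h2)
    exact this
  · intro h g hg
    exact h _ (hg (0 : Fin 2)) _ (hg (1 : Fin 2))

theorem sepU {G G' : Set (X → X)} (hG : Good G) (hG' : Good G') {h : X → X} (h1 : h ∈ G) (h2 : h ∉ G') :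
    ¬ Pol1 G ⊆ Pol1 G' := fun hs => h2 (pol_unary hG'.id (hs (unary_pol hG.comp h1)))

theorem sepB {G G' : Set (X → X)} {p : X → X → X} (h1 : bin p ∈ Pol1 G) {g1 g2 : X → X}
    (hg1 : g1 ∈ G') (hg2 : g2 ∈ G') (h2 : (fun x => p (g1 x) (g2 x)) ∉ G') :
    ¬ Pol1 G ⊆ Pol1 G' := fun hs => h2 (pol_bin.1 (hs h1) _ hg1 _ hg2)

variable (hreg : (#X).IsRegular)
include hreg

theorem const_A (c : X) : (fun _ => c) ∈ monA X := by
  rw [mem_A]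
  refine (sm_finite hreg (finite_singleton c)).mono (fun y hy => ?_)
  obtain ⟨x, hx⟩ := Lg.nonempty hreg hy
  exact Eq.symm hx

theorem halfbij {l : Cardinal.{u}} (h1 : 1 ≤ l) (hl : l ≤ #X) : ∃ t, t ∈ monB X ∧ t ∉ monG X l := by
  obtain ⟨e⟩ := Cardinal.eq.1 (card_sum hreg (rfl : #X = #X) rfl)
  refine ⟨fun x => Sum.elim id id (e.symm x), fun y => ?_, sec_notG hreg (φ := fun x => e (.inl x)) (by simp) ?_ h1 hl⟩
  · refine (sm_finite hreg (by simp : ({e (.inl y), e (.inr y)} : Set X).Finite)).mono ?_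
    intro x hx
    obtain ⟨z, rfl⟩ := e.surjective x
    rcases z with z | z
    · left; simpa using hx
    · right; simpa using hx
  · refine lg_of_inj le_rfl (fun x => e (.inr x)) (fun a b h => by simpa using h) ?_
    rintro x ⟨y, hy⟩
    simp at hy

theorem sep_BA : ¬ Pol1 (monB X) ⊆ Pol1 (monA X) := by
  classical
  obtain ⟨c⟩ := (inf hreg).nonempty
  obtain ⟨s, hs, hsr⟩ := exists_LFs hreg
  obtain ⟨q, hq, -⟩ := exists_inj2 hreg
  refine sepB (p := fun x y => if y = c then s x else q x y) (g1 := id) (g2 := fun _ => c) ?_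
    (good_A hreg).id (const_A hreg c) ?_
  · rw [pol_bin]
    intro g1 h1 g2 h2 w
    by_cases hx : ∃ x, q (g1 x) (g2 x) = w
    · obtain ⟨x, hx⟩ := hx
      refine (Sm.union hreg (h2 c) (h1 (g1 x))).mono (fun z hz => ?_)
      by_cases hc : g2 z = c
      · exact .inl hc
      · right
        simp only [mem_preimage, hc, if_false, mem_singleton_iff] at hz
        have := hq (a₁ := (g1 z, g2 z)) (a₂ := (g1 x, g2 x)) (hz.trans hx.symm)
        exact congrArg Prod.fst this
    · refine Sm.mono (h2 c) (fun z hz => ?_)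
      by_contra hc
      have hc : g2 z ≠ c := hc
      simp only [mem_preimage, hc, if_false, mem_singleton_iff] at hz
      exact hx ⟨z, hz⟩
  · simp only [if_true, id]
    exact LF_notA hreg hs (by rw [hsr]; exact lg_univ rfl)

theorem sep_EF : ¬ Pol1 (monE X) ⊆ Pol1 (monF X) := by
  classical
  obtain ⟨U, hU, hV⟩ := half hreg
  obtain ⟨v, hv⟩ := Lg.nonempty hreg hV
  obtain ⟨e⟩ := exists_equiv rfl hU
  obtain ⟨r, hr, -⟩ := two_notF hreg
  let s : X → X := fun x => if h : x ∈ U then e.symm ⟨x, h⟩ else x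
  refine sepB (p := fun x y => if y ∈ U then s y else r x) (g1 := id) (g2 := fun _ => v) ?_
    (good_F hreg).id (.inr ⟨v, fun _ => rfl⟩) ?_
  · rw [pol_bin]
    intro g1 h1 g2 h2
    refine E_of_half (U := U) (s := s) (fun y => ⟨e y, (e y).2, by simp [s]⟩) h2 (fun z hz => by simp [hz])
  · have hv : v ∉ U := hv
    simpa only [hv, if_false, id] using hr

theorem sep_G1 {l m : Cardinal.{u}} (h1 : 1 ≤ l) (hlm : l < m) (hm : m ≤ #X) :
    ¬ Pol1 (monG X l) ⊆ Pol1 (monG X m) := by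
  classical
  have hl := hlm.le.trans hm
  obtain ⟨z, -, hzl, hz⟩ := exists_sub hreg (s := univ) hl (by simpa using hl)
  obtain ⟨w, hw⟩ := Lg.nonempty hreg hz
  obtain ⟨t, ht, htr⟩ := exists_LF hreg zᶜ ⟨w, hw⟩
  refine sepU (good_G hreg h1 hl) (good_G hreg (h1.trans hlm.le) hm) (h := t) ?_ ?_
  · intro A _
    rw [← hzl]
    refine mk_le_mk_of_subset (subset_compl_comm.1 ?_)
    rw [← htr]
    exact image_subset_range _ _
  · intro h
    obtain ⟨φ, -, hφ, hs⟩ := ht.lift hreg (fun x => if x ∈ z then w else x) (by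
      intro x
      rw [htr]
      by_cases hx : x ∈ z
      · simpa [hx] using hw
      · simpa [hx] using hx)
    obtain ⟨A, hA, hAl, -⟩ := exists_sub hreg hm (hm.trans hφ)
    have := h A hAl
    refine absurd (this.trans (mk_le_mk_of_subset (t := z) ?_)) (by rw [hzl, not_le]; exact hlm)
    intro x hx
    by_contra hxz
    refine hx ⟨φ x, fun h => hA h ⟨x, rfl⟩, ?_⟩
    rw [hs]; simp [hxz]

theorem sep_G2 {l m : Cardinal.{u}} (h1 : 1 ≤ m) (hlm : m < l) (hl : l ≤ #X) :
    ¬ Pol1 (monG X l) ⊆ Pol1 (monG X m) := by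
  classical
  have hm := hlm.le.trans hl
  obtain ⟨A, -, hAm, hA⟩ := exists_sub hreg (s := univ) hm (by simpa using hm)
  obtain ⟨U, hU, hV⟩ := half hreg
  obtain ⟨z0⟩ := (inf hreg).nonempty
  have : Nonempty (Aᶜ : Set X) := (Lg.nonempty hreg hA).to_subtype
  obtain ⟨e⟩ := Cardinal.eq.1 (card_prod hreg (eq_card rfl hU) (mk_set_le Aᶜ)).symm
  obtain ⟨t, ht, htr⟩ := exists_LFs hreg
  let p : X → X → X := fun x y => if h : x ∈ U ∧ y ∈ Aᶜ then e.symm (⟨x, h.1⟩, ⟨y, h.2⟩) else z0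
  refine sepB (p := p) (g1 := fun x => (e (t x)).1) (g2 := fun x => (e (t x)).2) ?_ ?_ ?_ ?_
  · rw [pol_bin]
    intro g1 h1 g2 h2 B hB
    have h3 := h2 B hB
    obtain ⟨y, hy, hyA⟩ : ∃ y, y ∈ (g2 '' Bᶜ)ᶜ ∧ y ∈ Aᶜ := by
      by_contra! hcon
      refine absurd (h3.trans (mk_le_mk_of_subset (t := A) ?_)) (by rw [hAm, not_le]; exact hlm)
      intro y hy
      simpa using hcon y hy
    refine hl.trans ?_
    have h4 : Lg X (range (fun u : U => e.symm (u, ⟨y, hyA⟩))) :=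
      lg_of_inj hU _ (fun a b hab => by simpa using hab) (fun u => ⟨u, rfl⟩)
    refine (Lg.diff hreg h4 (sm_finite hreg (finite_singleton z0))).mono ?_
    rintro _ ⟨⟨u, rfl⟩, hu⟩ ⟨x, hx, hxe⟩
    simp only [p] at hxe
    split_ifs at hxe with h
    · simp only [EmbeddingLike.apply_eq_iff_eq, Prod.mk.injEq, Subtype.mk.injEq] at hxe
      exact hy ⟨x, hx, hxe.2⟩
    · exact hu hxe.symm
  · refine col_G (hV.mono (compl_subset_compl.2 ?_)) hm
    rintro _ ⟨x, rfl⟩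
    exact (e (t x)).1.2
  · intro B _
    rw [← hAm]
    refine mk_le_mk_of_subset (subset_compl_comm.1 ?_)
    rintro _ ⟨x, -, rfl⟩
    exact (e (t x)).2.2
  · convert LF_notG hreg ht htr h1 hm using 2
    funext x
    have h : ((e (t x)).1 : X) ∈ U ∧ ((e (t x)).2 : X) ∈ Aᶜ := ⟨(e (t x)).1.2, (e (t x)).2.2⟩
    simp only [p, dif_pos h]
    simp

theorem sep (G G' : Set (X → X)) (hG : Lst X G) (hG' : Lst X G') (hne : G ≠ G') :
    ¬ Pol1 G ⊆ Pol1 G' := by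
  have g := good_all hreg G hG
  have g' := good_all hreg G' hG'
  obtain ⟨c⟩ := (inf hreg).nonempty
  obtain ⟨s, hs, hsr⟩ := exists_LFs hreg
  have sE : s ∈ monE X := surj_E hreg (range_eq_univ.1 hsr)
  have sA : s ∉ monA X := LF_notA hreg hs (by rw [hsr]; exact lg_univ rfl)
  have sB : s ∉ monB X := fun h => sA (B_sub_A hreg h)
  have cE := col_notE hreg (lg_const_col hreg c)
  have cB : (fun _ => c) ∉ monB X := fun h =>
    not_sm.2 ((lg_univ (rfl : #X = #X)).mono (fun _ _ => rfl)) (h c)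
  obtain ⟨r, rF, rA⟩ := two_notF hreg
  have rE : r ∉ monE X := fun h => rF (.inl h)
  obtain ⟨j, hj, hjl⟩ := exists_inj hreg
  have jB := inj_B hreg hj
  have jE := col_notE hreg hjl
  have jF : j ∉ monF X := by
    refine col_notF hreg hjl (fun c => ?_)
    by_contra! hc
    have := inf hreg
    obtain ⟨a, b, hab⟩ := exists_pair_ne X
    exact hab (hj ((hc a).trans (hc b).symm))
  obtain ⟨U, hU, hV⟩ := half hreg
  obtain ⟨t, ht, htr⟩ := exists_LF hreg U (Lg.nonempty hreg hU)
  have tA : t ∉ monA X := LF_notA hreg ht (by rw [htr]; exact hU)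
  have tB : t ∉ monB X := fun h => tA (B_sub_A hreg h)
  have htl : Lg X (range t)ᶜ := by rw [htr]; exact hV
  have tE := col_notE hreg htl
  have tF : t ∉ monF X := by
    refine col_notF hreg htl (fun c => ?_)
    by_contra! hc
    refine not_sm.2 hU ((sm_finite hreg (finite_singleton c)).mono ?_)
    rw [← htr]
    rintro _ ⟨x, rfl⟩
    exact hc x
  rcases hG with rfl | rfl | rfl | rfl | ⟨l, h1, h2, rfl⟩ <;>
    rcases hG' with rfl | rfl | rfl | rfl | ⟨m, h1', h2', rfl⟩
  · exact absurd rfl hne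
  · exact sepU g g' (const_A hreg c) cB
  · exact sepU g g' (const_A hreg c) cE
  · exact sepU g g' rA rF
  · obtain ⟨h, hB, hn⟩ := halfbij hreg h1' h2'
    exact sepU g g' (B_sub_A hreg hB) hn
  · exact sep_BA hreg
  · exact absurd rfl hne
  · exact sepU g g' jB jE
  · exact sepU g g' jB jF
  · obtain ⟨h, hB, hn⟩ := halfbij hreg h1' h2'
    exact sepU g g' hB hn
  · exact sepU g g' sE sA
  · exact sepU g g' sE sB
  · exact absurd rfl hne
  · exact sep_EF hreg
  · exact sepU g g' sE (LF_notG hreg hs hsr h1' h2')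
  · exact sepU g g' (.inl sE) sA
  · exact sepU g g' (.inl sE) sB
  · exact sepU g g' (.inr ⟨c, fun _ => rfl⟩) cE
  · exact absurd rfl hne
  · exact sepU g g' (.inl sE) (LF_notG hreg hs hsr h1' h2')
  · exact sepU g g' (col_G htl h2) tA
  · exact sepU g g' (col_G htl h2) tB
  · exact sepU g g' (col_G htl h2) tE
  · exact sepU g g' (col_G htl h2) tF
  · rcases lt_trichotomy l m with h | h | h
    · exact sep_G1 hreg h1 h h2'
    · exact absurd (by rw [h]) hne
    · exact sep_G2 hreg h1' h h2

theorem final (C : Set (Ops X)) :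
    (IsPrecompleteClone C ∧ (∀ γ : Equiv.Perm X, unaryOp ⇑γ ∈ C) ∧
      ¬ (∀ F : X → X, unaryOp F ∈ C)) ↔ ∃ G, Lst X G ∧ C = Pol1 G := by
  constructor
  · rintro ⟨h1, h2, h3⟩
    exact forward hreg (good_all hreg) h1 h2 h3
  · rintro ⟨G, hG, rfl⟩
    exact backward hreg (good_all hreg) (sep hreg) hG

end sep
end PC

/-- **Heindorf; Pinsker**: on a set of regular cardinality, the precomplete clones
containing all permutations but not all unary operations are exactly the polymorphism
clones of the monoids `A, B, E, F` and `G_λ` (`1 ≤ λ ≤ |X|`). -/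
theorem stmt10 {X : Type u} (hreg : (#X).IsRegular) (C : Set (Ops X)) :
    (IsPrecompleteClone C ∧ (∀ γ : Equiv.Perm X, unaryOp ⇑γ ∈ C) ∧
      ¬ (∀ F : X → X, unaryOp F ∈ C)) ↔
    ∃ G : Set (X → X),
      (G = monA X ∨ G = monB X ∨ G = monE X ∨ G = monF X ∨
        ∃ lam : Cardinal.{u}, 1 ≤ lam ∧ lam ≤ #X ∧ G = monG X lam) ∧
      C = Pol1 G := by
  exact PC.final hreg C
end

section
/- Let X be a set of regular infinite cardinality ℵ_α. Then the number of precomplete clones on X that contain all permutations but not all unary operations equals max(|α|, ℵ0). -/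
universe u v

open Cardinal

namespace Pk
open Set

variable {X : Type u}
set_option linter.unusedVariables false

def Pol1 (M : Set (X → X)) : Set (Ops X) :=
  {f | ∀ g : Fin (f.1 + 1) → X → X, (∀ i, g i ∈ M) → (fun x => f.2 (fun i => g i x)) ∈ M}

def PL (X : Type u) (l : Cardinal.{u}) : Set (Ops X) :=
  {f | ∀ D : Fin (f.1 + 1) → Set X, (∀ i, l ≤ #((D i)ᶜ : Set X)) →
    l ≤ #((f.2 '' {x | ∀ i, x i ∈ D i})ᶜ : Set X)}

def SA (X : Type u) : Set (X → X) := {h | #({y | #(h ⁻¹' {y}) = #X} : Set X) < #X}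
def SB (X : Type u) : Set (X → X) := {h | ∀ y, #(h ⁻¹' {y}) < #X}
def SE (X : Type u) : Set (X → X) := {h | #((range h)ᶜ : Set X) < #X}
def SF (X : Type u) : Set (X → X) := {h | #((range h)ᶜ : Set X) < #X ∨ ∀ x y, h x = h y}
def SN (X : Type u) : Set (X → X) := {h | #({x | ∀ x', h x' = h x → x' = x} : Set X) < #X}
def ST (X : Type u) : Set (X → X → X) :=
  {g | (∀ x, #(range (g x)) < #X) ∨ ∀ y, #(range fun x => g x y) < #X}

theorem Pol1_clone (M : Set (X → X)) : IsClone (Pol1 M) := by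
  refine ⟨fun n k g hg => hg k, fun n m f hf g hg k hk => ?_⟩
  exact hf (fun i x => g i (fun j => k j x)) (fun i => hg i k hk)

theorem Pol2_clone (M : Set (X → X → X)) : IsClone (Pol2 M) := by
  refine ⟨fun n k g hg => hg k, fun n m f hf g hg k hk => ?_⟩
  exact hf (fun i x y => g i (fun j => k j x y)) (fun i => hg i k hk)

theorem PL_clone (l : Cardinal.{u}) : IsClone (PL X l) := by
  refine ⟨fun n k D hD => ?_, fun n m f hf g hg D hD => ?_⟩
  · refine (hD k).trans (mk_le_mk_of_subset ?_)
    rintro x hx ⟨y, hy, rfl⟩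
    exact hx (hy k)
  · refine (hf (fun i => g i '' {x | ∀ i, x i ∈ D i}) (fun i => hg i D hD)).trans
      (mk_le_mk_of_subset ?_)
    rintro x hx ⟨y, hy, rfl⟩
    exact hx ⟨fun i => g i y, fun i => ⟨y, hy, rfl⟩, rfl⟩

theorem mem_Pol1_unary {M : Set (X → X)} {F : X → X} (hid : id ∈ M)
    (h : unaryOp F ∈ Pol1 M) : F ∈ M := h (fun _ => id) (fun _ => hid)

theorem cloneGen_clone (F : Set (Ops X)) : IsClone (cloneGen F) := by
  refine ⟨fun n k => ?_, fun n m f hf g hg => ?_⟩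
  · rintro D ⟨hD, _⟩; exact hD.1 n k
  · rintro D ⟨hD, hF⟩
    exact hD.2 n m f (hf D ⟨hD, hF⟩) g (fun i => hg i D ⟨hD, hF⟩)

theorem subset_cloneGen (F : Set (Ops X)) : F ⊆ cloneGen F := by
  rintro f hf D ⟨_, hF⟩; exact hF hf

theorem cloneGen_sub {F D : Set (Ops X)} (hD : IsClone D) (h : F ⊆ D) : cloneGen F ⊆ D := by
  intro f hf; exact hf D ⟨hD, h⟩

theorem eq_of_precomplete {C P : Set (Ops X)} (hC : IsPrecompleteClone C) (hP : IsClone P)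
    (hPu : P ≠ Set.univ) (h : C ⊆ P) : C = P := by
  refine h.antisymm fun f hf => ?_
  by_contra hfC
  apply hPu
  have := hC.2.2 f hfC
  have h2 : cloneGen (insert f C) ⊆ P := cloneGen_sub hP (insert_subset hf h)
  rw [this] at h2
  exact Set.univ_subset_iff.1 h2

/-! ### unary functions on other domains -/

def U (C : Set (Ops X)) (W : Type u) (h : W → X) : Prop := ∃ e : X ≃ W, unaryOp (h ∘ e) ∈ C

variable {C : Set (Ops X)}

theorem comp_unary (hC : IsClone C) {F G : X → X} (hF : unaryOp F ∈ C) (hG : unaryOp G ∈ C) :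
    unaryOp (F ∘ G) ∈ C := by
  exact hC.2 0 0 _ hF (fun _ x => G (x 0)) (fun _ => hG)

theorem comp_op_unary (hC : IsClone C) {n : ℕ} {f : (Fin (n+1) → X) → X} (hf : (⟨n, f⟩ : Ops X) ∈ C)
    {h : Fin (n+1) → X → X} (hh : ∀ i, unaryOp (h i) ∈ C) :
    unaryOp (fun x => f (fun i => h i x)) ∈ C :=
  hC.2 n 0 f hf (fun i x => h i (x 0)) hh

theorem U_all (hC : IsClone C) (hS : ∀ γ : Equiv.Perm X, unaryOp ⇑γ ∈ C) {W : Type u} {h : W → X}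
    (hU : U C W h) (e : X ≃ W) : unaryOp (h ∘ e) ∈ C := by
  obtain ⟨e0, h0⟩ := hU
  have := comp_unary hC h0 (hS (e.trans e0.symm))
  convert this using 2
  ext x; simp

theorem U_reparam (hC : IsClone C) (hS : ∀ γ : Equiv.Perm X, unaryOp ⇑γ ∈ C) {W W' : Type u}
    {h : W → X} (hU : U C W h) (e : W' ≃ W) : U C W' (h ∘ e) := by
  obtain ⟨e0, h0⟩ := hU
  refine ⟨e0.trans e.symm, ?_⟩
  convert h0 using 2
  ext x; simp

theorem U_comp (hC : IsClone C) (hS : ∀ γ : Equiv.Perm X, unaryOp ⇑γ ∈ C) {W : Type u}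
    {n : ℕ} {f : (Fin (n+1) → X) → X} (hf : (⟨n, f⟩ : Ops X) ∈ C)
    {h : Fin (n+1) → W → X} (hh : ∀ i, U C W (h i)) :
    U C W (fun x => f (fun i => h i x)) := by
  obtain ⟨e0, h0⟩ := hh 0
  exact ⟨e0, comp_op_unary hC hf (fun i => U_all hC hS (hh i) e0)⟩

theorem U_unary (hC : IsClone C) {W : Type u}
    {F : X → X} (hF : unaryOp F ∈ C) {h : W → X} (hh : U C W h) : U C W (F ∘ h) := by
  obtain ⟨e0, h0⟩ := hh
  exact ⟨e0, comp_unary hC hF h0⟩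

theorem U_equiv (hC : IsClone C) {W : Type u} (e : W ≃ X) : U C W e := by
  refine ⟨e.symm, ?_⟩
  have : (⇑e ∘ ⇑e.symm) = id := by ext; simp
  rw [this]
  exact hC.1 0 0


theorem U_of_mem {F : X → X} (h : unaryOp F ∈ C) : U C X F := ⟨Equiv.refl X, h⟩

theorem mem_of_U (hC : IsClone C) (hS : ∀ γ : Equiv.Perm X, unaryOp ⇑γ ∈ C) {F : X → X}
    (h : U C X F) : unaryOp F ∈ C := U_all hC hS h (Equiv.refl X)

theorem exists_fib_equiv {W W' : Type u} {Y : Type u} {u : W → Y} {h : W' → Y}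
    (hf : ∀ y, #(h ⁻¹' {y}) = #(u ⁻¹' {y})) : ∃ e : W' ≃ W, u ∘ e = h := by
  have : ∀ y, Nonempty ((h ⁻¹' {y} : Set W') ≃ (u ⁻¹' {y} : Set W)) := fun y =>
    Cardinal.eq.1 (hf y)
  let E := fun y => Classical.choice (this y)
  refine ⟨(Equiv.sigmaFiberEquiv h).symm.trans
    ((Equiv.sigmaCongrRight E).trans (Equiv.sigmaFiberEquiv u)), ?_⟩
  funext x
  exact (E (h x) ⟨x, rfl⟩).2

theorem U_fib (hC : IsClone C) (hS : ∀ γ : Equiv.Perm X, unaryOp ⇑γ ∈ C) {W W' : Type u}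
    {u : W → X} {h : W' → X} (hU : U C W u) (hf : ∀ y, #(h ⁻¹' {y}) = #(u ⁻¹' {y})) :
    U C W' h := by
  obtain ⟨e, rfl⟩ := exists_fib_equiv hf
  exact U_reparam hC hS hU e

end Pk

namespace Pk
open Set
set_option linter.unusedVariables false

theorem small_of_subset {Y : Type u} {κ : Cardinal.{u}} {A B : Set Y} (h : A ⊆ B) (hB : #B < κ) :
    #A < κ := (mk_le_mk_of_subset h).trans_lt hB

theorem large_of_subset {Y : Type u} {κ : Cardinal.{u}} (hY : #Y = κ) {A B : Set Y} (h : A ⊆ B)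
    (hA : #A = κ) : #B = κ :=
  le_antisymm ((mk_set_le _).trans hY.le) (hA ▸ mk_le_mk_of_subset h)

theorem small_union {Y : Type u} {κ : Cardinal.{u}} (hκ : ℵ₀ ≤ κ) {A B : Set Y} (hA : #A < κ)
    (hB : #B < κ) : #(A ∪ B : Set Y) < κ :=
  (mk_union_le A B).trans_lt (add_lt_of_lt hκ hA hB)

theorem large_diff {Y : Type u} {κ : Cardinal.{u}} (hκ : ℵ₀ ≤ κ) {A B : Set Y} (hA : #A = κ)
    (hB : #B < κ) : #(A \ B : Set Y) = κ := by
  refine le_antisymm (hA ▸ mk_le_mk_of_subset sdiff_subset) ?_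
  by_contra h
  have := small_union hκ (not_le.1 h) hB
  exact absurd (small_of_subset (A := A) (by intro x hx; by_cases x ∈ B <;> simp_all) this)
    (by rw [hA]; exact lt_irrefl _)

theorem split {Y : Type u} {S : Set Y} (hS : ℵ₀ ≤ #S) : ∃ A B : Set Y, Disjoint A B ∧ A ∪ B = S ∧
    #A = #S ∧ #B = #S := by
  have : #(S ⊕ S) = #S := by rw [mk_sum]; simp [add_eq_self hS]
  obtain ⟨e⟩ := Cardinal.eq.1 this
  have hi : Function.Injective (fun x : S ⊕ S => (e x : Y)) :=
    Subtype.val_injective.comp e.injective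
  refine ⟨range (fun s : S => (e (Sum.inl s) : Y)), range (fun s : S => (e (Sum.inr s) : Y)),
    ?_, ?_, ?_, ?_⟩
  · rw [Set.disjoint_left]
    rintro _ ⟨a, rfl⟩ ⟨b, hb⟩
    have := hi hb
    simp at this
  · ext y
    constructor
    · rintro (⟨a, rfl⟩ | ⟨a, rfl⟩) <;> exact Subtype.property _
    · intro hy
      rcases h : e.symm ⟨y, hy⟩ with a | a
      · left; exact ⟨a, by simp [← h]⟩
      · right; exact ⟨a, by simp [← h]⟩
  · exact mk_range_eq _ (hi.comp Sum.inl_injective)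
  · exact mk_range_eq _ (hi.comp Sum.inr_injective)

theorem equiv_extend {A B X : Type u} (m : A → X) (hm : Function.Injective m)
    (hB : #B = #((range m)ᶜ : Set X)) : ∃ e : A ⊕ B ≃ X, ∀ a, e (Sum.inl a) = m a := by
  classical
  obtain ⟨b⟩ := Cardinal.eq.1 hB
  refine ⟨(Equiv.sumCongr (Equiv.ofInjective m hm) b).trans (Equiv.Set.sumCompl (range m)), ?_⟩
  intro a
  simp

theorem perm_extend {X : Type u} (j : X → X) (S : Set X) (hj : InjOn j S)
    (h : #(Sᶜ : Set X) = #((j '' S)ᶜ : Set X)) : ∃ σ : Equiv.Perm X, ∀ x ∈ S, σ x = j x := by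
  classical
  obtain ⟨e, he⟩ := equiv_extend (A := S) (B := (Sᶜ : Set X)) (fun s => j s) hj.injective
    (by rw [h]; congr! 2; ext; simp)
  refine ⟨(Equiv.Set.sumCompl S).symm.trans e, fun x hx => ?_⟩
  simp [Equiv.Set.sumCompl_symm_apply_of_mem hx, he]

theorem perm_image {X : Type u} {E F : Set X} (h1 : #E = #F) (h2 : #(Eᶜ : Set X) = #(Fᶜ : Set X)) :
    ∃ σ : Equiv.Perm X, σ '' E = F := by
  classical
  obtain ⟨b⟩ := Cardinal.eq.1 h1
  obtain ⟨σ, hσ⟩ := perm_extend (fun x => if hx : x ∈ E then (b ⟨x, hx⟩ : X) else x) E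
    (by
      intro x hx y hy hxy
      simp only [hx, hy, dif_pos] at hxy
      have := b.injective (Subtype.ext hxy)
      simpa using this)
    (by
      rw [h2]; congr! 3; ext y; constructor
      · intro hy
        exact ⟨b.symm ⟨y, hy⟩, (b.symm ⟨y, hy⟩).2, by simp⟩
      · rintro ⟨x, hx, rfl⟩
        simp [hx])
  refine ⟨σ, ?_⟩
  ext y; constructor
  · rintro ⟨x, hx, rfl⟩
    rw [hσ x hx]; simp [hx]
  · intro hy
    refine ⟨b.symm ⟨y, hy⟩, (b.symm ⟨y, hy⟩).2, ?_⟩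
    rw [hσ _ (b.symm ⟨y, hy⟩).2]; simp

theorem large_compl_of_small {X : Type u} (hκ : ℵ₀ ≤ #X) {E : Set X} (hE : #E < #X) :
    #(Eᶜ : Set X) = #X := by
  have := large_diff (A := Set.univ) hκ mk_univ hE
  rwa [← Set.compl_eq_univ_sdiff] at this

/-- A permutation moving a small set into another set. -/
theorem perm_into {X : Type u} (hκ : ℵ₀ ≤ #X) {E F : Set X} (hE : #E < #X) (h : #E ≤ #F) :
    ∃ σ : Equiv.Perm X, σ '' E ⊆ F := by
  obtain ⟨G, hG, hG2⟩ := le_mk_iff_exists_subset.1 h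
  obtain ⟨σ, hσ⟩ := perm_image (E := E) (F := G) hG2.symm
    (by rw [large_compl_of_small hκ hE, large_compl_of_small hκ (hG2 ▸ hE)])
  exact ⟨σ, hσ ▸ hG⟩

theorem pigeon {Y T : Type u} {κ : Cardinal.{u}} (hκ : κ.IsRegular) {Z : Set Y} (hZ : #Z = κ)
    (g : Y → T) (h : #(g '' Z) < κ) : ∃ c, #(Z ∩ g ⁻¹' {c} : Set Y) = κ := by
  by_contra! hn
  have h1 : ∀ c, #(Z ∩ g ⁻¹' {c} : Set Y) < κ := fun c =>
    lt_of_le_of_ne (hZ ▸ mk_le_mk_of_subset inter_subset_left) (hn c)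
  have h2 : #(⋃ c ∈ g '' Z, (Z ∩ g ⁻¹' {c}) : Set Y) < κ :=
    (card_biUnion_lt_iff_forall_of_isRegular hκ h).2 (fun c _ => h1 c)
  have h3 : Z ⊆ ⋃ c ∈ g '' Z, (Z ∩ g ⁻¹' {c}) := by
    intro z hz
    simp only [mem_iUnion]
    exact ⟨g z, ⟨z, hz, rfl⟩, hz, rfl⟩
  exact absurd (small_of_subset h3 h2) (by rw [hZ]; exact lt_irrefl _)

theorem exists_section {Y T : Type u} (g : Y → T) (Z : Set Y) : ∃ Z' ⊆ Z, InjOn g Z' ∧ g '' Z' = g '' Z := by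
  obtain ⟨s, hs, hs2⟩ := Set.SurjOn.exists_bijOn_subset (f := g) (s := Z) (t := g '' Z) (surjOn_image _ _)
  exact ⟨s, hs, hs2.injOn, hs2.image_eq⟩

theorem thin1 {Y T : Type u} {κ : Cardinal.{u}} (hκ : κ.IsRegular) {Z : Set Y} (hZ : #Z = κ)
    (g : Y → T) : ∃ Z' ⊆ Z, #Z' = κ ∧ (InjOn g Z' ∨ ∃ c, ∀ z ∈ Z', g z = c) := by
  by_cases h : #(g '' Z) < κ
  · obtain ⟨c, hc⟩ := pigeon hκ hZ g h
    exact ⟨_, inter_subset_left, hc, Or.inr ⟨c, fun z hz => hz.2⟩⟩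
  · obtain ⟨Z', h1, h2, h3⟩ := exists_section g Z
    refine ⟨Z', h1, ?_, Or.inl h2⟩
    rw [← mk_image_eq_of_injOn _ _ h2, h3]
    exact le_antisymm (mk_image_le.trans hZ.le) (not_lt.1 h)

theorem thin {Y T : Type u} {κ : Cardinal.{u}} (hκ : κ.IsRegular) {Z : Set Y} (hZ : #Z = κ)
    {n : ℕ} (g : Fin n → Y → T) : ∃ Z' ⊆ Z, #Z' = κ ∧ ∀ i, (InjOn (g i) Z' ∨ ∃ c, ∀ z ∈ Z', g i z = c) := by
  induction n with
  | zero => exact ⟨Z, subset_rfl, hZ, fun i => i.elim0⟩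
  | succ n ih =>
    obtain ⟨Z1, h1, h2, h3⟩ := ih (fun i => g i.succ)
    obtain ⟨Z2, h4, h5, h6⟩ := thin1 hκ h2 (g 0)
    refine ⟨Z2, h4.trans h1, h5, fun i => ?_⟩
    refine Fin.cases h6 (fun i => ?_) i
    rcases h3 i with h | ⟨c, hc⟩
    · exact Or.inl (h.mono h4)
    · exact Or.inr ⟨c, fun z hz => hc z (h4 hz)⟩

theorem rec_inj {Y T J : Type u} {κ : Cardinal.{u}} (hκ : ℵ₀ ≤ κ) (hJ : #J ≤ κ) {ι : Type} [Finite ι]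
    (Z : J → Set Y) (hZ : ∀ j, κ ≤ #(Z j)) (g : ι → Y → T) (hg : ∀ i j, InjOn (g i) (Z j)) :
    ∃ z : J → Y, (∀ j, z j ∈ Z j) ∧ ∀ i, Function.Injective (g i ∘ z) := by
  classical
  obtain ⟨r, wo, hr⟩ := Cardinal.exists_ord_eq J
  have key : ∀ (j : J) (p : ∀ j', r j' j → Y), ∃ y ∈ Z j, ∀ i j' (h : r j' j), g i y ≠ g i (p j' h) := by
    intro j p
    by_contra! hn
    choose i j' h e using hn
    let F : Z j → (ULift.{u} ι) × {x // r x j} := fun y => (⟨i y y.2⟩, ⟨j' y y.2, h y y.2⟩)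
    have hF : Function.Injective F := by
      intro y y' hyy
      have h1 : i y y.2 = i y' y'.2 := by simpa [F] using congrArg (fun t => t.1.down) hyy
      have h2 : j' y y.2 = j' y' y'.2 := by simpa [F] using congrArg (fun t => (t.2 : J)) hyy
      have e1 := e y y.2
      have e2 := e y' y'.2
      have : p (j' y y.2) (h y y.2) = p (j' y' y'.2) (h y' y'.2) := by congr!
      apply Subtype.ext
      apply hg (i y y.2) j y.2 y'.2
      rw [e1, this, h1, e2]
    have h1 := mk_le_of_injective hF
    have h2 : #{x // r x j} < κ := by
      refine lt_of_lt_of_le ?_ hJ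
      have := card_typein_lt j hr
      simpa using this
    rw [mk_prod] at h1
    simp only [lift_id] at h1
    exact absurd (((hZ j).trans h1).trans_lt (mul_lt_of_lt hκ (lt_of_lt_of_le (lt_aleph0_of_finite _) hκ) h2))
      (lt_irrefl _)
  choose F hF1 hF2 using key
  let wf : WellFounded r := IsWellFounded.wf
  let z : J → Y := wf.fix (fun j p => F j p)
  have hz : ∀ j, z j = F j (fun j' _ => z j') := fun j => wf.fix_eq _ j
  refine ⟨z, fun j => by rw [hz j]; exact hF1 _ _, fun i a b hab => ?_⟩
  have hlt : ∀ a b, r a b → g i (z a) ≠ g i (z b) := by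
    intro a b h hab
    have := hF2 b (fun j' _ => z j') i a h
    rw [← hz] at this
    exact this hab.symm
  rcases trichotomous_of r a b with h | h | h
  · exact absurd hab (hlt _ _ h)
  · exact h
  · exact absurd hab.symm (hlt _ _ h)

theorem exists_pairing {X : Type u} (hκ : ℵ₀ ≤ #X) : Nonempty (X ≃ X × X) := by
  apply Cardinal.eq.1
  rw [mk_prod]; simp [mul_eq_self hκ]

theorem range_compl_large {X W : Type u} (h : W → X) (S : Set X) (hS : #S = #X)
    (hd : ∀ w, h w ∉ S) : #((range h)ᶜ : Set X) = #X :=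
  large_of_subset rfl (A := S) (by rintro x hx ⟨w, rfl⟩; exact hd w hx) hS

end Pk

namespace Pk
open Set
set_option linter.unusedVariables false

variable {X : Type u} {C : Set (Ops X)}

theorem step1 (hC : IsClone C) (hS : ∀ γ : Equiv.Perm X, unaryOp ⇑γ ∈ C) (hκ : ℵ₀ ≤ #X)
    (hPL : ∀ l : Cardinal.{u}, 1 ≤ l → l ≤ #X → ¬ C ⊆ PL X l) :
    ∃ (n : ℕ) (f : (Fin (n+1) → X) → X) (D : Fin (n+1) → Set X), (⟨n, f⟩ : Ops X) ∈ C ∧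
      (∀ i, #((D i)ᶜ : Set X) = #X) ∧ f '' {x | ∀ i, x i ∈ D i} = Set.univ := by
  have hle : ∀ S : Set X, #S ≤ #X := mk_set_le
  let M : Set Cardinal.{u} := {μ | ∃ (n : ℕ) (f : (Fin (n+1) → X) → X) (D : Fin (n+1) → Set X),
    (⟨n, f⟩ : Ops X) ∈ C ∧ (∀ i, #((D i)ᶜ : Set X) = #X) ∧
    #((f '' {x | ∀ i, x i ∈ D i})ᶜ : Set X) = μ}
  have h1X : (1 : Cardinal.{u}) ≤ #X := one_le_aleph0.trans hκ
  have hM : ∃ μ ∈ M, μ < #X := by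
    have := hPL #X h1X le_rfl
    rw [not_subset] at this
    obtain ⟨⟨n, f⟩, hf, hf2⟩ := this
    simp only [PL, mem_ofPred_eq, not_forall, not_le] at hf2
    obtain ⟨D, hD, hlt⟩ := hf2
    exact ⟨_, ⟨n, f, D, hf, fun i => le_antisymm (hle _) (hD i), rfl⟩, hlt⟩
  obtain ⟨μ, hμ, hμX⟩ := hM
  have hin : sInf M ∈ M := csInf_mem ⟨μ, hμ⟩
  have hmin : ∀ ν ∈ M, sInf M ≤ ν := fun ν hν => csInf_le' hν
  have hltX : sInf M < #X := (hmin μ hμ).trans_lt hμX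
  obtain ⟨n, f, D, hf, hD, hcard⟩ := hin
  by_cases h0 : sInf M = 0
  · refine ⟨n, f, D, hf, hD, ?_⟩
    rw [h0, mk_set_eq_zero_iff] at hcard
    exact compl_empty_iff.1 hcard
  exfalso
  have := hPL (sInf M) (Cardinal.one_le_iff_ne_zero.2 h0) hltX.le
  rw [not_subset] at this
  obtain ⟨⟨m, f'⟩, hf', hf2⟩ := this
  simp only [PL, mem_ofPred_eq, not_forall, not_le] at hf2
  obtain ⟨D', hD', hlt⟩ := hf2
  have hπ : ∀ j, ∃ π : Equiv.Perm X, π '' ((f '' {x | ∀ i, x i ∈ D i})ᶜ) ⊆ (D' j)ᶜ := fun j =>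
    perm_into hκ (hcard ▸ hltX) (hcard ▸ hD' j)
  choose π hπ using hπ
  obtain ⟨N, hN⟩ : ∃ N, (m+1)*(n+1) = N + 1 := ⟨m*n+m+n, by ring⟩
  let E : Fin (m+1) × Fin (n+1) ≃ Fin (N+1) := finProdFinEquiv.trans (finCongr hN)
  let F : (Fin (N+1) → X) → X := fun x => f' (fun j => π j (f (fun i => x (E (j, i)))))
  have hF : (⟨N, F⟩ : Ops X) ∈ C := by
    refine hC.2 m N f' hf' (fun j x => π j (f (fun i => x (E (j, i))))) (fun j => ?_)
    refine hC.2 0 N _ (hS (π j)) (fun _ x => f (fun i => x (E (j, i)))) (fun _ => ?_)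
    exact hC.2 n N f hf (fun i x => x (E (j, i))) (fun i => hC.1 _ _)
  have hm := hmin _ ⟨N, F, fun k => D (E.symm k).2, hF, fun k => hD _, rfl⟩
  refine absurd (hm.trans_lt (lt_of_le_of_lt (mk_le_mk_of_subset ?_) hlt)) (lt_irrefl _)
  rw [compl_subset_compl]
  rintro _ ⟨x, hx, rfl⟩
  have : ∀ j, ∃ y : Fin (n+1) → X, (∀ i, y i ∈ D i) ∧ f y = (π j).symm (x j) := by
    intro j
    by_contra hcon
    have : (π j).symm (x j) ∈ (f '' {x | ∀ i, x i ∈ D i})ᶜ := fun ⟨y, h1, h2⟩ => hcon ⟨y, h1, h2⟩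
    have := hπ j ⟨_, this, rfl⟩
    simp at this
    exact this (hx j)
  choose y hy1 hy2 using this
  refine ⟨fun k => y (E.symm k).1 (E.symm k).2, fun k => hy1 _ _, ?_⟩
  simp [F, hy2]

theorem AB (hC : IsClone C) (hS : ∀ γ : Equiv.Perm X, unaryOp ⇑γ ∈ C) (hκ : ℵ₀ ≤ #X)
    {n : ℕ} {f : (Fin (n+1) → X) → X} (hf : (⟨n, f⟩ : Ops X) ∈ C) (g : Fin (n+1) → X → X)
    {J : Type u} (hJ : #J ≤ #X) [Nonempty J] (Z : J → Set X) (hZ : ∀ j, #(Z j) = #X) (y : J → X)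
    (hfy : ∀ j, ∀ z ∈ Z j, f (fun i => g i z) = y j) (I : Set (Fin (n+1)))
    (hI : ∀ i ∈ I, ∀ j, InjOn (g i) (Z j)) (c : Fin (n+1) → X)
    (hc : ∀ i, i ∉ I → ∀ j, ∀ z ∈ Z j, g i z = c i)
    (hu : I = Set.univ ∨ ∃ u : X → X, unaryOp u ∈ C ∧ ∃ p, #(u ⁻¹' {p}) = #X) :
    ∃ u : X → X, unaryOp u ∈ C ∧ ∀ j, #(u ⁻¹' {y j}) = #X := by
  classical
  have hJX : #(J × X) = #X := by
    rw [mk_prod]; simp only [lift_id]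
    exact le_antisymm ((mul_le_mul' hJ le_rfl).trans (mul_eq_self hκ).le)
      (le_mul_left (by simp))
  have hJXB : #((J × X) × Bool) ≤ #X := by
    rw [mk_prod, hJX]; simp only [lift_id, lift_uzero]
    refine (mul_le_mul' le_rfl ?_).trans (mul_eq_self hκ).le
    exact (lift_lt_aleph0.2 (lt_aleph0_of_finite Bool)).le.trans hκ
  obtain ⟨z, hz1, hz2⟩ := rec_inj (J := (J × X) × Bool) hκ hJXB (fun t => Z t.1.1) (fun t => (hZ _).ge)
    (fun i : Fin (n+1) => if i ∈ I then g i else id) (by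
      intro i t
      by_cases h : i ∈ I
      · simp only [h, if_true]; exact hI i h _
      · simp only [h, if_false]; exact injOn_id _)
  have key : ∀ i, ∃ h : (J × X) ⊕ X → X, U C ((J × X) ⊕ X) h ∧ ∀ t, h (Sum.inl t) = g i (z (t, true)) := by
    intro i
    by_cases h : i ∈ I
    · have hinj := hz2 i
      simp only [h, if_true] at hinj
      obtain ⟨e, he⟩ := equiv_extend (A := J × X) (B := X) (fun t => g i (z (t, true)))
        (by intro a b hab; have := hinj hab; simpa using this)
        (by
          symm
          refine range_compl_large _ (range (fun t : J × X => g i (z (t, false)))) ?_ ?_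
          · rw [mk_range_eq, hJX]
            intro a b hab; have := hinj hab; simpa using this
          · rintro w ⟨t, ht⟩
            have := hinj ht; simp at this)
      exact ⟨e, U_equiv hC e, he⟩
    · obtain ⟨u, hu, p, hp⟩ := hu.resolve_left (by rintro rfl; exact h (mem_univ _))
      obtain ⟨A, B, hAB, hABS, hA, hB⟩ := split (S := u ⁻¹' {p}) (hp ▸ hκ)
      obtain ⟨m⟩ := Cardinal.eq.1 (show #(J × X) = #A by rw [hA, hp, hJX])
      obtain ⟨e, he⟩ := equiv_extend (A := J × X) (B := X) (fun t => (m t : X))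
        (Subtype.val_injective.comp m.injective)
        (by
          symm
          exact range_compl_large _ B (hB.trans hp) (fun w hw => Set.disjoint_left.1 hAB (m w).2 hw))
      refine ⟨(Equiv.swap p (c i)) ∘ (u ∘ e), U_unary hC (hS _) (U_unary hC hu (U_equiv hC e)), ?_⟩
      intro t
      have : u (m t) = p := by
        have : (m t : X) ∈ u ⁻¹' {p} := hABS ▸ Or.inl (m t).2
        exact this
      simp only [Function.comp, he, this, Equiv.swap_apply_left]
      exact (hc i h _ _ (hz1 _)).symm
  choose h hU hh using key
  obtain ⟨e, he⟩ := U_comp hC hS hf hU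
  refine ⟨_, he, fun j => ?_⟩
  refine le_antisymm (mk_set_le _) ?_
  refine mk_le_of_injective (f := fun x : X => ⟨e.symm (Sum.inl (j, x)), ?_⟩) ?_
  · simp only [mem_preimage, mem_singleton_iff, Function.comp, Equiv.apply_symm_apply, hh]
    exact hfy j _ (hz1 ((j, x), true))
  · intro a b hab
    simpa using hab

theorem stepB (hC : IsClone C) (hS : ∀ γ : Equiv.Perm X, unaryOp ⇑γ ∈ C) (hreg : (#X).IsRegular)
    (h : ¬ C ⊆ Pol1 (SB X)) : ∃ u : X → X, unaryOp u ∈ C ∧ ∃ p, #(u ⁻¹' {p}) = #X := by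
  rw [not_subset] at h
  obtain ⟨⟨n, f⟩, hf, hf2⟩ := h
  simp only [Pol1, mem_ofPred_eq, not_forall] at hf2
  obtain ⟨g, hg, hn⟩ := hf2
  simp only [SB, mem_ofPred_eq, not_forall, not_lt] at hn
  obtain ⟨y, hy⟩ := hn
  have hZ0 := le_antisymm (mk_set_le _) hy
  obtain ⟨Z, hZ, hZc, hZi⟩ := thin hreg hZ0 g
  obtain ⟨u, hu, hu2⟩ := AB hC hS hreg.aleph0_le hf g (J := PUnit)
    (by rw [mk_punit]; exact one_le_aleph0.trans hreg.aleph0_le) (fun _ => Z) (fun _ => hZc) (fun _ => y)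
    (fun _ z hz => hZ hz) Set.univ (fun i _ _ => by
      rcases hZi i with h | ⟨c, hc⟩
      · exact h
      · exact absurd (small_of_subset (show Z ⊆ g i ⁻¹' {c} from hc) (hg i c))
          (by rw [hZc]; exact lt_irrefl _)) (fun _ => y) (fun i hi => absurd (mem_univ _) hi) (Or.inl rfl)
  exact ⟨u, hu, y, hu2 PUnit.unit⟩

theorem stepA (hC : IsClone C) (hS : ∀ γ : Equiv.Perm X, unaryOp ⇑γ ∈ C) (hreg : (#X).IsRegular)
    (h : ¬ C ⊆ Pol1 (SA X)) (hB : ∃ u : X → X, unaryOp u ∈ C ∧ ∃ p, #(u ⁻¹' {p}) = #X) :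
    ∃ u : X → X, unaryOp u ∈ C ∧ #({y | #(u ⁻¹' {y}) = #X} : Set X) = #X := by
  classical
  rw [not_subset] at h
  obtain ⟨⟨n, f⟩, hf, hf2⟩ := h
  simp only [Pol1, mem_ofPred_eq, not_forall] at hf2
  obtain ⟨g, hg, hn⟩ := hf2
  simp only [SA, mem_ofPred_eq, not_lt] at hn
  have hV := le_antisymm (mk_set_le _) hn
  set k : X → X := fun x => f (fun i => g i x) with hk
  have hκ := hreg.aleph0_le
  have hex : ∀ y, ∃ Z : Set X, #(k ⁻¹' {y}) = #X → Z ⊆ k ⁻¹' {y} ∧ #Z = #X ∧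
      ∀ i, (InjOn (g i) Z ∨ ∃ c, ∀ z ∈ Z, g i z = c) := by
    intro y
    by_cases hy : #(k ⁻¹' {y}) = #X
    · obtain ⟨Z, h⟩ := thin hreg hy g
      exact ⟨Z, fun _ => h⟩
    · exact ⟨∅, fun h => absurd h hy⟩
  choose Z hZ using hex
  let P : X → ULift.{u} (Set (Fin (n+1))) := fun y => ⟨{i | InjOn (g i) (Z y)}⟩
  obtain ⟨⟨I⟩, hI⟩ := pigeon hreg hV P ((lt_aleph0_of_finite _).trans_le hκ)
  have hcex : ∀ i y, ∃ c, i ∉ I → y ∈ ({y | #(k ⁻¹' {y}) = #X} ∩ P ⁻¹' {⟨I⟩} : Set X) →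
      ∀ z ∈ Z y, g i z = c := by
    intro i y
    by_cases hh : i ∉ I ∧ y ∈ ({y | #(k ⁻¹' {y}) = #X} ∩ P ⁻¹' {⟨I⟩} : Set X)
    · obtain ⟨h1, h2, h3⟩ := hh
      have h3' : {i | InjOn (g i) (Z y)} = I := congrArg ULift.down h3
      rcases (hZ y h2).2.2 i with h | ⟨c, hc⟩
      · exact absurd (h3' ▸ h) h1
      · exact ⟨c, fun _ _ => hc⟩
    · exact ⟨y, fun h1 h2 => absurd ⟨h1, h2⟩ hh⟩
  choose c hc using hcex
  obtain ⟨V', hV', hV'c, hV'i⟩ := thin hreg hI (fun i y => if i ∈ I then k y else c i y)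
  have hconst : ∀ i, ∃ d, i ∉ I → ∀ y ∈ V', c i y = d := by
    intro i
    by_cases hi : i ∈ I
    · exact ⟨k (g 0 (Classical.choice (mk_ne_zero_iff.1 (by rw [← hV'c] at hκ; intro h; rw [h] at hκ; exact absurd hκ (not_le.2 aleph0_pos)) : Nonempty V')).1), fun h => absurd hi h⟩
    rcases hV'i i with h | ⟨d, hd⟩
    · exfalso
      simp only [hi, if_false] at h
      have h1 : #(c i '' V') = #X := by rw [mk_image_eq_of_injOn _ _ h, hV'c]
      have h2 : c i '' V' ⊆ {y | #(g i ⁻¹' {y}) = #X} := by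
        rintro _ ⟨y, hy, rfl⟩
        have h3 := hZ y (hV' hy).1
        exact large_of_subset rfl (show Z y ⊆ g i ⁻¹' {c i y} from hc i y hi (hV' hy)) h3.2.1
      exact absurd (small_of_subset h2 (hg i)) (by rw [h1]; exact lt_irrefl _)
    · simp only [hi, if_false] at hd
      exact ⟨d, fun _ => hd⟩
  choose d hd using hconst
  have : Nonempty V' := mk_ne_zero_iff.1 (by
    intro h; rw [hV'c] at h; rw [h] at hκ; exact absurd hκ (not_le.2 aleph0_pos))
  obtain ⟨u, hu, hu2⟩ := AB hC hS hκ hf g (J := V') (hV'c.le) (fun y => Z y)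
    (fun y => (hZ y (hV' y.2).1).2.1) (fun y => y) (fun y z hz => (hZ y (hV' y.2).1).1 hz) I
    (fun i hi y => by
      have h3 : {i | InjOn (g i) (Z y)} = I := congrArg ULift.down (hV' y.2).2
      rw [← h3] at hi; exact hi) d
    (fun i hi y z hz => by rw [hc i y hi (hV' y.2) z hz, hd i hi y y.2]) (Or.inr hB)
  exact ⟨u, hu, large_of_subset rfl (show V' ⊆ _ from fun y hy => hu2 ⟨y, hy⟩) hV'c⟩

def FF (C : Set (Ops X)) : Prop := ∀ (W : Type u) (h : W → X), #W = #X → (∀ y, #(h ⁻¹' {y}) = #X) → U C W h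

theorem stepFF (hC : IsClone C) (hS : ∀ γ : Equiv.Perm X, unaryOp ⇑γ ∈ C) (hκ : ℵ₀ ≤ #X)
    {n : ℕ} {f : (Fin (n+1) → X) → X} {D : Fin (n+1) → Set X} (hf : (⟨n, f⟩ : Ops X) ∈ C)
    (hD : ∀ i, #((D i)ᶜ : Set X) = #X) (hfD : f '' {x | ∀ i, x i ∈ D i} = Set.univ)
    {u : X → X} (hu : unaryOp u ∈ C) (hV : #({y | #(u ⁻¹' {y}) = #X} : Set X) = #X) : FF C := by
  classical
  obtain ⟨V', B, hd, hVB, hV'c, hBc⟩ := split (S := {y | #(u ⁻¹' {y}) = #X}) (by rw [hV]; exact hκ)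
  rw [hV] at hV'c hBc
  have hV'co : #(V'ᶜ : Set X) = #X := large_of_subset rfl (fun b hb hb' => Set.disjoint_left.1 hd hb' hb) hBc
  have hV'V : ∀ y ∈ V', #(u ⁻¹' {y}) = #X := fun y hy => by
    have : y ∈ {y | #(u ⁻¹' {y}) = #X} := hVB ▸ Or.inl hy
    exact this
  have hσ : ∀ i, ∃ σ : Equiv.Perm X, D i ⊆ σ '' V' := by
    intro i
    obtain ⟨A, B, h1, h2, h3, h4⟩ := split (S := (D i)ᶜ) (by rw [hD i]; exact hκ)
    rw [hD i] at h3 h4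
    obtain ⟨σ, hσ⟩ := perm_image (E := V') (F := D i ∪ A)
      (by rw [hV'c, large_of_subset rfl (subset_union_right) h3])
      (by
        rw [hV'co, large_of_subset rfl (A := B) _ h4]
        rintro b hb (h | h)
        · have : b ∈ (D i)ᶜ := h2 ▸ Or.inr hb
          exact this h
        · exact Set.disjoint_left.1 h1 h hb)
    exact ⟨σ, hσ ▸ subset_union_left⟩
  choose σ hσ using hσ
  let W := ((Fin (n+1) → V') × X) ⊕ (u ⁻¹' (V'ᶜ) : Set X)
  have hW : #W = #X := by
    have h1 : #(Fin (n+1) → V') = #X := by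
      rw [mk_arrow]; simp only [mk_fin, lift_natCast, lift_uzero, hV'c]
      rw [power_natCast]
      exact power_nat_eq hκ (by omega)
    rw [mk_sum, mk_prod, h1]; simp only [lift_id]
    rw [mul_eq_self hκ]
    exact add_eq_left hκ (mk_set_le _)
  let L : Fin (n+1) → W → X := fun i => Sum.elim (fun t => t.1 i) (fun x => u x)
  have hL : ∀ i, U C W (L i) := by
    intro i
    refine U_fib hC hS (U_of_mem hu) (fun y => ?_)
    by_cases hy : y ∈ V'
    · rw [hV'V y hy]
      refine le_antisymm ((mk_set_le _).trans hW.le) ?_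
      refine mk_le_of_injective (f := fun x : X => ⟨Sum.inl (fun _ => ⟨y, hy⟩, x), ?_⟩) ?_
      · simp [L]
      · intro a b hab
        exact congrArg Prod.snd (Sum.inl.inj (congrArg Subtype.val hab))
    · refine mk_congr ⟨fun w => ⟨(match w.1 with | Sum.inl t => t.2 | Sum.inr x => x.1), ?_⟩,
        fun x => ⟨Sum.inr ⟨x.1, ?_⟩, ?_⟩, ?_, ?_⟩
      · rcases w with ⟨(⟨t, x⟩ | x), hw⟩
        · exact absurd (show (t i : X) = y from hw) (fun h => hy (h ▸ (t i).2))
        · exact hw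
      · rcases x with ⟨x, hx⟩
        have : u x = y := hx
        simpa [this] using hy
      · exact x.2
      · rintro ⟨(⟨t, x⟩ | x), hw⟩
        · exact absurd (show (t i : X) = y from hw) (fun h => hy (h ▸ (t i).2))
        · rfl
      · rintro ⟨x, hx⟩; rfl
  have hFU := U_comp hC hS hf (fun i => U_unary hC (hS (σ i)) (hL i))
  intro W' h hW' hh
  refine U_fib hC hS hFU (fun y => ?_)
  rw [hh y]
  refine le_antisymm ?_ ((mk_set_le _).trans hW.le)
  obtain ⟨d, hd, hdy⟩ : y ∈ f '' {x | ∀ i, x i ∈ D i} := hfD ▸ mem_univ y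
  have : ∀ i, ∃ v : V', σ i v = d i := fun i => by
    obtain ⟨v, hv, hv2⟩ := hσ i (hd i)
    exact ⟨⟨v, hv⟩, hv2⟩
  choose v hv using this
  refine mk_le_of_injective (f := fun x : X => ⟨Sum.inl (v, x), ?_⟩) ?_
  · simp [L, hv, hdy]
  · intro a b hab
    exact congrArg Prod.snd (Sum.inl.inj (congrArg Subtype.val hab))

theorem S1 (hC : IsClone C) (hS : ∀ γ : Equiv.Perm X, unaryOp ⇑γ ∈ C) (hκ : ℵ₀ ≤ #X) (hFF : FF C)
    {W : Type u} {k : W → X} (hk : U C W k) (hco : #((range k)ᶜ : Set X) = #X) (u : X → X) :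
    U C W (u ∘ k) := by
  obtain ⟨e⟩ := exists_pairing hκ
  have hs : unaryOp (fun x => (e x).1) ∈ C := by
    refine mem_of_U hC hS (hFF X _ rfl (fun y => le_antisymm (mk_set_le _) ?_))
    refine mk_le_of_injective (f := fun x : X => ⟨e.symm (y, x), ?_⟩) ?_
    · simp
    · intro a b hab
      simpa using hab
  have hj : Function.Injective (fun y => e.symm (u y, y)) := by
    intro a b hab
    simpa using congrArg Prod.snd (e.symm.injective hab)
  obtain ⟨σ, hσ⟩ := perm_extend (fun y => e.symm (u y, y)) (range k) hj.injOn (by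
    rw [hco]; symm
    refine large_of_subset rfl (A := (fun y => e.symm (u y, y)) '' (range k)ᶜ) ?_ ?_
    · rintro _ ⟨y, hy, rfl⟩ ⟨y', hy', h⟩
      exact hy (hj h ▸ hy')
    · rw [mk_image_eq hj, hco])
  have := U_unary hC hs (U_unary hC (hS σ) hk)
  convert this using 1
  funext w
  simp [hσ (k w) ⟨w, rfl⟩]

end Pk

namespace Pk
open Set
set_option linter.unusedVariables false

variable {X : Type u} {C : Set (Ops X)}

theorem card_of_U {W : Type u} {k : W → X} (hk : U C W k) : #W = #X := by
  obtain ⟨e, _⟩ := hk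
  exact (mk_congr e).symm

/-- thick functions -/
def Thick {W : Type u} (k : W → X) : Prop := ∀ w, #(k ⁻¹' {k w}) = #X

theorem gen_of (hC : IsClone C) (hS : ∀ γ : Equiv.Perm X, unaryOp ⇑γ ∈ C) (hκ : ℵ₀ ≤ #X) (hFF : FF C)
    {W : Type u} {k : W → X} (hk : U C W k) (hco : #((range k)ᶜ : Set X) = #X) (hkt : Thick k)
    {W' : Type u} [Nonempty W'] {h : W' → X} (ht : Thick h) (hr : #(range h) ≤ #(range k)) :
    U C W' h := by
  classical
  have hW := card_of_U hk
  obtain ⟨emb⟩ := hr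
  let w0 : W' := Classical.arbitrary W'
  have : Nonempty (range h) := ⟨⟨h w0, w0, rfl⟩⟩
  let inv : range k → range h := Function.invFun emb
  let v : X → X := fun x => if hx : x ∈ range k then (inv ⟨x, hx⟩ : X) else x
  have hv : ∀ w, v (k w) = (inv ⟨k w, w, rfl⟩ : X) := fun w => by simp [v]
  refine U_fib hC hS (S1 hC hS hκ hFF hk hco v) (fun y => ?_)
  by_cases hy : y ∈ range h
  · have h1 : #(h ⁻¹' {y}) = #X := by
      obtain ⟨w, rfl⟩ := hy; exact ht w
    rw [h1]
    refine (le_antisymm ((mk_set_le _).trans hW.le) ?_).symm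
    obtain ⟨w, hw⟩ := (emb ⟨y, hy⟩).2
    rw [← hkt w]
    refine mk_le_mk_of_subset (fun w' hw' => ?_)
    have e1 : k w' = k w := hw'
    have e2 : (⟨k w', w', rfl⟩ : range k) = emb ⟨y, hy⟩ := Subtype.ext (e1.trans hw)
    simp only [mem_preimage, Function.comp, mem_singleton_iff, hv, e2]
    simp only [inv, Function.leftInverse_invFun emb.injective (⟨y, hy⟩ : range h)]
  · have h1 : h ⁻¹' {y} = ∅ := by
      ext w; simp; rintro rfl; exact hy ⟨w, rfl⟩
    have h2 : (v ∘ k) ⁻¹' {y} = ∅ := by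
      ext w; simp only [mem_preimage, Function.comp, mem_singleton_iff, hv, mem_empty_iff_false, iff_false]
      rintro rfl; exact hy (Subtype.property _)
    rw [h1, h2]; simp

theorem card_DX (hκ : ℵ₀ ≤ #X) {n : ℕ} {D : Set (Fin (n+1) → X)} (hD : D.Nonempty) : #(D × X) = #X := by
  have : Nonempty D := hD.to_subtype
  have h1 : #D ≤ #X := by
    refine (mk_set_le _).trans ?_
    rw [mk_arrow]; simp only [mk_fin, lift_natCast, lift_uzero]
    rw [power_natCast]
    exact power_nat_le hκ
  rw [mk_prod]; simp only [lift_id]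
  exact le_antisymm ((mul_le_mul' h1 le_rfl).trans (mul_eq_self hκ).le) (le_mul_left (by simp))

theorem fib_DX (hκ : ℵ₀ ≤ #X) {n : ℕ} {D : Set (Fin (n+1) → X)} (hD : D.Nonempty)
    (q : (Fin (n+1) → X) → X) (d : D) : #((fun p : D × X => q p.1) ⁻¹' {q d}) = #X := by
  refine le_antisymm ((mk_set_le _).trans (card_DX hκ hD).le) ?_
  refine mk_le_of_injective (f := fun x : X => ⟨(d, x), rfl⟩) ?_
  intro a b hab
  exact congrArg Prod.snd (congrArg Subtype.val hab)

theorem U_coord (hκ : ℵ₀ ≤ #X) (hFF : FF C) {n : ℕ} {D : Set (Fin (n+1) → X)} (hD : D.Nonempty)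
    (i : Fin (n+1)) (h : ∀ a, ∃ d ∈ D, d i = a) : U C (D × X) (fun p => p.1.1 i) := by
  refine hFF _ _ (card_DX hκ hD) (fun y => ?_)
  obtain ⟨d, hd, rfl⟩ := h y
  exact fib_DX hκ hD (fun x => x i) ⟨d, hd⟩

theorem U_const {W : Type u} (hW : #W = #X) {c : X} (hc : unaryOp (fun _ : X => c) ∈ C) :
    U C W (fun _ => c) := by
  obtain ⟨e⟩ := Cardinal.eq.1 hW
  exact ⟨e.symm, hc⟩

theorem EF (hC : IsClone C) (hS : ∀ γ : Equiv.Perm X, unaryOp ⇑γ ∈ C) (hκ : ℵ₀ ≤ #X) (hFF : FF C)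
    {n : ℕ} {f : (Fin (n+1) → X) → X} (hf : (⟨n, f⟩ : Ops X) ∈ C) {D : Set (Fin (n+1) → X)}
    (hD : D.Nonempty) (I : Set (Fin (n+1))) (c : Fin (n+1) → X)
    (hI : ∀ i ∈ I, (∀ c : X, unaryOp (fun _ : X => c) ∈ C) ∧ ∀ x ∈ D, x i = c i)
    (hI2 : ∀ i, i ∉ I → #({a | ∀ x ∈ D, x i ≠ a} : Set X) < #X)
    (hco : #((f '' D)ᶜ : Set X) = #X) :
    ∃ (W : Type u) (k : W → X), U C W k ∧ #((range k)ᶜ : Set X) = #X ∧ Thick k ∧ f '' D ⊆ range k := by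
  classical
  let Q : Set X := ⋃ i ∈ Iᶜ, {a | ∀ x ∈ D, x i ≠ a}
  have hQ : #Q < #X := by
    have h : ∀ s : Finset (Fin (n+1)), (∀ i ∈ s, i ∉ I) → #(⋃ i ∈ s, {a | ∀ x ∈ D, x i ≠ a} : Set X) < #X := by
      intro s
      induction s using Finset.induction_on with
      | empty =>
        intro _
        simp only [Finset.notMem_empty, iUnion_of_empty, iUnion_empty, mk_eq_zero]
        exact aleph0_pos.trans_le hκ
      | insert a s ha ih =>
        intro h
        rw [Finset.set_biUnion_insert]
        exact small_union hκ (hI2 a (h a (Finset.mem_insert_self _ _)))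
          (ih (fun i hi => h i (Finset.mem_insert_of_mem hi)))
    have := h (Finset.univ.filter (· ∉ I)) (by simp)
    refine small_of_subset ?_ this
    intro x hx
    simpa [Q] using hx
  let d : X → Fin (n+1) → X := fun y i => if i ∈ I then c i else y
  let D' : Set (Fin (n+1) → X) := D ∪ d '' Q
  have hD' : D'.Nonempty := hD.mono subset_union_left
  refine ⟨D' × X, fun p => f p.1, ?_, ?_, fun w => fib_DX hκ hD' f w.1, ?_⟩
  · refine U_comp hC hS hf (h := fun i (p : D' × X) => p.1.1 i) (fun i => ?_)
    by_cases hi : i ∈ I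
    · have : (fun p : D' × X => p.1.1 i) = fun _ => c i := by
        funext p
        rcases p with ⟨⟨x, (hx | ⟨y, hy, rfl⟩)⟩, _⟩
        · exact (hI i hi).2 x hx
        · simp [d, hi]
      rw [this]
      exact U_const (card_DX hκ hD') ((hI i hi).1 _)
    · refine U_coord hκ hFF hD' i (fun a => ?_)
      by_cases ha : ∃ x ∈ D, x i = a
      · obtain ⟨x, hx, hxa⟩ := ha
        exact ⟨x, Or.inl hx, hxa⟩
      · refine ⟨d a, Or.inr ⟨a, ?_, rfl⟩, by simp [d, hi]⟩
        push Not at ha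
        simp only [Q, mem_iUnion]
        exact ⟨i, hi, ha⟩
  · have h1 : #(f '' (d '' Q)) < #X := (mk_image_le.trans mk_image_le).trans_lt hQ
    refine large_of_subset rfl ?_ (large_diff hκ hco h1)
    rintro y ⟨hy1, hy2⟩ ⟨⟨⟨x, (hx | hx)⟩, _⟩, rfl⟩
    · exact hy1 ⟨x, hx, rfl⟩
    · exact hy2 ⟨x, hx, rfl⟩
  · rintro _ ⟨x, hx, rfl⟩
    obtain ⟨x0⟩ : Nonempty X := ⟨x 0⟩
    exact ⟨(⟨x, Or.inl hx⟩, x0), rfl⟩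

theorem step5 (hC : IsClone C) (hS : ∀ γ : Equiv.Perm X, unaryOp ⇑γ ∈ C) (hκ : ℵ₀ ≤ #X) (hFF : FF C)
    (hE : ¬ C ⊆ Pol1 (SE X)) (hF : ¬ C ⊆ Pol1 (SF X)) :
    ∃ (W : Type u) (k : W → X), U C W k ∧ #((range k)ᶜ : Set X) = #X ∧ Thick k ∧ ∃ w w', k w ≠ k w' := by
  classical
  have hXne : Nonempty X := mk_ne_zero_iff.1 (aleph0_pos.trans_le hκ).ne'
  obtain ⟨x0⟩ := hXne
  rw [not_subset] at hE
  obtain ⟨⟨n, f⟩, hf, hf2⟩ := hE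
  simp only [Pol1, mem_ofPred_eq, not_forall] at hf2
  obtain ⟨g, hg, hn⟩ := hf2
  simp only [SE, mem_ofPred_eq, not_lt] at hn
  have himg : ∀ {n : ℕ} (f : (Fin (n+1) → X) → X) (g : Fin (n+1) → X → X),
      f '' (range (fun x i => g i x)) = range (fun x => f (fun i => g i x)) := by
    intro n f g
    ext y; simp
  obtain ⟨W, k, hk1, hk2, hk3, hk4⟩ := EF hC hS hκ hFF hf (D := range (fun x i => g i x)) ⟨_, x0, rfl⟩ ∅
    (fun _ => x0) (fun i hi => absurd hi (notMem_empty _)) (fun i _ => small_of_subset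
      (by rintro a ha ⟨x, hx⟩; exact ha _ ⟨x, rfl⟩ hx) (hg i)) (le_antisymm (mk_set_le _) (by rw [himg]; exact hn))
  by_cases hne : ∃ w w', k w ≠ k w'
  · exact ⟨W, k, hk1, hk2, hk3, hne⟩
  push Not at hne
  obtain ⟨w0, hw0⟩ := hk4 ⟨_, ⟨x0, rfl⟩, rfl⟩
  have hconst : ∀ c : X, unaryOp (fun _ : X => c) ∈ C := by
    intro c
    obtain ⟨e, he⟩ := S1 hC hS hκ hFF hk1 hk2 (fun _ => c)
    exact he
  rw [not_subset] at hF
  obtain ⟨⟨n, f⟩, hf, hf2⟩ := hF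
  simp only [Pol1, mem_ofPred_eq, not_forall] at hf2
  obtain ⟨g, hg, hn⟩ := hf2
  simp only [SF, mem_ofPred_eq, not_or, not_lt, not_forall] at hn
  obtain ⟨hn1, x1, x2, hx12⟩ := hn
  obtain ⟨W, k, hk1, hk2, hk3, hk4⟩ := EF hC hS hκ hFF hf (D := range (fun x i => g i x)) ⟨_, x0, rfl⟩
    {i | ∀ x y, g i x = g i y} (fun i => g i x0) (fun i hi => ⟨hconst, by rintro _ ⟨x, rfl⟩; exact hi _ _⟩)
    (fun i hi => small_of_subset (by rintro a ha ⟨x, hx⟩; exact ha _ ⟨x, rfl⟩ hx) ((hg i).resolve_right hi))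
    (le_antisymm (mk_set_le _) (by rw [himg]; exact hn1))
  obtain ⟨w1, hw1⟩ := hk4 ⟨_, ⟨x1, rfl⟩, rfl⟩
  obtain ⟨w2, hw2⟩ := hk4 ⟨_, ⟨x2, rfl⟩, rfl⟩
  exact ⟨W, k, hk1, hk2, hk3, w1, w2, by rw [hw1, hw2]; exact hx12⟩

theorem step6 (hreg : (#X).IsRegular) (hT : ¬ C ⊆ Pol2 (ST X)) :
    ∃ (n : ℕ) (f : (Fin (n+1) → X) → X) (D1 D2 : X → Fin (n+1) → X), (⟨n, f⟩ : Ops X) ∈ C ∧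
      Function.Injective (f ∘ D1) ∧ Function.Injective (f ∘ D2) ∧ (∀ x y, f (D1 x) ≠ f (D2 y)) ∧
      #((range (f ∘ D1) ∪ range (f ∘ D2))ᶜ : Set X) = #X ∧
      ∀ i, (∃ c, ∀ x, D1 x i = c) ∨ (∃ c, ∀ x, D2 x i = c) := by
  classical
  have hκ := hreg.aleph0_le
  rw [not_subset] at hT
  obtain ⟨⟨n, f⟩, hf, hf2⟩ := hT
  simp only [Pol2, mem_ofPred_eq, not_forall] at hf2
  obtain ⟨t, ht, hn⟩ := hf2
  simp only [ST, mem_ofPred_eq, not_or, not_lt, not_forall] at hn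
  obtain ⟨⟨a, ha⟩, ⟨b, hb⟩⟩ := hn
  have aux : ∀ (q : X → Fin (n+1) → X), #X ≤ #(range fun y => f (q y)) →
      ∃ Z : Set X, #Z = #X ∧ InjOn (fun y => f (q y)) Z ∧
        ∀ i, #(range fun y => q y i) < #X → ∃ c, ∀ z ∈ Z, q z i = c := by
    intro q hq
    obtain ⟨Z0, _, h1, h2⟩ := exists_section (fun y => f (q y)) Set.univ
    have h3 : #Z0 = #X := by
      rw [← mk_image_eq_of_injOn _ _ h1, h2, image_univ]
      exact le_antisymm (mk_set_le _) hq
    obtain ⟨Z, hZ, hZc, hZi⟩ := thin hreg h3 (fun i y => q y i)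
    refine ⟨Z, hZc, h1.mono hZ, fun i hi => (hZi i).resolve_left (fun h => ?_)⟩
    have : #((fun y => q y i) '' Z) < #X := small_of_subset (image_subset_range _ _) hi
    rw [mk_image_eq_of_injOn _ _ h, hZc] at this
    exact lt_irrefl _ this
  obtain ⟨Z1, hZ1, hZ1i, hZ1c⟩ := aux (fun y i => t i a y) ha
  obtain ⟨Z2, hZ2, hZ2i, hZ2c⟩ := aux (fun x i => t i x b) hb
  have hX3 : #(X × Fin 3) ≤ #X := by
    rw [mk_prod]; simp only [lift_uzero]
    refine (mul_le_mul' le_rfl ?_).trans (mul_eq_self hκ).le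
    exact (lift_lt_aleph0.2 (lt_aleph0_of_finite (Fin 3))).le.trans hκ
  let A : Set X := (fun y => f (fun i => t i a y)) '' Z1
  let B : Set X := (fun x => f (fun i => t i x b)) '' Z2
  have hA : #A = #X := by rw [mk_image_eq_of_injOn _ _ hZ1i, hZ1]
  have hB : #B = #X := by rw [mk_image_eq_of_injOn _ _ hZ2i, hZ2]
  obtain ⟨z, hz1, hz2⟩ := rec_inj (ι := Unit) hκ hX3 (fun p => if p.2 = 1 then B else A)
    (fun p => by by_cases h : p.2 = 1 <;> simp [h, hA, hB]) (fun _ => id) (fun _ _ => injOn_id _)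
  have hz : Function.Injective z := hz2 ()
  have e1 : ∀ x, ∃ y ∈ Z1, f (fun i => t i a y) = z (x, 0) := fun x => by
    have := hz1 (x, 0)
    rw [if_neg (by simp)] at this
    exact this
  have e2 : ∀ x, ∃ y ∈ Z2, f (fun i => t i y b) = z (x, 1) := fun x => by
    have := hz1 (x, 1)
    rw [if_pos rfl] at this
    exact this
  choose y1 hy1 hy1' using e1
  choose y2 hy2 hy2' using e2
  refine ⟨n, f, fun x i => t i a (y1 x), fun x i => t i (y2 x) b, hf, ?_, ?_, ?_, ?_, ?_⟩
  · intro x x' h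
    simp only [Function.comp, hy1'] at h
    simpa using hz h
  · intro x x' h
    simp only [Function.comp, hy2'] at h
    simpa using hz h
  · intro x x' h
    simp only [hy1', hy2'] at h
    simpa using hz h
  · refine large_of_subset rfl (A := range (fun x => z (x, 2))) ?_ ?_
    · rintro _ ⟨x, rfl⟩ (⟨x', h⟩ | ⟨x', h⟩)
      · simp only [Function.comp, hy1'] at h
        simpa using hz h
      · simp only [Function.comp, hy2'] at h
        simpa using hz h
    · rw [mk_range_eq]
      intro x x' h
      simpa using hz h
  · intro i
    rcases ht i with h | h
    · left
      obtain ⟨c, hc⟩ := hZ1c i (h a)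
      exact ⟨c, fun x => hc _ (hy1 x)⟩
    · right
      obtain ⟨c, hc⟩ := hZ2c i (h b)
      exact ⟨c, fun x => hc _ (hy2 x)⟩

theorem step7 (hC : IsClone C) (hS : ∀ γ : Equiv.Perm X, unaryOp ⇑γ ∈ C) (hκ : ℵ₀ ≤ #X) (hFF : FF C)
    (h5 : ∃ (W : Type u) (k : W → X), U C W k ∧ #((range k)ᶜ : Set X) = #X ∧ Thick k ∧ ∃ w w', k w ≠ k w')
    {n : ℕ} {f : (Fin (n+1) → X) → X} (hf : (⟨n, f⟩ : Ops X) ∈ C) (hR : #(range f) = #X)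
    (hfix : ∀ i, ∃ b, #(f '' {x | x i = b}) = #X) :
    ∃ (W : Type u) (k : W → X), U C W k ∧ #((range k)ᶜ : Set X) = #X ∧ Thick k ∧ #(range k) = #X := by
  classical
  obtain ⟨W5, k5, hk5, hk5co, hk5t, w, w', hww⟩ := h5
  have hconst : ∀ c : X, unaryOp (fun _ : X => c) ∈ C := by
    intro c
    obtain ⟨e, he⟩ := S1 hC hS hκ hFF hk5 hk5co (fun _ => c)
    exact he
  have hXne : Nonempty X := mk_ne_zero_iff.1 (aleph0_pos.trans_le hκ).ne'
  obtain ⟨x0⟩ := hXne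
  have fin : ∀ {D : Set (Fin (n+1) → X)}, #(f '' D) = #X → D.Nonempty := by
    intro D h
    by_contra hn
    rw [not_nonempty_iff_eq_empty] at hn
    rw [hn, image_empty, mk_eq_zero] at h
    exact (aleph0_pos.trans_le hκ).ne h
  obtain ⟨A, B, hAB, hABR, hA, hB⟩ := split (S := range f) (hR ▸ hκ)
  rw [hR] at hA hB
  have hBim : f '' (f ⁻¹' B) = B := image_preimage_eq_of_subset (hABR ▸ subset_union_right)
  by_cases hcase : ∀ i, #({a | ∀ x ∈ f ⁻¹' B, x i ≠ a} : Set X) < #X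
  · obtain ⟨W, k, h1, h2, h3, h4⟩ := EF hC hS hκ hFF hf (D := f ⁻¹' B) (fin (by rw [hBim, hB])) ∅
      (fun _ => x0) (fun i hi => absurd hi (notMem_empty _)) (fun i _ => hcase i)
      (by rw [hBim]; exact large_of_subset rfl (fun a ha hb => Set.disjoint_left.1 hAB ha hb) hA)
    exact ⟨W, k, h1, h2, h3, large_of_subset rfl h4 (by rw [hBim, hB])⟩
  push Not at hcase
  obtain ⟨i, hi⟩ := hcase
  obtain ⟨⟨a, ha⟩⟩ : Nonempty ({a | ∀ x ∈ f ⁻¹' B, x i ≠ a} : Set X) :=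
    mk_ne_zero_iff.1 ((aleph0_pos.trans_le hκ).trans_le hi).ne'
  have haco : #((f '' {x | x i = a})ᶜ : Set X) = #X := by
    refine large_of_subset rfl (A := B) ?_ hB
    rintro _ hb ⟨x, hx, rfl⟩
    exact ha x hb hx
  by_cases hal : #(f '' {x | x i = a}) = #X
  · obtain ⟨W, k, h1, h2, h3, h4⟩ := EF hC hS hκ hFF hf (D := {x | x i = a}) (fin hal) {i}
      (fun _ => a) (fun j hj => ⟨hconst, fun x hx => by rw [mem_singleton_iff.1 hj]; exact hx⟩)
      (fun j hj => by
        have : ({b | ∀ x ∈ {x : Fin (n+1) → X | x i = a}, x j ≠ b} : Set X) = ∅ := by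
          rw [eq_empty_iff_forall_notMem]
          intro b hb
          have hji : i ≠ j := fun h => hj (by simp [h])
          exact hb (Function.update (fun _ => a) j b) (by simp [Function.update_of_ne hji]) (by simp)
        rw [this, mk_eq_zero]
        exact aleph0_pos.trans_le hκ) haco
    exact ⟨W, k, h1, h2, h3, large_of_subset rfl h4 hal⟩
  have has : #(f '' {x | x i = a}) < #X := lt_of_le_of_ne (mk_set_le _) hal
  obtain ⟨b, hb⟩ := hfix i
  have hab : a ≠ b := by rintro rfl; exact hal hb
  obtain ⟨K, K', hKK, hKb, hK, hK'⟩ := split (S := f '' {x | x i = b}) (hb ▸ hκ)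
  rw [hb] at hK hK'
  let D : Set (Fin (n+1) → X) := {x | x i = b ∧ f x ∈ K} ∪ {x | x i = a}
  have hD : D.Nonempty := ⟨fun _ => a, Or.inr rfl⟩
  have hKsub : K ⊆ range (fun p : D × X => f p.1) := by
    intro y hy
    obtain ⟨x, hx, rfl⟩ : y ∈ f '' {x | x i = b} := hKb ▸ Or.inl hy
    exact ⟨(⟨x, Or.inl ⟨hx, hy⟩⟩, x0), rfl⟩
  have hKne : K.Nonempty := by
    rw [nonempty_iff_ne_empty]; rintro rfl
    rw [mk_eq_zero] at hK
    exact (aleph0_pos.trans_le hκ).ne hK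
  refine ⟨D × X, fun p => f p.1, ?_, ?_, fun w => fib_DX hκ hD f w.1, large_of_subset rfl hKsub hK⟩
  · refine U_comp hC hS hf (h := fun i (p : D × X) => p.1.1 i) (fun j => ?_)
    by_cases hj : j = i
    · subst hj
      have : Nonempty (D × X) := ⟨(⟨_, hD.some_mem⟩, x0)⟩
      refine gen_of hC hS hκ hFF hk5 hk5co hk5t (fun p => fib_DX hκ hD (fun x => x j) p.1) ?_
      have h1 : range (fun p : D × X => p.1.1 j) ⊆ {a, b} := by
        rintro _ ⟨⟨⟨x, (hx | hx)⟩, _⟩, rfl⟩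
        · right; exact hx.1
        · left; exact hx
      refine (mk_le_mk_of_subset h1).trans ?_
      have h2 : #({a, b} : Set X) = #({k5 w, k5 w'} : Set X) := by
        rw [mk_insert (by simpa using hab), mk_insert (by simpa using hww), mk_singleton, mk_singleton]
      rw [h2]
      exact mk_le_mk_of_subset (by rintro _ (rfl | rfl) <;> exact ⟨_, rfl⟩)
    · refine U_coord hκ hFF hD j (fun c => ⟨Function.update (fun _ => a) j c, Or.inr ?_, by simp⟩)
      simp [Function.update_of_ne (Ne.symm hj)]
  · refine large_of_subset rfl ?_ (large_diff hκ hK' has)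
    rintro y ⟨hy1, hy2⟩ ⟨⟨⟨x, (hx | hx)⟩, _⟩, rfl⟩
    · exact Set.disjoint_left.1 hKK hx.2 hy1
    · exact hy2 ⟨x, hx, rfl⟩

def Gen (C : Set (Ops X)) : Prop := ∀ (W : Type u) (h : W → X), Nonempty W → Thick h → U C W h

theorem step8 (hC : IsClone C) (hS : ∀ γ : Equiv.Perm X, unaryOp ⇑γ ∈ C) (hκ : ℵ₀ ≤ #X) (hFF : FF C)
    (h7 : ∃ (W : Type u) (k : W → X), U C W k ∧ #((range k)ᶜ : Set X) = #X ∧ Thick k ∧ #(range k) = #X) :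
    Gen C := by
  obtain ⟨W, k, h1, h2, h3, h4⟩ := h7
  intro W' h hne ht
  exact gen_of hC hS hκ hFF h1 h2 h3 ht (h4 ▸ mk_set_le _)

end Pk

namespace Pk
open Set
set_option linter.unusedVariables false

variable {X : Type u} {C : Set (Ops X)}

theorem shrink (hκ : ℵ₀ ≤ #X) {n : ℕ} (g : Fin n → X → X) (Z : Set X) (hZ : #Z = #X)
    (h : ∀ z ∈ Z, ∀ i, ∃ x, x ≠ z ∧ g i x = g i z) :
    ∃ Z' ⊆ Z, #Z' = #X ∧ ∀ z ∈ Z', ∀ i, ∃ x, x ∉ Z' ∧ g i x = g i z := by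
  induction n with
  | zero => exact ⟨Z, subset_rfl, hZ, fun z _ i => i.elim0⟩
  | succ n ih =>
    obtain ⟨Z1, h1, h2, h3⟩ := ih (fun i => g i.succ) (fun z hz i => h z hz i.succ)
    have : ∃ Z2 ⊆ Z1, #Z2 = #X ∧ ∀ z ∈ Z2, ∃ x, x ∉ Z2 ∧ g 0 x = g 0 z := by
      obtain ⟨T, hT, hTi, hTe⟩ := exists_section (g 0) Z1
      by_cases hc : #T < #X
      · refine ⟨Z1 \ T, sdiff_subset, large_diff hκ h2 hc, fun z hz => ?_⟩
        obtain ⟨x, hx, hxz⟩ : g 0 z ∈ g 0 '' T := hTe ▸ ⟨z, hz.1, rfl⟩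
        exact ⟨x, fun h => h.2 hx, hxz⟩
      · refine ⟨T, hT, le_antisymm (mk_set_le _) (not_lt.1 hc), fun z hz => ?_⟩
        obtain ⟨x, hx, hxz⟩ := h z (h1 (hT hz)) 0
        exact ⟨x, fun hxT => hx (hTi hxT hz hxz), hxz⟩
    obtain ⟨Z2, h4, h5, h6⟩ := this
    refine ⟨Z2, h4.trans h1, h5, fun z hz i => ?_⟩
    refine Fin.cases (h6 z hz) (fun i => ?_) i
    obtain ⟨x, hx, hxz⟩ := h3 z (h4 hz) i
    exact ⟨x, fun h => hx (h4 h), hxz⟩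

def Half (C : Set (Ops X)) : Prop := ∀ (A B : Type u), #A = #X → #B = #X → ∀ (w : A → X) (c : X),
  U C (A ⊕ B) (Sum.elim w (fun _ => c))

theorem step9 (hC : IsClone C) (hS : ∀ γ : Equiv.Perm X, unaryOp ⇑γ ∈ C) (hκ : ℵ₀ ≤ #X) (hFF : FF C)
    (hG : Gen C) (hN : ¬ C ⊆ Pol1 (SN X)) : Half C := by
  classical
  rw [not_subset] at hN
  obtain ⟨⟨n, f⟩, hf, hf2⟩ := hN
  simp only [Pol1, mem_ofPred_eq, not_forall] at hf2
  obtain ⟨g, hg, hn⟩ := hf2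
  simp only [SN, mem_ofPred_eq, not_lt] at hn
  have hZ0 := le_antisymm (mk_set_le _) hn
  set k : X → X := fun x => f (fun i => g i x) with hk
  have hrem : ∀ s : Finset (Fin (n+1)), ∃ Z ⊆ {x | ∀ x', k x' = k x → x' = x}, #Z = #X ∧
      ∀ z ∈ Z, ∀ i ∈ s, ∃ x, x ≠ z ∧ g i x = g i z := by
    intro s
    induction s using Finset.induction_on with
    | empty => exact ⟨_, subset_rfl, hZ0, by simp⟩
    | insert a s ha ih =>
      obtain ⟨Z, h1, h2, h3⟩ := ih
      refine ⟨Z \ _, sdiff_subset.trans h1, large_diff hκ h2 (hg a), fun z hz i hi => ?_⟩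
      rcases Finset.mem_insert.1 hi with rfl | hi
      · have := hz.2
        simp only [mem_ofPred_eq, not_forall] at this
        obtain ⟨x, hx, hxz⟩ := this
        exact ⟨x, hxz, hx⟩
      · exact h3 z hz.1 i hi
  obtain ⟨Z1, hZ1, hZ1c, hZ1i⟩ := hrem Finset.univ
  obtain ⟨Z, hZs, hZc, hZi⟩ := shrink hκ g Z1 hZ1c (fun z hz i => hZ1i z hz i (Finset.mem_univ _))
  obtain ⟨Za, Zb, hd, hu, hZa, hZb⟩ := split (S := Z) (hZc ▸ hκ)
  rw [hZc] at hZa hZb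
  have hsing : ∀ z ∈ Z, ∀ x, k x = k z → x = z := fun z hz x h => hZ1 (hZs hz) x h
  have haZ : Za ⊆ Z := hu ▸ subset_union_left
  have hbZ : Zb ⊆ Z := hu ▸ subset_union_right
  obtain ⟨⟨z0, hz0⟩⟩ : Nonempty Z := mk_ne_zero_iff.1 (by rw [hZc]; exact (aleph0_pos.trans_le hκ).ne')
  obtain ⟨x0, hx0, _⟩ := hZi z0 hz0 0
  have : Nonempty (Zᶜ : Set X) := ⟨⟨x0, hx0⟩⟩
  have hZX : #((Zᶜ : Set X) × X) = #X := by
    rw [mk_prod]; simp only [lift_id]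
    exact le_antisymm ((mul_le_mul' (mk_set_le _) le_rfl).trans (mul_eq_self hκ).le) (le_mul_left (by simp))
  let W := Za ⊕ ((Zᶜ : Set X) × X)
  have hW : #W = #X := by
    rw [mk_sum, hZX]; simp only [lift_id]; rw [hZa]; exact add_eq_self hκ
  let p : W → X := Sum.elim (fun z => z) (fun q => q.1)
  have hUk : U C W (fun w => k (p w)) := by
    refine U_comp hC hS hf (h := fun i w => g i (p w)) (fun i => hG _ _ ⟨Sum.inr (⟨x0, hx0⟩, x0)⟩ ?_)
    have key : ∀ x (hx : x ∉ Z), #X ≤ #((fun w => g i (p w)) ⁻¹' {g i x}) := by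
      intro x hx
      refine mk_le_of_injective (f := fun y : X => ⟨Sum.inr (⟨x, hx⟩, y), rfl⟩) ?_
      intro a b hab
      exact congrArg Prod.snd (Sum.inr.inj (congrArg Subtype.val hab))
    intro w
    refine le_antisymm ((mk_set_le _).trans hW.le) ?_
    rcases w with z | ⟨x, y⟩
    · obtain ⟨x, hx, hxz⟩ := hZi z (haZ z.2) i
      have := key x hx
      rw [hxz] at this
      exact this
    · exact key x x.2
  have hco : #((range fun w => k (p w))ᶜ : Set X) = #X := by
    refine range_compl_large _ (k '' Zb) ?_ ?_
    · rw [mk_image_eq_of_injOn, hZb]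
      intro a ha b hb hab
      exact hsing b (hbZ hb) a hab
    · rintro w ⟨z, hz, hzw⟩
      have := hsing z (hbZ hz) _ hzw.symm
      rcases w with z' | ⟨x, y⟩
      · exact Set.disjoint_left.1 hd z'.2 (by rw [show (z' : X) = z from this]; exact hz)
      · exact x.2 (by rw [show (x : X) = z from this]; exact hbZ hz)
  intro A B hA hB w c
  obtain ⟨eA⟩ := Cardinal.eq.1 (hA.trans hZa.symm)
  obtain ⟨eB⟩ := Cardinal.eq.1 (hB.trans hZX.symm)
  let v : X → X := fun x => if h : ∃ z : Za, k z = x then w (eA.symm h.choose) else c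
  have hv := S1 hC hS hκ hFF hUk hco v
  have := U_reparam hC hS hv (Equiv.sumCongr eA eB)
  convert this using 1
  funext t
  rcases t with a | b
  · have hex : ∃ z : Za, k z = k (eA a) := ⟨eA a, rfl⟩
    have h1 : hex.choose = eA a := Subtype.ext (hsing _ (haZ (eA a).2) _ hex.choose_spec)
    change w a = v (k (eA a))
    simp only [v]
    rw [dif_pos hex, h1, Equiv.symm_apply_apply]
  · change c = v (k (eB b).1)
    simp only [v]
    rw [dif_neg]
    rintro ⟨z, hz⟩
    have := hsing z (haZ z.2) _ hz.symm
    exact (eB b).1.2 (by rw [this]; exact haZ z.2)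

theorem step10 (hC : IsClone C) (hS : ∀ γ : Equiv.Perm X, unaryOp ⇑γ ∈ C) (hκ : ℵ₀ ≤ #X) (hFF : FF C)
    (hH : Half C) {n : ℕ} {f : (Fin (n+1) → X) → X} {D1 D2 : X → Fin (n+1) → X}
    (hf : (⟨n, f⟩ : Ops X) ∈ C)
    (h1 : Function.Injective (f ∘ D1)) (h2 : Function.Injective (f ∘ D2)) (h12 : ∀ x y, f (D1 x) ≠ f (D2 y))
    (hco : #((range (f ∘ D1) ∪ range (f ∘ D2))ᶜ : Set X) = #X)
    (hc : ∀ i, (∃ c, ∀ x, D1 x i = c) ∨ (∃ c, ∀ x, D2 x i = c)) (F : X → X) : unaryOp F ∈ C := by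
  classical
  have hL : ∀ i, U C (X ⊕ X) (fun t => Sum.elim D1 D2 t i) := by
    intro i
    rcases hc i with ⟨c, hc⟩ | ⟨c, hc⟩
    · have := U_reparam hC hS (hH X X rfl rfl (fun x => D2 x i) c) (Equiv.sumComm X X)
      convert this using 1
      funext t
      rcases t with a | b
      · simp [hc]
      · simp
    · have := hH X X rfl rfl (fun x => D1 x i) c
      convert this using 1
      funext t
      rcases t with a | b
      · simp
      · simp [hc]
  have hU := U_comp hC hS hf hL
  have hinj : Function.Injective (fun t => f (Sum.elim D1 D2 t)) := by
    rintro (a | a) (b | b) hab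
    · exact congrArg Sum.inl (h1 hab)
    · exact absurd hab (h12 a b)
    · exact absurd hab.symm (h12 b a)
    · exact congrArg Sum.inr (h2 hab)
  have hXne : Nonempty X := mk_ne_zero_iff.1 (aleph0_pos.trans_le hκ).ne'
  obtain ⟨e⟩ := Cardinal.eq.1 (show #X = #(X ⊕ X) by rw [mk_sum]; simp [add_eq_self hκ])
  have hco' : #((range fun t => f (Sum.elim D1 D2 t))ᶜ : Set X) = #X := by
    refine large_of_subset rfl ?_ hco
    rintro y hy ⟨(a | a), rfl⟩
    · exact hy (Or.inl ⟨a, rfl⟩)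
    · exact hy (Or.inr ⟨a, rfl⟩)
  have := U_all hC hS (S1 hC hS hκ hFF hU hco'
    (fun y => F (e.symm (Function.invFun (fun t => f (Sum.elim D1 D2 t)) y)))) e
  convert this using 2
  funext x
  have := Function.leftInverse_invFun hinj (e x)
  simp only [Function.comp]
  rw [this, Equiv.symm_apply_apply]

theorem core (hC : IsClone C) (hS : ∀ γ : Equiv.Perm X, unaryOp ⇑γ ∈ C) (hreg : (#X).IsRegular)
    (hA : ¬ C ⊆ Pol1 (SA X)) (hB : ¬ C ⊆ Pol1 (SB X)) (hE : ¬ C ⊆ Pol1 (SE X))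
    (hF : ¬ C ⊆ Pol1 (SF X)) (hPL : ∀ l : Cardinal.{u}, 1 ≤ l → l ≤ #X → ¬ C ⊆ PL X l)
    (hN : ¬ C ⊆ Pol1 (SN X)) (hT : ¬ C ⊆ Pol2 (ST X)) (F : X → X) : unaryOp F ∈ C := by
  have hκ := hreg.aleph0_le
  obtain ⟨n1, f1, D, hf1, hD, hfD⟩ := step1 hC hS hκ hPL
  obtain ⟨u, hu, hV⟩ := stepA hC hS hreg hA (stepB hC hS hreg hB)
  have hFF : FF C := stepFF hC hS hκ hf1 hD hfD hu hV
  have h5 := step5 hC hS hκ hFF hE hF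
  obtain ⟨n, f, D1, D2, hf, h1, h2, h12, hco, hc⟩ := step6 hreg hT
  have hG : Gen C := step8 hC hS hκ hFF (step7 hC hS hκ hFF h5 hf
    (large_of_subset rfl (range_comp_subset_range D1 f) (mk_range_eq _ h1)) (fun i => by
      rcases hc i with ⟨c, hc⟩ | ⟨c, hc⟩
      · refine ⟨c, large_of_subset rfl ?_ (mk_range_eq _ h1)⟩
        rintro _ ⟨x, rfl⟩; exact ⟨D1 x, hc x, rfl⟩
      · refine ⟨c, large_of_subset rfl ?_ (mk_range_eq _ h2)⟩
        rintro _ ⟨x, rfl⟩; exact ⟨D2 x, hc x, rfl⟩))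
  exact step10 hC hS hκ hFF (step9 hC hS hκ hFF hG hN) hf h1 h2 h12 hco hc F

end Pk

namespace Pk
open Set
set_option linter.unusedVariables false

variable {X : Type u} {C : Set (Ops X)}

theorem ne_x (hκ : ℵ₀ ≤ #X) (x : X) : ∃ y, y ≠ x := by
  have : Infinite X := infinite_iff.2 hκ
  exact exists_ne x

theorem kill (hκ : ℵ₀ ≤ #X) (e : X ≃ X × X) (y0 : X)
    (h : unaryOp (fun x => e.symm ((e x).1, y0)) ∈ C) :
    ¬ C ⊆ Pol1 (SA X) ∧ ¬ C ⊆ Pol1 (SB X) ∧ ¬ C ⊆ Pol1 (SE X) ∧ ¬ C ⊆ Pol1 (SF X) := by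
  have h0 : 0 < #X := aleph0_pos.trans_le hκ
  have hid : ∀ y : X, #(id ⁻¹' {y} : Set X) < #X := fun y => by
    rw [preimage_id, mk_singleton]; exact one_lt_aleph0.trans_le hκ
  have hfib : ∀ a, #((fun x => e.symm ((e x).1, y0)) ⁻¹' {e.symm (a, y0)}) = #X := by
    intro a
    refine le_antisymm (mk_set_le _) ?_
    refine mk_le_of_injective (f := fun y : X => ⟨e.symm (a, y), by simp⟩) ?_
    intro x y hxy
    simpa using hxy
  obtain ⟨y1, hy1⟩ := ne_x hκ y0
  have hco : #((range (fun x => e.symm ((e x).1, y0)))ᶜ : Set X) = #X := by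
    refine range_compl_large _ (range (fun a => e.symm (a, y1))) (mk_range_eq _ ?_) ?_
    · intro x y hxy; simpa using hxy
    · rintro w ⟨a, ha⟩
      have := congrArg Prod.snd (e.symm.injective ha)
      exact hy1 this
  refine ⟨fun hs => ?_, fun hs => ?_, fun hs => ?_, fun hs => ?_⟩
  · have := mem_Pol1_unary (M := SA X) (by
      have : ({y | #(id ⁻¹' {y} : Set X) = #X} : Set X) = ∅ := by
        rw [eq_empty_iff_forall_notMem]; intro y hy; exact (hid y).ne hy
      simp only [SA, mem_ofPred_eq, this, mk_eq_zero]; exact h0) (hs h)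
    refine absurd (small_of_subset (A := range (fun a => e.symm (a, y0))) ?_ this) ?_
    · rintro _ ⟨a, rfl⟩; exact hfib a
    · rw [mk_range_eq _ (by intro x y hxy; simpa using hxy)]; exact lt_irrefl _
  · have := mem_Pol1_unary (M := SB X) hid (hs h) (e.symm (y0, y0))
    rw [hfib] at this
    exact lt_irrefl _ this
  · have := mem_Pol1_unary (M := SE X) (by simp [SE, h0]) (hs h)
    simp only [SE, mem_ofPred_eq, hco] at this
    exact lt_irrefl _ this
  · have := mem_Pol1_unary (M := SF X) (by left; simp [h0]) (hs h)
    rcases this with h1 | h1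
    · rw [hco] at h1
      exact lt_irrefl _ h1
    · have := h1 (e.symm (y0, y0)) (e.symm (y1, y0))
      simp at this
      exact hy1 this.symm

theorem kill2 (hκ : ℵ₀ ≤ #X) (e : X ≃ X × X) (j : X → X) (hj : Function.Injective j)
    (h : (⟨1, fun x => j (e.symm (x 0, x 1))⟩ : Ops X) ∈ C) :
    ¬ C ⊆ Pol1 (SN X) ∧ ¬ C ⊆ Pol2 (ST X) := by
  have h0 : 0 < #X := aleph0_pos.trans_le hκ
  obtain ⟨x0⟩ : Nonempty X := mk_ne_zero_iff.1 h0.ne'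
  refine ⟨fun hs => ?_, fun hs => ?_⟩
  · have h1 : ∀ g : X → X, (∀ x, ∃ x', x' ≠ x ∧ g x' = g x) → g ∈ SN X := by
      intro g hg
      have : ({x | ∀ x', g x' = g x → x' = x} : Set X) = ∅ := by
        rw [eq_empty_iff_forall_notMem]; intro x hx
        obtain ⟨x', h1, h2⟩ := hg x
        exact h1 (hx x' h2)
      simp only [SN, mem_ofPred_eq, this, mk_eq_zero]; exact h0
    have := hs h ![fun x => (e x).1, fun x => (e x).2] (by
      intro i
      apply h1
      intro x
      refine Fin.cases ?_ (fun i => ?_) i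
      · obtain ⟨y, hy⟩ := ne_x hκ (e x).2
        refine ⟨e.symm ((e x).1, y), ?_, by simp⟩
        intro hh; have h3 := congrArg (fun t => (e t).2) hh; simp at h3; exact hy h3
      · obtain ⟨y, hy⟩ := ne_x hκ (e x).1
        have hi : i = 0 := Subsingleton.elim _ _
        subst hi
        refine ⟨e.symm (y, (e x).2), ?_, by simp⟩
        intro hh; have h3 := congrArg (fun t => (e t).1) hh; simp at h3; exact hy h3)
    have h2 : ({x | ∀ x', j x' = j x → x' = x} : Set X) = Set.univ := by
      ext x; simp only [mem_ofPred_eq, mem_univ, iff_true]; intro x' h; exact hj h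
    simp only [SN, mem_ofPred_eq] at this
    simp at this
    rw [h2, mk_univ] at this
    exact lt_irrefl _ this
  · have h1 : (1 : Cardinal.{u}) < #X := one_lt_aleph0.trans_le hκ
    have := hs h ![fun x y => x, fun x y => y] (by
      intro i
      refine Fin.cases ?_ (fun i => ?_) i
      · left; intro x
        refine lt_of_le_of_lt ?_ h1
        refine (mk_le_mk_of_subset (t := {x}) ?_).trans (mk_singleton x).le
        rintro _ ⟨y, rfl⟩; simp
      · right; intro y
        have hi : i = 0 := Subsingleton.elim _ _
        subst hi
        refine lt_of_le_of_lt ?_ h1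
        refine (mk_le_mk_of_subset (t := {y}) ?_).trans (mk_singleton y).le
        rintro _ ⟨y, rfl⟩; simp)
    rcases this with h2 | h2
    · have := h2 x0
      rw [mk_range_eq] at this
      · exact lt_irrefl _ this
      · intro a b hab
        simpa using hj hab
    · have := h2 x0
      rw [mk_range_eq] at this
      · exact lt_irrefl _ this
      · intro a b hab
        simpa using hj hab

theorem SN_unary (F : X → X) : unaryOp F ∈ Pol1 (SN X) := by
  intro g hg
  refine small_of_subset ?_ (hg 0)
  intro x hx x' h
  exact hx x' (congrArg F h)

theorem ST_unary (F : X → X) : unaryOp F ∈ Pol2 (ST X) := by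
  intro g hg
  rcases hg 0 with h | h
  · left; intro x
    have h1 : (range fun y => F (g 0 x y)) = F '' range (g 0 x) := by
      rw [← range_comp]; rfl
    exact (mk_le_mk_of_subset h1.subset).trans_lt (mk_image_le.trans_lt (h x))
  · right; intro y
    have h1 : (range fun x => F (g 0 x y)) = F '' range (fun x => g 0 x y) := by
      rw [← range_comp]; rfl
    exact (mk_le_mk_of_subset h1.subset).trans_lt (mk_image_le.trans_lt (h y))

theorem PL_of_co {l : Cardinal.{u}} (hl : l ≤ #X) {n : ℕ} {f : (Fin (n+1) → X) → X}
    (h : l ≤ #((range f)ᶜ : Set X)) : (⟨n, f⟩ : Ops X) ∈ PL X l := by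
  intro D hD
  refine h.trans (mk_le_mk_of_subset ?_)
  rw [compl_subset_compl]
  exact image_subset_range _ _

theorem image_unary (F : X → X) (D : Fin 1 → Set X) :
    (unaryOp F).2 '' {x : Fin 1 → X | ∀ i, x i ∈ D i} = F '' D 0 := by
  ext y; constructor
  · rintro ⟨x, hx, rfl⟩; exact ⟨x 0, hx 0, rfl⟩
  · rintro ⟨x, hx, rfl⟩
    exact ⟨fun _ => x, fun i => by rw [Subsingleton.elim i 0]; exact hx, rfl⟩

theorem PL_perm (l : Cardinal.{u}) (γ : Equiv.Perm X) : unaryOp ⇑γ ∈ PL X l := by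
  intro D hD
  have h1 : l ≤ #((⇑γ '' D (0 : Fin 1))ᶜ : Set X) := by
    rw [← image_compl_eq γ.bijective, mk_image_eq γ.injective]
    exact hD (0 : Fin 1)
  exact h1.trans (mk_le_mk_of_subset (compl_subset_compl.2 (image_unary γ D).subset))

theorem not_PL_fst (hκ : ℵ₀ ≤ #X) (e : X ≃ X × X) (q : X → X) {μ : Cardinal.{u}} (hμ : μ ≤ #X)
    (hq : #((range q)ᶜ : Set X) < μ) : unaryOp (fun x => q (e x).1) ∉ PL X μ := by
  intro h
  obtain ⟨x0⟩ : Nonempty X := mk_ne_zero_iff.1 (aleph0_pos.trans_le hκ).ne'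
  obtain ⟨y1, hy1⟩ := ne_x hκ x0
  have h1 := h (fun _ => {x | (e x).2 ≠ x0}) (fun _ => by
    refine hμ.trans ?_
    refine mk_le_of_injective (f := fun a : X => ⟨e.symm (a, x0), by simp⟩) ?_
    intro x y hxy
    simpa using hxy)
  have h1 : μ ≤ #(((unaryOp (fun x => q (e x).1)).2 '' {x : Fin 1 → X | ∀ i, x i ∈ (fun _ : Fin 1 => {x | (e x).2 ≠ x0}) i})ᶜ : Set X) := h1
  rw [image_unary (fun x => q (e x).1) (fun _ : Fin 1 => {x | (e x).2 ≠ x0})] at h1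
  have h2 : (fun x => q (e x).1) '' {x | (e x).2 ≠ x0} = range q := by
    ext y; constructor
    · rintro ⟨x, _, rfl⟩; exact ⟨_, rfl⟩
    · rintro ⟨x, rfl⟩; exact ⟨e.symm (x, y1), by simpa using hy1, by simp⟩
  rw [h2] at h1
  exact absurd hq (not_lt.2 h1)

theorem exists_inj (hκ : ℵ₀ ≤ #X) {l : Cardinal.{u}} (hl : l < #X) :
    ∃ q : X → X, Function.Injective q ∧ #((range q)ᶜ : Set X) = l := by
  obtain ⟨E, hE⟩ := le_mk_iff_exists_set.1 hl.le
  obtain ⟨b⟩ := Cardinal.eq.1 (large_compl_of_small hκ (hE ▸ hl)).symm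
  refine ⟨fun x => b x, Subtype.val_injective.comp b.injective, ?_⟩
  rw [← hE]
  congr! 2
  ext y; constructor
  · intro hy
    by_contra hn
    exact hy ⟨b.symm ⟨y, hn⟩, by simp⟩
  · rintro hy ⟨x, rfl⟩
    exact (b x).2 hy

theorem PL_sep (hκ : ℵ₀ ≤ #X) {l μ : Cardinal.{u}} (h1l : 1 ≤ l) (hlX : l ≤ #X) (h1μ : 1 ≤ μ)
    (hμX : μ ≤ #X) (hne : l ≠ μ) : ¬ PL X l ⊆ PL X μ := by
  classical
  obtain ⟨e⟩ := exists_pairing hκ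
  obtain ⟨x0⟩ : Nonempty X := mk_ne_zero_iff.1 (aleph0_pos.trans_le hκ).ne'
  intro hs
  rcases lt_or_gt_of_ne hne with hlt | hlt
  · obtain ⟨q, hq, hqc⟩ := exists_inj hκ (hlt.trans_le hμX)
    refine not_PL_fst hκ e q hμX (hqc ▸ hlt) (hs (PL_of_co hlX ?_))
    have : (range fun x : Fin 1 → X => q (e (x 0)).1) ⊆ range q := by
      rintro _ ⟨x, rfl⟩; exact ⟨_, rfl⟩
    rw [← hqc]
    exact mk_le_mk_of_subset (compl_subset_compl.2 this)
  · obtain ⟨j, hj, hjc⟩ := exists_inj hκ (hlt.trans_le hlX)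
    let r : X → X := fun x => if h : ∃ a, j a = x then h.choose else x0
    have hr1 : ∀ a, r (j a) = a := fun a => by
      have h : ∃ b, j b = j a := ⟨a, rfl⟩
      simp only [r]
      rw [dif_pos h]; exact hj h.choose_spec
    have hr2 : ∀ x, x ∉ range j → r x = x0 := fun x hx => by
      simp only [r]; rw [dif_neg]; exact hx
    have hr3 : ∀ D : Set X, r '' D = Set.univ → #(Dᶜ : Set X) ≤ μ := by
      intro D hD
      obtain ⟨d, hd, hdx⟩ : x0 ∈ r '' D := hD ▸ mem_univ _
      have hdT : d ∈ insert (j x0) (range j)ᶜ := by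
        by_cases h : d ∈ range j
        · obtain ⟨a, rfl⟩ := h
          rw [hr1] at hdx; left; rw [hdx]
        · right; exact h
      have hT : #(insert (j x0) (range j)ᶜ : Set X) = μ + 1 := by
        rw [mk_insert (by simp), hjc]
      have hT2 : #((insert (j x0) (range j)ᶜ : Set X) \ {d} : Set X) + 1 = μ + 1 := by
        have h3 := mk_insert (s := insert (j x0) (range j)ᶜ \ {d}) (a := d) (by simp)
        rw [insert_sdiff_singleton, insert_eq_of_mem hdT, hT] at h3
        exact h3.symm
      have hT3 : #((insert (j x0) (range j)ᶜ : Set X) \ {d} : Set X) = μ := Cardinal.add_one_inj.1 hT2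
      rw [← hT3]
      refine mk_le_mk_of_subset ?_
      intro x hx
      refine ⟨?_, by rintro rfl; exact hx hd⟩
      by_cases h : x ∈ range j
      · obtain ⟨a, rfl⟩ := h
        left
        by_contra hax
        obtain ⟨d', hd', hd'a⟩ : a ∈ r '' D := hD ▸ mem_univ _
        by_cases h' : d' ∈ range j
        · obtain ⟨b, rfl⟩ := h'
          rw [hr1] at hd'a; subst hd'a; exact hx hd'
        · rw [hr2 _ h'] at hd'a; exact hax (by rw [hd'a])
      · right; exact h
    have hin : (⟨1, fun x => e.symm (r (x 0), r (x 1))⟩ : Ops X) ∈ PL X l := by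
      intro D hD
      have : ∃ a, a ∉ r '' D 0 := by
        by_contra! hn
        exact absurd ((hD 0).trans (hr3 _ (eq_univ_of_forall hn))) (not_le.2 hlt)
      obtain ⟨a, ha⟩ := this
      refine hlX.trans ?_
      refine mk_le_of_injective (f := fun y : X => ⟨e.symm (a, y), ?_⟩) ?_
      · rintro ⟨x, hx, hxa⟩
        have := congrArg Prod.fst (e.symm.injective hxa)
        exact ha ⟨x 0, hx 0, this⟩
      · intro x y hxy
        simpa using hxy
    have := hs hin (fun _ => range j) (fun _ => hjc.ge)
    have h0 : ((fun x : Fin 2 → X => e.symm (r (x 0), r (x 1))) '' {x | ∀ i, x i ∈ range j})ᶜ = ∅ := by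
      rw [compl_empty_iff]
      refine eq_univ_of_forall (fun y => ⟨![j (e y).1, j (e y).2], ?_, ?_⟩)
      · intro i; refine Fin.cases ?_ (fun i => ?_) i <;> simp
      · simp [hr1]
    have h1 : μ ≤ #(∅ : Set X) := by
      rw [← h0]; exact this
    rw [mk_eq_zero] at h1
    exact absurd (h1μ.trans h1) (by simp)

theorem univ_of (hC : IsClone C) (hu : ∀ F : X → X, unaryOp F ∈ C) {p : (Fin 2 → X) → X}
    (hp : (⟨1, p⟩ : Ops X) ∈ C) (hpi : ∀ a b a' b', p ![a, b] = p ![a', b'] → a = a' ∧ b = b') : C = Set.univ := by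
  have hinj : ∀ n : ℕ, ∃ g : (Fin (n+1) → X) → X, (⟨n, g⟩ : Ops X) ∈ C ∧ Function.Injective g := by
    intro n
    induction n with
    | zero =>
      refine ⟨fun x => x 0, hC.1 0 0, fun x y h => ?_⟩
      funext i; rw [show i = 0 from Subsingleton.elim (α := Fin 1) i 0]; exact h
    | succ n ih =>
      obtain ⟨g, hg, hgi⟩ := ih
      refine ⟨fun x => p (fun i => (![fun x => x 0, fun x => g (fun i => x i.succ)] : Fin 2 → (Fin (n+2) → X) → X) i x), ?_, ?_⟩
      · refine hC.2 1 (n+1) p hp _ (fun i => ?_)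
        refine Fin.cases ?_ (fun i => ?_) i
        · exact hC.1 (n+1) 0
        · rw [Subsingleton.elim i 0]
          exact hC.2 n (n+1) g hg (fun i x => x i.succ) (fun i => hC.1 _ _)
      · intro x y h
        have h2 : ∀ x : Fin (n+2) → X, (fun i => (![fun x => x 0, fun x => g (fun i => x i.succ)] : Fin 2 → (Fin (n+2) → X) → X) i x)
            = ![x 0, g (fun i => x i.succ)] := by
          intro x; funext i
          refine Fin.cases ?_ (fun i => ?_) i
          · rfl
          · rw [Subsingleton.elim i 0]; rfl
        simp only [h2] at h
        obtain ⟨h3, h4⟩ := hpi _ _ _ _ h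
        have h5 := hgi h4
        funext i
        refine Fin.cases h3 (fun i => ?_) i
        exact congrFun h5 i
  refine eq_univ_of_forall ?_
  rintro ⟨n, F⟩
  obtain ⟨g, hg, hgi⟩ := hinj n
  by_cases hX : Nonempty X
  · have := hC.2 0 n _ (hu (fun y => F (Function.invFun g y))) (fun _ => g) (fun _ => hg)
    convert this using 2
    funext x
    change F x = F (Function.invFun g (g x))
    rw [Function.leftInverse_invFun hgi x]
  · have : F = fun x => x 0 := by
      funext x; exact absurd ⟨x 0⟩ hX
    rw [this]; exact hC.1 n 0

theorem PL_not_unary (hκ : ℵ₀ ≤ #X) {l : Cardinal.{u}} (h1l : 1 ≤ l) (hlX : l ≤ #X) :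
    ¬ ∀ F : X → X, unaryOp F ∈ PL X l := by
  obtain ⟨e⟩ := exists_pairing hκ
  intro h
  refine not_PL_fst hκ e id hlX ?_ (h _)
  simp only [range_id, compl_univ, mk_eq_zero]
  exact lt_of_lt_of_le zero_lt_one h1l

theorem PL_precomplete (hreg : (#X).IsRegular) {l : Cardinal.{u}} (h1l : 1 ≤ l) (hlX : l ≤ #X) :
    IsPrecompleteClone (PL X l) := by
  have hκ := hreg.aleph0_le
  obtain ⟨e⟩ := exists_pairing hκ
  obtain ⟨y0⟩ : Nonempty X := mk_ne_zero_iff.1 (aleph0_pos.trans_le hκ).ne'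
  obtain ⟨y1, hy1⟩ := ne_x hκ y0
  refine ⟨PL_clone l, fun h => PL_not_unary hκ h1l hlX (fun F => h ▸ mem_univ _), fun f hf => ?_⟩
  have hcl := cloneGen_clone (insert f (PL X l))
  have hsub : PL X l ⊆ cloneGen (insert f (PL X l)) := (subset_insert _ _).trans (subset_cloneGen _)
  have hfin : f ∈ cloneGen (insert f (PL X l)) := subset_cloneGen _ (mem_insert _ _)
  have hcolarge : ∀ {n : ℕ} (q : (Fin (n+1) → X) → X), (∀ x, (e (q x)).2 = y0) → (⟨n, q⟩ : Ops X) ∈ PL X l := by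
    intro n q hq
    refine PL_of_co hlX (hlX.trans ?_)
    refine mk_le_of_injective (f := fun y : X => ⟨e.symm (y, y1), ?_⟩) ?_
    · rintro ⟨x, hx⟩
      have := hq x
      rw [hx] at this
      simp at this
      exact hy1 this
    · intro x y hxy
      simpa using hxy
  have hh : unaryOp (fun x => e.symm ((e x).1, y0)) ∈ PL X l := hcolarge _ (by simp)
  have hp : (⟨1, fun x => e.symm (e.symm (x 0, x 1), y0)⟩ : Ops X) ∈ PL X l := hcolarge _ (by simp)
  obtain ⟨kA, kB, kE, kF⟩ := kill hκ e y0 (hsub hh)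
  obtain ⟨kN, kT⟩ := kill2 hκ e (fun z => e.symm (z, y0)) (by intro x y hxy; simpa using hxy) (hsub hp)
  have hu := core hcl (fun γ => hsub (PL_perm l γ)) hreg kA kB kE kF (fun μ h1 h2 hs => by
    by_cases hμ : l = μ
    · subst hμ; exact hf (hs hfin)
    · exact PL_sep hκ h1l hlX h1 h2 hμ (hsub.trans hs)) kN kT
  refine univ_of hcl hu (hsub hp) ?_
  intro a b a' b' h
  simpa using h

theorem upper (hreg : (#X).IsRegular) (hC : IsPrecompleteClone C) (hS : ∀ γ : Equiv.Perm X, unaryOp ⇑γ ∈ C)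
    (hn : ¬ ∀ F : X → X, unaryOp F ∈ C) : (C = Pol1 (SA X) ∨ C = Pol1 (SB X) ∨ C = Pol1 (SE X) ∨
      C = Pol1 (SF X)) ∨ ∃ l : Cardinal.{u}, 1 ≤ l ∧ l ≤ #X ∧ C = PL X l := by
  have hκ := hreg.aleph0_le
  obtain ⟨e⟩ := exists_pairing hκ
  obtain ⟨y0⟩ : Nonempty X := mk_ne_zero_iff.1 (aleph0_pos.trans_le hκ).ne'
  obtain ⟨kA, kB, kE, kF⟩ := kill (C := Set.univ) hκ e y0 (mem_univ _)
  obtain ⟨kN, kT⟩ := kill2 (C := Set.univ) hκ e id Function.injective_id (mem_univ _)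
  have eq1 : ∀ P : Set (Ops X), IsClone P → ¬ Set.univ ⊆ P → C ⊆ P → C = P := fun P h1 h2 h3 =>
    eq_of_precomplete hC h1 (fun h => h2 h.ge) h3
  by_contra hcon
  push Not at hcon
  obtain ⟨⟨nA, nB, nE, nF⟩, nL⟩ := hcon
  refine hn (core hC.1 hS hreg (fun h => nA (eq1 _ (Pol1_clone _) kA h))
    (fun h => nB (eq1 _ (Pol1_clone _) kB h)) (fun h => nE (eq1 _ (Pol1_clone _) kE h))
    (fun h => nF (eq1 _ (Pol1_clone _) kF h)) (fun l h1 h2 h => nL l h1 h2 (eq1 _ (PL_clone _) (fun hu => PL_not_unary hκ h1 h2 (fun F => hu (mem_univ _))) h)) ?_ ?_)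
  · intro h
    apply hn
    rw [eq1 _ (Pol1_clone _) kN h]
    exact SN_unary
  · intro h
    apply hn
    rw [eq1 _ (Pol2_clone _) kT h]
    exact ST_unary

noncomputable def cidx (α : Ordinal.{u}) : ℕ ⊕ (α + 1).ToType → Cardinal.{u} :=
  Sum.elim (fun n => (n : Cardinal.{u}) + 1) (fun b => Cardinal.aleph ((Ordinal.ToType.mk.symm b : Set.Iio (α + 1)) : Ordinal.{u}))

theorem cidx_one_le (α : Ordinal.{u}) (i) : 1 ≤ cidx α i := by
  rcases i with n | b
  · simp [cidx]
  · exact one_le_aleph0.trans (aleph0_le_aleph _)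

theorem cidx_le (α : Ordinal.{u}) (i) : cidx α i ≤ Cardinal.aleph α := by
  rcases i with n | b
  · refine le_trans ?_ (aleph0_le_aleph α)
    have : cidx α (Sum.inl n) = ((n + 1 : ℕ) : Cardinal.{u}) := by simp [cidx]
    rw [this]; exact natCast_le_aleph0
  · apply aleph_le_aleph.2
    exact Order.lt_add_one_iff.1 (Ordinal.ToType.mk.symm b).2

theorem cidx_inj (α : Ordinal.{u}) : Function.Injective (cidx α) := by
  have key : ∀ (n : ℕ) b, cidx α (Sum.inl n) ≠ cidx α (Sum.inr b) := by
    intro n b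
    have h1 : cidx α (Sum.inl n) = ((n + 1 : ℕ) : Cardinal.{u}) := by simp [cidx]
    rw [h1]
    exact (natCast_lt_aleph0.trans_le (aleph0_le_aleph _)).ne
  rintro (n | b) (m | c) h
  · have : ((n + 1 : ℕ) : Cardinal.{u}) = ((m + 1 : ℕ) : Cardinal.{u}) := by simpa [cidx] using h
    have := Nat.cast_injective this
    congr 1; omega
  · exact absurd h (key _ _)
  · exact absurd h.symm (key _ _)
  · have := Cardinal.aleph.injective h
    rw [Ordinal.ToType.mk.symm.injective (Subtype.ext this)]

theorem cidx_surj (α : Ordinal.{u}) {l : Cardinal.{u}} (h1 : 1 ≤ l) (h2 : l ≤ Cardinal.aleph α) :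
    ∃ i, cidx α i = l := by
  by_cases h : l < ℵ₀
  · obtain ⟨n, rfl⟩ := lt_aleph0.1 h
    have : 1 ≤ n := by exact_mod_cast h1
    refine ⟨Sum.inl (n - 1), ?_⟩
    obtain ⟨m, rfl⟩ : ∃ m, n = m + 1 := ⟨n - 1, by omega⟩
    simp [cidx]
  · push Not at h
    obtain ⟨b, rfl⟩ : l ∈ range Cardinal.aleph := by rw [range_aleph]; exact h
    have hb := aleph_le_aleph.1 h2
    exact ⟨Sum.inr (Ordinal.ToType.mk ⟨b, Order.lt_add_one_iff.2 hb⟩), by simp [cidx]⟩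

theorem main (α : Ordinal.{u}) (hcard : #X = Cardinal.aleph α)
    (hreg : (#X).IsRegular) :
    #{C : Set (Ops X) // IsPrecompleteClone C ∧ (∀ γ : Equiv.Perm X, unaryOp ⇑γ ∈ C) ∧
        ¬ (∀ F : X → X, unaryOp F ∈ C)} = max α.card ℵ₀ := by
  have hκ := hreg.aleph0_le
  have hι : #(ℕ ⊕ (α + 1).ToType) = max α.card ℵ₀ := by
    rw [mk_sum]
    simp only [mk_toType, Ordinal.card_add, Ordinal.card_one, lift_id, mk_nat, lift_aleph0, lift_uzero]
    rw [add_comm, add_assoc, show (1 : Cardinal.{u}) + ℵ₀ = ℵ₀ from Cardinal.add_eq_right le_rfl one_le_aleph0, Cardinal.add_eq_max' le_rfl]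
  refine le_antisymm ?_ ?_
  · let φ : (ℕ ⊕ (α + 1).ToType) ⊕ Fin 4 → Set (Ops X) :=
      Sum.elim (fun i => PL X (cidx α i)) ![Pol1 (SA X), Pol1 (SB X), Pol1 (SE X), Pol1 (SF X)]
    have h1 : {C : Set (Ops X) | IsPrecompleteClone C ∧ (∀ γ : Equiv.Perm X, unaryOp ⇑γ ∈ C) ∧
        ¬ (∀ F : X → X, unaryOp F ∈ C)} ⊆ range φ := by
      rintro C ⟨h1, h2, h3⟩
      rcases upper hreg h1 h2 h3 with (h | h | h | h) | ⟨l, hl1, hl2, h⟩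
      · exact ⟨Sum.inr 0, h.symm⟩
      · exact ⟨Sum.inr 1, h.symm⟩
      · exact ⟨Sum.inr 2, h.symm⟩
      · exact ⟨Sum.inr 3, h.symm⟩
      · obtain ⟨i, rfl⟩ := cidx_surj α hl1 (hcard ▸ hl2)
        exact ⟨Sum.inl i, h.symm⟩
    refine (mk_le_mk_of_subset h1).trans (mk_range_le.trans ?_)
    rw [mk_sum, hι]
    simp only [lift_uzero]
    refine (add_eq_left (le_max_right _ _) ?_).le
    exact (lift_lt_aleph0.2 (lt_aleph0_of_finite (Fin 4))).le.trans (le_max_right _ _)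
  · rw [← hι]
    have hle : ∀ i, cidx α i ≤ #X := fun i => hcard ▸ cidx_le α i
    refine mk_le_of_injective (f := fun i => ⟨PL X (cidx α i), PL_precomplete hreg (cidx_one_le α i) (hle i),
      PL_perm _, PL_not_unary hκ (cidx_one_le α i) (hle i)⟩) ?_
    intro i i' h
    by_contra hne
    exact PL_sep hκ (cidx_one_le α i) (hle i) (cidx_one_le α i') (hle i') (fun h => hne (cidx_inj α h))
      (congrArg Subtype.val h).le

end Pk

/-- **Pinsker**: on a set of regular cardinality `ℵ_α`, the number of precomplete clones
containing all permutations but not all unary operations is `max(|α|, ℵ₀)`. -/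
theorem stmt11 {X : Type u} (α : Ordinal.{u}) (hcard : #X = Cardinal.aleph α)
    (hreg : (#X).IsRegular) :
    #{C : Set (Ops X) // IsPrecompleteClone C ∧ (∀ γ : Equiv.Perm X, unaryOp ⇑γ ∈ C) ∧
        ¬ (∀ F : X → X, unaryOp F ∈ C)} = max α.card ℵ₀ := by
  exact Pk.main α hcard hreg
end
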